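/- arXiv:2404.00258 — 5 statements merged into one kernel-verified Lean document; each statement's English description precedes it below -/
import Mathlib

section
/- Assume f satisfies (f1) and (f2) with constant B ∈ [1,∞), and let ψ, φ, ε₁, ε₂ be the Emden–Fowler model data. Define I(ρ) := f(φ(ρ))·F(φ(ρ)) · ( ψ'(ρ)² / ( g(ψ(ρ))²·G(ψ(ρ))² ) ) · ( f'(φ(ρ))·F(φ(ρ)) − g'(ψ(ρ))·G(ψ(ρ)) ). Then there exist C > 0 and ρ₀ > 1 such that for all ρ ≥ ρ₀: | √B · ∫_ρ^∞ (ρτ)^{1/4} · sin( (2/√B)·(ρ^{1/2} − τ^{1/2}) ) · I(τ) dτ | ≤ C · f(φ(ρ))·F(φ(ρ)) · sup_{τ ≥ ρ} ( ε₁(τ) + ε₂(τ) ). -/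
open MeasureTheory Filter

/-- `Fint f s = ∫_s^∞ dτ / f(τ)`. -/
noncomputable def Fint (f : ℝ → ℝ) (s : ℝ) : ℝ := ∫ τ in Set.Ioi s, 1 / f τ

/-- `1/B₁[f](s) = (−log F(s))·(1 − f'(s)·F(s))`, with `G` playing the role of `F`. -/
noncomputable def invB1 (f G : ℝ → ℝ) (s : ℝ) : ℝ :=
  (-Real.log (G s)) * (1 - deriv f s * G s)

/-- `1/B₂[f](s) = f'(s)·F(s)·(log F(s))²·(f(s)·f''(s)·F(s)/f'(s) − 1)`,
with `G` playing the role of `F`. -/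
noncomputable def invB2 (f G : ℝ → ℝ) (s : ℝ) : ℝ :=
  deriv f s * G s * (Real.log (G s)) ^ 2 *
    (f s * deriv (deriv f) s * G s / deriv f s - 1)

/-- The model singular solution `v`. -/
noncomputable def modelv (B t : ℝ) : ℝ :=
  if B = 1 then Real.log (-2 * Real.log t) else (-2 * Real.log t) ^ ((B - 1) / B)

/-- The model nonlinearity `g`. -/
noncomputable def modelg (B s : ℝ) : ℝ :=
  if B = 1 then 4 * Real.exp (Real.exp s - 2 * s)
  else (4 / (B * (B / (B - 1)))) * s ^ (1 - 2 * (B / (B - 1))) * Real.exp (s ^ (B / (B - 1)))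

/-- The model function `G(s) = ∫_s^∞ dτ/g(τ)` in closed form. -/
noncomputable def modelG (B s : ℝ) : ℝ :=
  if B = 1 then (1 / 4) * (Real.exp s + 1) * Real.exp (-Real.exp s)
  else (B / 4) * (s ^ (B / (B - 1)) + 1) * Real.exp (-(s ^ (B / (B - 1))))

/-- The Emden–Fowler model profile `ψ`. -/
noncomputable def modelpsi (B ρ : ℝ) : ℝ :=
  if B = 1 then Real.log (ρ - 1) else (ρ - 1) ^ ((B - 1) / B)

/-- `ε₁(ρ) = |1/B₁[f](φ(ρ)) − 1/B₁[g](ψ(ρ))|`. -/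
noncomputable def eps1 (f φ : ℝ → ℝ) (B ρ : ℝ) : ℝ :=
  |invB1 f (Fint f) (φ ρ) - invB1 (modelg B) (modelG B) (modelpsi B ρ)|

/-- `ε₂(ρ) = |1/B₂[f](φ(ρ)) − 1/B₂[g](ψ(ρ))|`. -/
noncomputable def eps2 (f φ : ℝ → ℝ) (B ρ : ℝ) : ℝ :=
  |invB2 f (Fint f) (φ ρ) - invB2 (modelg B) (modelG B) (modelpsi B ρ)|

/-- The inhomogeneous term
`I(ρ) = f(φ)F(φ) · ψ'² / (g(ψ)²G(ψ)²) · (f'(φ)F(φ) − g'(ψ)G(ψ))`. -/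
noncomputable def Ifun (f φ : ℝ → ℝ) (B ρ : ℝ) : ℝ :=
  f (φ ρ) * Fint f (φ ρ) *
    ((deriv (modelpsi B) ρ) ^ 2 / ((modelg B (modelpsi B ρ)) ^ 2 * (modelG B (modelpsi B ρ)) ^ 2)) *
    (deriv f (φ ρ) * Fint f (φ ρ) - deriv (modelg B) (modelpsi B ρ) * modelG B (modelpsi B ρ))

lemma qderiv (f F φ : ℝ → ℝ) (ρ l : ℝ) (hF : HasDerivAt F (-1 / f (φ ρ)) (φ ρ))
    (hf1 : DifferentiableAt ℝ f (φ ρ))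
    (hf2 : DifferentiableAt ℝ (deriv f) (φ ρ)) (hpos : 0 < f (φ ρ)) (hne : deriv f (φ ρ) ≠ 0)
    (hlog : Real.log (F (φ ρ)) ≠ 0)
    (hφ : HasDerivAt φ (f (φ ρ) * F (φ ρ) * l) ρ) :
    HasDerivAt (fun r => deriv f (φ r) * F (φ r))
      (invB2 f F (φ ρ) * l / (Real.log (F (φ ρ))) ^ 2) ρ := by
  have h1 := (hf2.hasDerivAt.comp ρ hφ).mul (hF.comp ρ hφ)
  refine h1.congr_deriv ?_
  simp only [invB2, Function.comp]
  have := hpos.ne'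
  field_simp
  ring

lemma Ederiv (f F φ : ℝ → ℝ) (ρ l : ℝ) (hF : HasDerivAt F (-1 / f (φ ρ)) (φ ρ))
    (hf1 : DifferentiableAt ℝ f (φ ρ)) (hpos : 0 < f (φ ρ))
    (hφ : HasDerivAt φ (f (φ ρ) * F (φ ρ) * l) ρ) :
    HasDerivAt (fun r => f (φ r) * F (φ r))
      (f (φ ρ) * F (φ ρ) * l * (deriv f (φ ρ) * F (φ ρ) - 1)) ρ := by
  have h1 := (hf1.hasDerivAt.comp ρ hφ).mul (hF.comp ρ hφ)
  refine h1.congr_deriv ?_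
  simp only [Function.comp]
  have := hpos.ne'
  field_simp
  ring

lemma Fint_hasDerivAt (f : ℝ → ℝ) (s₀ : ℝ) (hf : ContinuousOn f (Set.Ioi s₀))
    (hfpos : ∀ s, s₀ < s → 0 < f s)
    (hfint : ∀ s, s₀ < s → IntegrableOn (fun τ => 1 / f τ) (Set.Ioi s)) (s : ℝ) (hs : s₀ < s) :
    HasDerivAt (Fint f) (-1 / f s) s := by
  obtain ⟨a, ha, has⟩ := exists_between hs
  have hc : ContinuousOn (fun τ => 1 / f τ) (Set.Ioi s₀) :=
    continuousOn_const.div hf (fun x hx => (hfpos x hx).ne')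
  have hd : HasDerivAt (fun x => ∫ τ in a..x, 1 / f τ) (1 / f s) s := by
    apply intervalIntegral.integral_hasDerivAt_right
    · apply ContinuousOn.intervalIntegrable
      apply hc.mono
      rw [Set.uIcc_of_le has.le]
      intro x hx
      exact lt_of_lt_of_le ha hx.1
    · exact hc.stronglyMeasurableAtFilter isOpen_Ioi s hs
    · exact hc.continuousAt (Ioi_mem_nhds hs)
  have h2 : HasDerivAt (fun x => Fint f a - ∫ τ in a..x, 1 / f τ) (-1 / f s) s := by
    refine (hd.const_sub (Fint f a)).congr_deriv ?_
    ring
  refine h2.congr_of_eventuallyEq ?_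
  filter_upwards [Ioi_mem_nhds has] with x hx
  have hx : a < x := hx
  have := intervalIntegral.integral_Ioi_sub_Ioi (hfint a ha) hx.le
  simp only [Fint]
  linarith

lemma Fint_pos (f : ℝ → ℝ) (s₀ : ℝ) 
    (hfpos : ∀ s, s₀ < s → 0 < f s)
    (hfint : ∀ s, s₀ < s → IntegrableOn (fun τ => 1 / f τ) (Set.Ioi s)) (s : ℝ) (hs : s₀ < s) :
    0 < Fint f s := by
  unfold Fint
  rw [setIntegral_pos_iff_support_of_nonneg_ae]
  · have : Function.support (fun τ => 1 / f τ) ∩ Set.Ioi s = Set.Ioi s := by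
      apply Set.inter_eq_right.2
      intro x hx
      have := hfpos x (hs.trans hx)
      simp [Function.mem_support, this.ne']
    rw [this]; simp
  · rw [EventuallyLE, ae_restrict_iff' measurableSet_Ioi]
    refine Eventually.of_forall fun x hx => ?_
    exact (one_div_pos.2 (hfpos x (hs.trans hx))).le
  · exact hfint s hs

lemma Fint_anti (f : ℝ → ℝ) (s₀ : ℝ) (hf : ContinuousOn f (Set.Ioi s₀))
    (hfpos : ∀ s, s₀ < s → 0 < f s)
    (hfint : ∀ s, s₀ < s → IntegrableOn (fun τ => 1 / f τ) (Set.Ioi s)) :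
    StrictAntiOn (Fint f) (Set.Ioi s₀) := by
  apply strictAntiOn_of_deriv_neg (convex_Ioi s₀)
  · intro x hx
    exact (Fint_hasDerivAt f s₀ hf hfpos hfint x hx).continuousAt.continuousWithinAt
  · intro x hx
    rw [interior_Ioi] at hx
    rw [(Fint_hasDerivAt f s₀ hf hfpos hfint x hx).deriv]
    have := hfpos x hx
    apply div_neg_of_neg_of_pos _ this
    norm_num

lemma h_hasDerivAt (B ρ : ℝ) (hρ : 1 < ρ) :
    HasDerivAt (fun ρ => (B / 4) * ρ * Real.exp (-ρ + 1))
      (-((B / 4) * ρ * Real.exp (-ρ + 1) * (1 - 1 / ρ))) ρ := by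
  have h1 := (((hasDerivAt_id ρ).const_mul (B/4))).mul (((hasDerivAt_id ρ).neg.add_const 1).exp)
  refine h1.congr_deriv ?_
  simp only [id, Pi.neg_apply]
  have : ρ ≠ 0 := by positivity
  field_simp
  ring

lemma phi_hasDerivAt (f φ : ℝ → ℝ) (s₀ B : ℝ) (hf : ContinuousOn f (Set.Ioi s₀))
    (hfpos : ∀ s, s₀ < s → 0 < f s)
    (hfint : ∀ s, s₀ < s → IntegrableOn (fun τ => 1 / f τ) (Set.Ioi s)) 
    (hφ : ∀ ρ > (1 : ℝ), s₀ < φ ρ ∧ Fint f (φ ρ) = (B / 4) * ρ * Real.exp (-ρ + 1))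
    (ρ : ℝ) (hρ : 1 < ρ) :
    HasDerivAt φ (f (φ ρ) * Fint f (φ ρ) * (1 - 1 / ρ)) ρ := by
  obtain ⟨h1, h2⟩ := hφ ρ hρ
  have hfp := hfpos _ h1
  have hs : HasStrictDerivAt (Fint f) (-1 / f (φ ρ)) (φ ρ) := by
    apply hasStrictDerivAt_of_hasDerivAt_of_continuousAt (f' := fun x => -1 / f x)
    · filter_upwards [Ioi_mem_nhds h1] with x hx
      exact Fint_hasDerivAt f s₀ hf hfpos hfint x hx
    · exact continuousAt_const.div (hf.continuousAt (Ioi_mem_nhds h1)) hfp.ne'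
  have hne : -1 / f (φ ρ) ≠ 0 := by
    apply div_ne_zero _ hfp.ne'
    norm_num
  have hr := (hs.to_localInverse hne).hasDerivAt
  have hhd := h_hasDerivAt B ρ hρ
  have e := h2
  have hr' := hr
  rw [h2] at hr'
  have hcomp := HasDerivAt.comp ρ (h₂ := hs.localInverse _ _ _ hne) hr' hhd
  have hcomp2 : HasDerivAt (hs.localInverse _ _ _ hne ∘ fun ρ => (B / 4) * ρ * Real.exp (-ρ + 1)) (f (φ ρ) * Fint f (φ ρ) * (1 - 1 / ρ)) ρ := by
    refine hcomp.congr_deriv ?_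
    rw [h2]
    field_simp
  refine hcomp2.congr_of_eventuallyEq ?_
  have hcont := hcomp2.continuousAt
  have ht : Tendsto (fun ρ => (B / 4) * ρ * Real.exp (-ρ + 1)) (nhds ρ) (nhds (Fint f (φ ρ))) := by
    rw [h2]; exact hhd.continuousAt
  have hval : hs.localInverse _ _ _ hne ((B / 4) * ρ * Real.exp (-ρ + 1)) = φ ρ := by
    rw [← h2]
    exact HasStrictFDerivAt.localInverse_apply_image _
  have ev1 := ht.eventually (HasStrictFDerivAt.eventually_right_inverse (hs.hasStrictFDerivAt_equiv hne))
  have ev2 := hcont.eventually (p := fun y => s₀ < y) (by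
    simp only [Function.comp]
    rw [hval]; exact Ioi_mem_nhds h1)
  filter_upwards [ev1, ev2, Ioi_mem_nhds hρ] with x hx1 hx2 hx3
  apply (Fint_anti f s₀ hf hfpos hfint).injOn (hφ x hx3).1 hx2
  rw [(hφ x hx3).2]
  exact hx1.symm

structure ModelFacts (B ρ : ℝ) : Prop where
  hG : modelG B (modelpsi B ρ) = (B / 4) * ρ * Real.exp (-ρ + 1)
  hGd : HasDerivAt (modelG B) (-1 / modelg B (modelpsi B ρ)) (modelpsi B ρ)
  hgpos : 0 < modelg B (modelpsi B ρ)
  hpsi : HasDerivAt (modelpsi B) (modelg B (modelpsi B ρ) * modelG B (modelpsi B ρ) * (1 - 1 / ρ)) ρ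
  hg1 : DifferentiableAt ℝ (modelg B) (modelpsi B ρ)
  hg2 : DifferentiableAt ℝ (deriv (modelg B)) (modelpsi B ρ)
  hP : deriv (modelg B) (modelpsi B ρ) * modelG B (modelpsi B ρ)
    = ρ * (ρ - 2 - 1 / B) / (ρ - 1) ^ 2

lemma modelFacts_one (ρ : ℝ) (hρ : 3 < ρ) : ModelFacts 1 ρ := by
  have hg : modelg 1 = fun s => 4 * Real.exp (Real.exp s - 2 * s) := by ext s; simp [modelg]
  have hG : modelG 1 = fun s => (1 / 4) * (Real.exp s + 1) * Real.exp (-Real.exp s) := by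
    ext s; simp [modelG]
  have hp : modelpsi 1 = fun ρ => Real.log (ρ - 1) := by ext s; simp [modelpsi]
  have hx : 0 < ρ - 1 := by linarith
  have hex : Real.exp (Real.log (ρ - 1)) = ρ - 1 := Real.exp_log hx
  have hgd : ∀ s, HasDerivAt (fun s => 4 * Real.exp (Real.exp s - 2 * s))
      (4 * Real.exp (Real.exp s - 2 * s) * (Real.exp s - 2)) s := by
    intro s
    refine ((((Real.hasDerivAt_exp s).sub ((hasDerivAt_id s).const_mul 2)).exp).const_mul
      4).congr_deriv ?_
    simp only [id, Pi.sub_apply]; ring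
  have hval : 4 * Real.exp (Real.exp (Real.log (ρ - 1)) - 2 * Real.log (ρ - 1))
      = 4 * Real.exp (ρ - 1) / (ρ - 1) ^ 2 := by
    rw [hex, Real.exp_sub, two_mul, Real.exp_add, hex]; ring
  have hGval : (1 / 4) * (Real.exp (Real.log (ρ - 1)) + 1) * Real.exp (-Real.exp (Real.log (ρ - 1)))
      = 1 / 4 * ρ / Real.exp (ρ - 1) := by
    rw [hex, Real.exp_neg]; field_simp; ring
  have hcd : ContDiff ℝ 2 (fun s : ℝ => 4 * Real.exp (Real.exp s - 2 * s)) := by fun_prop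
  constructor
  · rw [hG, hp]; simp only
    rw [hGval, show -ρ + 1 = -(ρ - 1) by ring, Real.exp_neg]; field_simp
  · rw [hG, hg, hp]; simp only
    have := (((Real.hasDerivAt_exp (Real.log (ρ - 1))).add_const 1).const_mul (1/4)).mul
      ((Real.hasDerivAt_exp (Real.log (ρ - 1))).neg.exp)
    refine this.congr_deriv ?_
    rw [hval]
    simp only [Pi.neg_apply]
    rw [hex, Real.exp_neg]
    field_simp
    ring
  · rw [hg]; positivity
  · rw [hG, hg, hp]; simp only
    refine (((hasDerivAt_id ρ).sub_const 1).log hx.ne').congr_deriv ?_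
    rw [hval, hGval]
    simp only [id]
    have : ρ ≠ 0 := by linarith
    field_simp
  · rw [hg]; exact (hgd _).differentiableAt
  · rw [hg]
    exact ((contDiff_succ_iff_deriv (n := 1)).1 hcd).2.2.differentiable (by norm_num) _
  · rw [hG, hg, hp]; simp only
    rw [(hgd _).deriv, hval, hGval, hex]
    field_simp
    ring

lemma modelFacts_gt (B ρ : ℝ) (hB : 1 < B) (hρ : 3 < ρ) : ModelFacts B ρ := by
  have hB1 : B ≠ 1 := hB.ne'
  have hB0 : 0 < B - 1 := by linarith
  have hBp : 0 < B := by linarith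
  set b := B / (B - 1) with hb
  have hbpos : 0 < b := by positivity
  have hbinv : (B - 1) / B = 1 / b := by rw [hb]; field_simp
  have hB_b : 1 / B = 1 - 1 / b := by rw [hb]; field_simp; ring
  have hg : modelg B = fun s => 4 / (B * b) * s ^ (1 - 2 * b) * Real.exp (s ^ b) := by
    ext s; simp [modelg, hB1, hb]
  have hG : modelG B = fun s => (B / 4) * (s ^ b + 1) * Real.exp (-(s ^ b)) := by
    ext s; simp [modelG, hB1, hb]
  have hp : modelpsi B = fun ρ => (ρ - 1) ^ (1 / b) := by
    ext s; simp only [modelpsi, hB1, if_false, hbinv]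
  have hx : 0 < ρ - 1 := by linarith
  set s := (ρ - 1) ^ (1 / b) with hs
  have hspos : 0 < s := Real.rpow_pos_of_pos hx _
  have hsb : s ^ b = ρ - 1 := by
    rw [hs, ← Real.rpow_mul hx.le, one_div_mul_cancel hbpos.ne', Real.rpow_one]
  have hs1 : s ^ (b - 1) = (ρ - 1) / s := by
    rw [Real.rpow_sub_one hspos.ne', hsb]
  have hs2 : s ^ (1 - 2 * b) = s / (ρ - 1) ^ 2 := by
    rw [Real.rpow_sub hspos, Real.rpow_one, two_mul, Real.rpow_add hspos, hsb]; ring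
  have hs3 : s ^ (1 - 2 * b - 1) = 1 / (ρ - 1) ^ 2 := by
    rw [Real.rpow_sub_one hspos.ne', hs2]; field_simp
  have hgd : HasDerivAt (fun s => 4 / (B * b) * s ^ (1 - 2 * b) * Real.exp (s ^ b))
      (4 / (B * b) * ((1 - 2 * b) * s ^ (1 - 2 * b - 1)) * Real.exp (s ^ b)
       + 4 / (B * b) * s ^ (1 - 2 * b) * (Real.exp (s ^ b) * (b * s ^ (b - 1)))) s :=
    ((Real.hasDerivAt_rpow_const (Or.inl hspos.ne')).const_mul _).mul
      (Real.hasDerivAt_rpow_const (Or.inl hspos.ne')).exp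
  have hcd : ContDiffAt ℝ 2 (fun s => 4 / (B * b) * s ^ (1 - 2 * b) * Real.exp (s ^ b)) s := by
    have h1 : ∀ p : ℝ, ContDiffAt ℝ 2 (fun s : ℝ => s ^ p) s := fun p =>
      Real.contDiffAt_rpow_const_of_ne hspos.ne'
    exact (contDiffAt_const.mul (h1 _)).mul (h1 _).exp
  have hpsival : modelpsi B ρ = s := by rw [hp]
  constructor
  · rw [hpsival, hG]; simp only
    rw [hsb]; congr 2 <;> ring
  · rw [hpsival, hG, hg]; simp only
    have := (((Real.hasDerivAt_rpow_const (p := b) (Or.inl hspos.ne')).add_const 1).const_mul (B/4)).mul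
      ((Real.hasDerivAt_rpow_const (p := b) (Or.inl hspos.ne')).neg.exp)
    refine this.congr_deriv ?_
    simp only [Pi.neg_apply]
    rw [hsb, hs1, hs2, Real.exp_neg]
    field_simp
    ring
  · rw [hpsival, hg]; positivity
  · rw [hpsival, hG, hg, hp]; simp only
    refine (((hasDerivAt_id ρ).sub_const 1).rpow_const (Or.inl hx.ne')).congr_deriv ?_
    rw [hsb, hs2, Real.exp_neg]
    simp only [id]
    rw [Real.rpow_sub_one hx.ne', ← hs]
    have : ρ ≠ 0 := by linarith
    field_simp
    ring
  · rw [hpsival, hg]; exact hgd.differentiableAt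
  · rw [hpsival, hg]
    exact (ContDiffAt.derivWithin (m := 1) hcd (by norm_num)).differentiableAt (by norm_num)
  · rw [hpsival, hG, hg]; simp only
    rw [hgd.deriv, hsb, hs1, hs2, hs3, Real.exp_neg, hB_b]
    field_simp
    ring

lemma core2 (X X' : ℝ → ℝ) (B ρ₁ ρ N : ℝ) (hB : 1 ≤ B) (h1 : 0 < ρ₁) (hρ : ρ₁ < ρ)
    (hX : ∀ τ, ρ₁ < τ → HasDerivAt X (X' τ) τ)
    (hb : ∀ τ, ρ ≤ τ → |X τ| ≤ 2 * N / τ)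
    (hb' : ∀ τ, ρ ≤ τ → |X' τ| ≤ 16 * N / τ ^ 2) :
    |Real.sqrt B * ∫ τ in Set.Ioi ρ, (ρ * τ) ^ ((1 : ℝ) / 4)
          * Real.sin ((2 / Real.sqrt B) * (ρ ^ ((1 : ℝ) / 2) - τ ^ ((1 : ℝ) / 2)))
          * X τ| ≤ 74 * B * N := by
  have hρ0 : 0 < ρ := h1.trans hρ
  have hN : 0 ≤ N := by
    have := (abs_nonneg _).trans (hb ρ le_rfl)
    by_contra hcon
    have : 2 * N / ρ < 0 := div_neg_of_neg_of_pos (by linarith) hρ0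
    linarith
  set J : ℝ → ℝ := fun τ => (ρ * τ) ^ ((1 : ℝ) / 4)
          * Real.sin ((2 / Real.sqrt B) * (ρ ^ ((1 : ℝ) / 2) - τ ^ ((1 : ℝ) / 2)))
          * X τ with hJ
  set b := Real.sqrt B with hbdef
  have hbpos : 0 < b := Real.sqrt_pos.2 (by linarith)
  have hbb : b * b = B := Real.mul_self_sqrt (by linarith)
  by_cases hint : IntegrableOn J (Set.Ioi ρ)
  swap
  · rw [integral_undef hint]
    simp only [mul_zero, abs_zero]
    positivity
  have hJc : ContinuousOn J (Set.Ioi ρ₁) := by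
    intro τ hτ
    have hτ0 : 0 < τ := h1.trans hτ
    have c1 : ContinuousAt X τ := (hX τ hτ).continuousAt
    have c2 : ContinuousAt (fun τ : ℝ => τ ^ ((1 : ℝ) / 2)) τ :=
      Real.continuousAt_rpow_const _ _ (Or.inl hτ0.ne')
    have c3 : ContinuousAt (fun τ : ℝ => (ρ * τ) ^ ((1 : ℝ) / 4)) τ :=
      ContinuousAt.rpow_const (by fun_prop) (Or.inl (by positivity))
    exact ((c3.mul (Real.continuous_sin.continuousAt.comp
      (continuousAt_const.mul (continuousAt_const.sub c2)))).mul c1).continuousWithinAt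
  have hJd : ∀ τ, ρ ≤ τ → HasDerivAt (fun x => ∫ t in ρ..x, J t) (J τ) τ := by
    intro τ hτ
    have hτ1 : ρ₁ < τ := by linarith
    apply intervalIntegral.integral_hasDerivAt_right
    · apply ContinuousOn.intervalIntegrable
      apply hJc.mono
      rw [Set.uIcc_of_le hτ]
      intro x hx
      exact lt_of_lt_of_le hρ hx.1
    · exact hJc.stronglyMeasurableAtFilter isOpen_Ioi τ hτ1
    · exact hJc.continuousAt (Ioi_mem_nhds hτ1)
  set K : ℝ → ℝ := fun τ => Real.cos ((2 / b) * (ρ ^ ((1 : ℝ) / 2) - τ ^ ((1 : ℝ) / 2))) with hK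
  set W : ℝ → ℝ := fun τ => τ ^ ((3 : ℝ) / 4) * X τ with hW
  set W' : ℝ → ℝ := fun τ => (3 / 4) * τ ^ (-(1 : ℝ) / 4) * X τ + τ ^ ((3 : ℝ) / 4) * X' τ with hW'
  set H : ℝ → ℝ := fun τ => (∫ t in ρ..τ, J t) - b * ρ ^ ((1 : ℝ) / 4) * (W τ * K τ - W ρ) with hH
  set H' : ℝ → ℝ := fun τ => - (b * ρ ^ ((1 : ℝ) / 4) * (W' τ * K τ)) with hH'
  have hWd : ∀ τ, ρ ≤ τ → HasDerivAt W (W' τ) τ := by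
    intro τ hτ
    have hτ0 : 0 < τ := by linarith
    have := (Real.hasDerivAt_rpow_const (p := (3 : ℝ) / 4) (Or.inl hτ0.ne')).mul (hX τ (by linarith))
    refine this.congr_deriv ?_
    simp only [hW']
    rw [show (3 : ℝ) / 4 - 1 = -1 / 4 by norm_num]
  have hKd : ∀ τ, ρ ≤ τ → HasDerivAt K
      (Real.sin ((2 / b) * (ρ ^ ((1 : ℝ) / 2) - τ ^ ((1 : ℝ) / 2))) / b * τ ^ (-(1 : ℝ) / 2)) τ := by
    intro τ hτ
    have hτ0 : 0 < τ := by linarith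
    have := (((Real.hasDerivAt_rpow_const (p := (1 : ℝ) / 2) (Or.inl hτ0.ne')).const_sub
      (ρ ^ ((1 : ℝ) / 2))).const_mul (2 / b)).cos
    refine this.congr_deriv ?_
    rw [show (1 : ℝ) / 2 - 1 = -1 / 2 by norm_num]
    field_simp
  have hHd : ∀ τ, ρ ≤ τ → HasDerivAt H (H' τ) τ := by
    intro τ hτ
    have hτ0 : 0 < τ := by linarith
    have := (hJd τ hτ).sub ((((hWd τ hτ).mul (hKd τ hτ)).sub_const (W ρ)).const_mul
      (b * ρ ^ ((1 : ℝ) / 4)))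
    refine this.congr_deriv ?_
    simp only [hH', hJ, hW]
    have e1 : τ ^ ((3 : ℝ) / 4) * τ ^ (-(1 : ℝ) / 2) = τ ^ ((1 : ℝ) / 4) := by
      rw [← Real.rpow_add hτ0]; norm_num
    rw [Real.mul_rpow hρ0.le hτ0.le, ← e1]
    field_simp
    ring
  have hWb : ∀ τ, ρ ≤ τ → |W τ| ≤ 2 * N * τ ^ (-(1 : ℝ) / 4) := by
    intro τ hτ
    have hτ0 : 0 < τ := by linarith
    have e1 : τ ^ (-(1 : ℝ) / 4) = τ ^ ((3 : ℝ) / 4) / τ := by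
      rw [← Real.rpow_sub_one hτ0.ne']; norm_num
    have hp : 0 < τ ^ ((3 : ℝ) / 4) := Real.rpow_pos_of_pos hτ0 _
    simp only [hW]
    rw [abs_mul, abs_of_pos hp, e1]
    calc _ ≤ τ ^ ((3 : ℝ) / 4) * (2 * N / τ) := by gcongr; exact hb τ hτ
      _ = _ := by ring
  have hWb' : ∀ τ, ρ ≤ τ → |W' τ| ≤ (35 / 2) * N * τ ^ (-(5 : ℝ) / 4) := by
    intro τ hτ
    have hτ0 : 0 < τ := by linarith
    have e1 : τ ^ (-(5 : ℝ) / 4) = τ ^ (-(1 : ℝ) / 4) / τ := by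
      rw [← Real.rpow_sub_one hτ0.ne']; norm_num
    have e2 : τ ^ ((3 : ℝ) / 4) = τ ^ (-(1 : ℝ) / 4) * τ := by
      rw [← Real.rpow_add_one hτ0.ne']; norm_num
    have hp : 0 < τ ^ (-(1 : ℝ) / 4) := Real.rpow_pos_of_pos hτ0 _
    simp only [hW']
    rw [e1, e2]
    generalize τ ^ (-(1 : ℝ) / 4) = y at *
    calc _ ≤ |3 / 4 * y * X τ| + |y * τ * X' τ| := abs_add_le _ _
      _ = 3 / 4 * y * |X τ| + y * τ * |X' τ| := by
        rw [abs_mul, abs_mul (y * τ), abs_of_pos (by positivity : 0 < 3 / 4 * y),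
          abs_of_pos (by positivity : 0 < y * τ)]
      _ ≤ 3 / 4 * y * (2 * N / τ) + y * τ * (16 * N / τ ^ 2) := by
        gcongr
        · exact hb τ hτ
        · exact hb' τ hτ
      _ = _ := by field_simp; ring
  set r := ρ ^ ((1 : ℝ) / 4) with hr
  have hrpos : 0 < r := Real.rpow_pos_of_pos hρ0 _
  have hrr : r * ρ ^ (-(1 : ℝ) / 4) = 1 := by
    rw [hr, ← Real.rpow_add hρ0]; norm_num
  set T : ℝ → ℝ := fun τ => b * r * (70 * N) * (ρ ^ (-(1 : ℝ) / 4) - τ ^ (-(1 : ℝ) / 4)) with hT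
  have hTd : ∀ τ, ρ ≤ τ → HasDerivAt T (b * r * ((35 / 2) * N * τ ^ (-(5 : ℝ) / 4))) τ := by
    intro τ hτ
    have hτ0 : 0 < τ := by linarith
    have := ((Real.hasDerivAt_rpow_const (p := -(1 : ℝ) / 4) (Or.inl hτ0.ne')).const_sub
      (ρ ^ (-(1 : ℝ) / 4))).const_mul (b * r * (70 * N))
    refine this.congr_deriv ?_
    rw [show -(1 : ℝ) / 4 - 1 = -5 / 4 by norm_num]
    ring
  have hKb : ∀ τ, |K τ| ≤ 1 := fun τ => Real.abs_cos_le_one _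
  have hHb : ∀ R, ρ ≤ R → |H R| ≤ T R := by
    intro R hR
    have := image_norm_le_of_norm_deriv_right_le_deriv_boundary' (f := H) (f' := H') (a := ρ) (b := R)
      (B := T) (B' := fun τ => b * r * ((35 / 2) * N * τ ^ (-(5 : ℝ) / 4)))
      (fun x hx => (hHd x hx.1).continuousAt.continuousWithinAt)
      (fun x hx => (hHd x hx.1).hasDerivWithinAt)
      (by
        have : K ρ = 1 := by simp [hK]
        simp [hH, hT, this])
      (fun x hx => (hTd x hx.1).continuousAt.continuousWithinAt)
      (fun x hx => (hTd x hx.1).hasDerivWithinAt)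
      (fun x hx => by
        rw [Real.norm_eq_abs]
        simp only [hH']
        rw [abs_neg, abs_mul, abs_of_pos (by positivity : 0 < b * r), abs_mul]
        refine mul_le_mul_of_nonneg_left ?_ (by positivity)
        calc |W' x| * |K x| ≤ |W' x| * 1 := by gcongr; exact hKb x
          _ ≤ _ := by rw [mul_one]; exact hWb' x hx.1)
    exact this ⟨hR, le_rfl⟩
  have hfin : ∀ R, ρ ≤ R → |∫ t in ρ..R, J t| ≤ 74 * b * N := by
    intro R hR
    have hR0 : 0 < R := by linarith
    have hmono : R ^ (-(1 : ℝ) / 4) ≤ ρ ^ (-(1 : ℝ) / 4) :=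
      Real.rpow_le_rpow_of_nonpos hρ0 hR (by norm_num)
    have hRp : 0 < R ^ (-(1 : ℝ) / 4) := Real.rpow_pos_of_pos hR0 _
    have e : (∫ t in ρ..R, J t) = H R + b * r * (W R * K R - W ρ) := by simp only [hH]; ring
    have hw : |W R * K R - W ρ| ≤ 4 * N * ρ ^ (-(1 : ℝ) / 4) := by
      calc _ ≤ |W R * K R| + |W ρ| := abs_sub _ _
        _ = |W R| * |K R| + |W ρ| := by rw [abs_mul]
        _ ≤ |W R| * 1 + |W ρ| := by gcongr; exact hKb R
        _ ≤ 2 * N * R ^ (-(1 : ℝ) / 4) * 1 + 2 * N * ρ ^ (-(1 : ℝ) / 4) := by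
          gcongr
          · exact hWb R hR
          · exact hWb ρ le_rfl
        _ ≤ 2 * N * ρ ^ (-(1 : ℝ) / 4) * 1 + 2 * N * ρ ^ (-(1 : ℝ) / 4) := by gcongr
        _ = _ := by ring
    rw [e]
    calc _ ≤ |H R| + |b * r * (W R * K R - W ρ)| := abs_add_le _ _
      _ = |H R| + b * r * |W R * K R - W ρ| := by
        rw [abs_mul (b * r), abs_of_pos (by positivity : 0 < b * r)]
      _ ≤ T R + b * r * (4 * N * ρ ^ (-(1 : ℝ) / 4)) := by
        gcongr
        exact hHb R hR
      _ ≤ b * r * (70 * N) * (ρ ^ (-(1 : ℝ) / 4) - 0) + b * r * (4 * N * ρ ^ (-(1 : ℝ) / 4)) := by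
        simp only [hT]
        gcongr
      _ = 74 * b * N * (r * ρ ^ (-(1 : ℝ) / 4)) := by ring
      _ = _ := by rw [hrr, mul_one]
  have hlim := intervalIntegral_tendsto_integral_Ioi ρ hint tendsto_id
  have hle : |∫ t in Set.Ioi ρ, J t| ≤ 74 * b * N := by
    refine le_of_tendsto hlim.abs ?_
    filter_upwards [eventually_ge_atTop ρ] with R hR
    exact hfin R hR
  rw [abs_mul, abs_of_pos hbpos]
  calc _ ≤ b * (74 * b * N) := by gcongr
    _ = 74 * (b * b) * N := by ring
    _ = _ := by rw [hbb]

lemma core (E E' D D' e : ℝ → ℝ) (B ρ₁ ρ M : ℝ) (hB : 1 ≤ B) (h1 : 1 < ρ₁) (hρ : ρ₁ < ρ)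
    (hE : ∀ τ, ρ₁ < τ → HasDerivAt E (E' τ) τ)
    (hD : ∀ τ, ρ₁ < τ → HasDerivAt D (D' τ) τ)
    (hE0 : ∀ τ, ρ₁ < τ → 0 < E τ)
    (hE1 : ∀ τ, ρ₁ < τ → E' τ ≤ 0)
    (hE2 : ∀ τ, ρ₁ < τ → -(4 * E τ / τ) ≤ E' τ)
    (hDb : ∀ τ, ρ₁ < τ → |D τ| ≤ 2 * e τ / τ)
    (hDb' : ∀ τ, ρ₁ < τ → |D' τ| ≤ 4 * e τ / τ ^ 2)
    (he0 : ∀ τ, ρ₁ < τ → 0 ≤ e τ)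
    (heM : ∀ τ, ρ₁ < τ → e τ ≤ M) :
    |Real.sqrt B * ∫ τ in Set.Ioi ρ, (ρ * τ) ^ ((1 : ℝ) / 4)
          * Real.sin ((2 / Real.sqrt B) * (ρ ^ ((1 : ℝ) / 2) - τ ^ ((1 : ℝ) / 2)))
          * (E τ * (1 - 1 / τ) ^ 2 * D τ)| ≤ 74 * B * (E ρ * sSup (e '' Set.Ici ρ)) := by
  set S := sSup (e '' Set.Ici ρ) with hS
  have hbdd : BddAbove (e '' Set.Ici ρ) := by
    refine ⟨M, ?_⟩
    rintro _ ⟨τ, hτ, rfl⟩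
    exact heM τ (lt_of_lt_of_le hρ hτ)
  have heS : ∀ τ, ρ ≤ τ → e τ ≤ S := fun τ hτ => le_csSup hbdd ⟨τ, hτ, rfl⟩
  have hanti : AntitoneOn E (Set.Ioi ρ₁) := by
    apply antitoneOn_of_deriv_nonpos (convex_Ioi ρ₁)
    · intro x hx
      exact (hE x hx).continuousAt.continuousWithinAt
    · intro x hx
      rw [interior_Ioi] at hx
      exact (hE x hx).differentiableAt.differentiableWithinAt
    · intro x hx
      rw [interior_Ioi] at hx
      rw [(hE x hx).deriv]
      exact hE1 x hx
  apply core2 (fun τ => E τ * (1 - 1 / τ) ^ 2 * D τ)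
    (fun τ => (E' τ * (1 - 1 / τ) ^ 2 + E τ * (2 * (1 - 1 / τ) * (1 / τ ^ 2))) * D τ
      + E τ * (1 - 1 / τ) ^ 2 * D' τ) B ρ₁ ρ _ hB (by linarith) hρ
  · intro τ hτ
    have hτ0 : 0 < τ := by linarith
    have hm : HasDerivAt (fun τ : ℝ => (1 - 1 / τ) ^ 2) (2 * (1 - 1 / τ) * (1 / τ ^ 2)) τ := by
      have := (((hasDerivAt_inv hτ0.ne').const_sub 1).pow 2)
      simp only [one_div]
      refine this.congr_deriv ?_
      norm_num
    exact ((hE τ hτ).mul hm).mul (hD τ hτ)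
  · intro τ hτ
    have hτ1 : ρ₁ < τ := by linarith
    have hτ0 : 0 < τ := by linarith
    have hEτ := hE0 τ hτ1
    have hEle : E τ ≤ E ρ := hanti hρ hτ1 hτ
    have hi : 0 < 1 / τ := by positivity
    have hi1 : 1 / τ < 1 := by rw [div_lt_one hτ0]; linarith
    have hm1 : (1 - 1 / τ) ^ 2 ≤ 1 := by nlinarith
    have := he0 τ hτ1
    rw [abs_mul, abs_of_nonneg (by positivity : 0 ≤ E τ * (1 - 1 / τ) ^ 2)]
    calc _ ≤ E ρ * 1 * (2 * S / τ) := by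
          have hEρ : 0 ≤ E ρ := by linarith
          have hDS : |D τ| ≤ 2 * S / τ := (hDb τ hτ1).trans (by gcongr; exact heS τ hτ)
          gcongr
      _ = _ := by ring
  · intro τ hτ
    have hτ1 : ρ₁ < τ := by linarith
    have hτ0 : 0 < τ := by linarith
    have hEτ := hE0 τ hτ1
    have hEle : E τ ≤ E ρ := hanti hρ hτ1 hτ
    have hi : 0 < 1 / τ := by positivity
    have hi1 : 1 / τ < 1 := by rw [div_lt_one hτ0]; linarith
    have hm1 : (1 - 1 / τ) ^ 2 ≤ 1 := by nlinarith
    have hm0 : 0 ≤ (1 - 1 / τ) ^ 2 := by positivity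
    have hen := he0 τ hτ1
    have heS' := heS τ hτ
    have hS0 : 0 ≤ S := hen.trans heS'
    have hEρ : 0 ≤ E ρ := by linarith
    have hDS : |D τ| ≤ 2 * S / τ := (hDb τ hτ1).trans (by gcongr)
    have hDS' : |D' τ| ≤ 4 * S / τ ^ 2 := (hDb' τ hτ1).trans (by gcongr)
    have hE'b : |E' τ| ≤ 4 * E ρ / τ := by
      rw [abs_of_nonpos (hE1 τ hτ1)]
      have h2 := hE2 τ hτ1
      have : 4 * E τ / τ ≤ 4 * E ρ / τ := by gcongr
      linarith
    have hm'b : |2 * (1 - 1 / τ) * (1 / τ ^ 2)| ≤ 2 / τ := by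
      rw [abs_of_nonneg (by have : 0 ≤ 1 - 1 / τ := by linarith
                            positivity)]
      have e1 : (1 : ℝ) / τ ^ 2 = 1 / τ * (1 / τ) := by field_simp
      have e2 : 2 / τ = 2 * 1 * (1 * (1 / τ)) := by ring
      rw [e1, e2]
      gcongr
      linarith
    calc _ ≤ |(E' τ * (1 - 1 / τ) ^ 2 + E τ * (2 * (1 - 1 / τ) * (1 / τ ^ 2))) * D τ|
          + |E τ * (1 - 1 / τ) ^ 2 * D' τ| := abs_add_le _ _
      _ = |E' τ * (1 - 1 / τ) ^ 2 + E τ * (2 * (1 - 1 / τ) * (1 / τ ^ 2))| * |D τ|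
          + E τ * (1 - 1 / τ) ^ 2 * |D' τ| := by
            rw [abs_mul, abs_mul (E τ * (1 - 1 / τ) ^ 2), abs_of_nonneg (by positivity : 0 ≤ E τ * (1 - 1 / τ) ^ 2)]
      _ ≤ (|E' τ| * (1 - 1 / τ) ^ 2 + E τ * |2 * (1 - 1 / τ) * (1 / τ ^ 2)|) * |D τ|
          + E τ * (1 - 1 / τ) ^ 2 * |D' τ| := by
            gcongr
            refine (abs_add_le _ _).trans ?_
            rw [abs_mul (E' τ), abs_mul (E τ), abs_of_nonneg hm0, abs_of_pos hEτ]
      _ ≤ (4 * E ρ / τ * 1 + E ρ * (2 / τ)) * (2 * S / τ) + E ρ * 1 * (4 * S / τ ^ 2) := by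
            gcongr
      _ = _ := by field_simp; ring

lemma L_hasDerivAt (B ρ : ℝ) (hB : 1 ≤ B) (hρ : 1 < ρ) :
    HasDerivAt (fun ρ => -Real.log ((B / 4) * ρ * Real.exp (-ρ + 1))) (1 - 1 / ρ) ρ := by
  have hne : (B / 4) * ρ * Real.exp (-ρ + 1) ≠ 0 := by positivity
  refine ((h_hasDerivAt B ρ hρ).log hne).neg.congr_deriv ?_
  field_simp

lemma L_bounds (B : ℝ) (hB : 1 ≤ B) :
    ∀ᶠ ρ in atTop, ρ / 2 ≤ -Real.log ((B / 4) * ρ * Real.exp (-ρ + 1)) ∧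
      -Real.log ((B / 4) * ρ * Real.exp (-ρ + 1)) ≤ 2 * ρ := by
  have h1 : ∀ᶠ ρ : ℝ in atTop, ‖Real.log ρ‖ ≤ (1 / 4) * ‖id ρ‖ :=
    Real.isLittleO_log_id_atTop.def (by norm_num)
  filter_upwards [h1, eventually_gt_atTop 1,
    eventually_ge_atTop (4 * |Real.log (B / 4) + 1|)] with ρ h1 h2 h3
  have h0 : 0 < ρ := by linarith
  have hB4 : B / 4 ≠ 0 := by positivity
  rw [Real.log_mul (by positivity) (Real.exp_pos _).ne', Real.log_mul hB4 h0.ne', Real.log_exp]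
  simp only [id, Real.norm_eq_abs, abs_of_pos h0] at h1
  have a1 := abs_le.1 h1
  have h3' : |Real.log (B / 4) + 1| ≤ ρ / 4 := by linarith
  have a2 := abs_le.1 h3'
  constructor <;> linarith [a1.1, a1.2, a2.1, a2.2]

lemma modelFacts (B ρ : ℝ) (hB : 1 ≤ B) (hρ : 3 < ρ) : ModelFacts B ρ := by
  rcases hB.eq_or_lt with h | h
  · rw [← h]; exact modelFacts_one ρ hρ
  · exact modelFacts_gt B ρ h hρ

lemma P_hasDerivAt (B ρ : ℝ) (hB : 1 ≤ B) (hρ : 3 < ρ) :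
    HasDerivAt (fun ρ => ρ * (ρ - 2 - 1 / B) / (ρ - 1) ^ 2)
      ((ρ / B + 2 + 1 / B) / (ρ - 1) ^ 3) ρ := by
  have hx : ρ - 1 ≠ 0 := by linarith
  have hid := hasDerivAt_id ρ
  have := ((hid.mul ((hid.sub_const 2).sub_const (1 / B))).div ((hid.sub_const 1).pow 2)
    (pow_ne_zero 2 hx))
  refine this.congr_deriv ?_
  have : B ≠ 0 := by positivity
  simp [id]
  field_simp
  ring

/-- bounds for the model quantities -/
lemma model_bounds (B ρ L : ℝ) (hB : 1 ≤ B) (hρ : 3 < ρ)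
    (hL : L = -Real.log ((B / 4) * ρ * Real.exp (-ρ + 1)))
    (h1 : ρ / 2 ≤ L) (h2 : L ≤ 2 * ρ) :
    HasDerivAt (fun r => deriv (modelg B) (modelpsi B r) * modelG B (modelpsi B r))
      (invB2 (modelg B) (modelG B) (modelpsi B ρ) * (1 - 1 / ρ) / L ^ 2) ρ ∧
    |invB2 (modelg B) (modelG B) (modelpsi B ρ)| ≤ 128 ∧
    |invB1 (modelg B) (modelG B) (modelpsi B ρ)| ≤ 16 := by
  have mf := modelFacts B ρ hB hρ
  have hL0 : 0 < L := by linarith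
  have hx : 0 < ρ - 1 := by linarith
  have hB0 : 0 < B := by linarith
  have hBi : 1 / B ≤ 1 := by rw [div_le_one hB0]; exact hB
  have hBi0 : 0 < 1 / B := by positivity
  have hlogG : Real.log (modelG B (modelpsi B ρ)) = -L := by rw [mf.hG, hL, neg_neg]
  have hPpos : 0 < deriv (modelg B) (modelpsi B ρ) * modelG B (modelpsi B ρ) := by
    rw [mf.hP]
    have : 0 < ρ - 2 - 1 / B := by linarith
    positivity
  have hd := qderiv (modelg B) (modelG B) (modelpsi B) ρ (1 - 1 / ρ) mf.hGd mf.hg1 mf.hg2 mf.hgpos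
    (fun h => by rw [h] at hPpos; simp at hPpos) (by rw [hlogG]; linarith) mf.hpsi
  rw [hlogG, neg_sq] at hd
  refine ⟨hd, ?_, ?_⟩
  · have hd2 : HasDerivAt (fun r => deriv (modelg B) (modelpsi B r) * modelG B (modelpsi B r))
        ((ρ / B + 2 + 1 / B) / (ρ - 1) ^ 3) ρ := by
      refine (P_hasDerivAt B ρ hB hρ).congr_of_eventuallyEq ?_
      filter_upwards [Ioi_mem_nhds hρ] with r hr
      exact (modelFacts B r hB hr).hP
    have heq := hd.unique hd2
    have hρ0 : 0 < ρ := by linarith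
    have e : invB2 (modelg B) (modelG B) (modelpsi B ρ)
        = (ρ / B + 2 + 1 / B) * ρ * L ^ 2 / (ρ - 1) ^ 4 := by
      have e1 : (1 : ℝ) - 1 / ρ = (ρ - 1) / ρ := by field_simp
      rw [e1] at heq
      rw [eq_div_iff (by positivity)]
      rw [div_eq_div_iff (by positivity) (by positivity)] at heq
      have e2 : invB2 (modelg B) (modelG B) (modelpsi B ρ) * ((ρ - 1) / ρ) * (ρ - 1) ^ 3 * ρ
        = (ρ / B + 2 + 1 / B) * L ^ 2 * ρ := by rw [heq]
      field_simp at e2 ⊢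
      linarith
    rw [e, abs_of_nonneg (by positivity), div_le_iff₀ (by positivity)]
    have b1 : ρ / B + 2 + 1 / B ≤ 2 * ρ := by
      have : ρ / B ≤ ρ := div_le_self hρ0.le hB
      linarith
    have b2 : ρ ≤ 3 / 2 * (ρ - 1) := by linarith
    calc _ ≤ (2 * ρ) * ρ * (2 * ρ) ^ 2 := by gcongr
      _ = 8 * ρ ^ 4 := by ring
      _ ≤ 8 * (3 / 2 * (ρ - 1)) ^ 4 := by gcongr
      _ ≤ _ := by
        rw [mul_pow]
        have : 0 < (ρ - 1) ^ 4 := by positivity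
        nlinarith
  · have e : invB1 (modelg B) (modelG B) (modelpsi B ρ) = L * ((ρ / B + 1) / (ρ - 1) ^ 2) := by
      unfold invB1
      rw [hlogG, mf.hP, neg_neg]
      congr 1
      field_simp
      ring
    have hρ0 : 0 < ρ := by linarith
    rw [e, abs_of_nonneg (by positivity), ← mul_div_assoc, div_le_iff₀ (by positivity)]
    have b1 : ρ / B + 1 ≤ 4 / 3 * ρ := by
      have : ρ / B ≤ ρ := div_le_self hρ0.le hB
      linarith
    have b2 : ρ ≤ 3 / 2 * (ρ - 1) := by linarith
    calc _ ≤ (2 * ρ) * (4 / 3 * ρ) := by gcongr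
      _ = 8 / 3 * ρ ^ 2 := by ring
      _ ≤ 8 / 3 * (3 / 2 * (ρ - 1)) ^ 2 := by gcongr
      _ ≤ _ := by
        rw [mul_pow]
        have : 0 < (ρ - 1) ^ 2 := by positivity
        nlinarith

lemma phi_tendsto (f φ : ℝ → ℝ) (s₀ B : ℝ) (hB : 1 ≤ B) (hf : ContinuousOn f (Set.Ioi s₀))
    (hfpos : ∀ s, s₀ < s → 0 < f s)
    (hfint : ∀ s, s₀ < s → IntegrableOn (fun τ => 1 / f τ) (Set.Ioi s))
    (hφ : ∀ ρ > (1 : ℝ), s₀ < φ ρ ∧ Fint f (φ ρ) = (B / 4) * ρ * Real.exp (-ρ + 1)) :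
    Tendsto φ atTop atTop := by
  rw [tendsto_atTop]
  intro M
  set M' := max M (s₀ + 1) with hM'
  have hM1 : s₀ < M' := lt_of_lt_of_le (by linarith) (le_max_right _ _)
  have hFp := Fint_pos f s₀ hfpos hfint M' hM1
  filter_upwards [L_bounds B hB, eventually_gt_atTop 1,
    eventually_gt_atTop (2 * (-Real.log (Fint f M')))] with ρ h1 h2 h3
  obtain ⟨a, b⟩ := hφ ρ h2
  have hFφ := Fint_pos f s₀ hfpos hfint _ a
  have hlt : Fint f (φ ρ) < Fint f M' := by
    rw [← Real.log_lt_log_iff hFφ hFp, b]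
    linarith [h1.1]
  have := ((Fint_anti f s₀ hf hfpos hfint).lt_iff_gt a hM1).1 hlt
  exact (le_max_left M _).trans this.le

/-- Lemma 2.2: the oscillatory integral of the inhomogeneous term is bounded by
`C f(φ(ρ))F(φ(ρ)) sup_{τ ≥ ρ}(ε₁(τ)+ε₂(τ))`. -/
theorem stmt8 (f φ : ℝ → ℝ) (s₀ B : ℝ) (hs₀ : 0 < s₀)
    (hf : ContDiffOn ℝ 2 f (Set.Ioi s₀))
    (hfpos : ∀ s, s₀ < s → 0 < f s)
    (hf' : ∀ s, s₀ < s → 0 < deriv f s)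
    (hfint : ∀ s, s₀ < s → IntegrableOn (fun τ => 1 / f τ) (Set.Ioi s))
    (hB : 1 ≤ B)
    (hf2a : Tendsto (fun s => deriv f s * Fint f s) atTop (nhds 1))
    (hf2b : Tendsto (fun s => invB2 f (Fint f) s) atTop (nhds (1 / B)))
    (hφ : ∀ ρ > (1 : ℝ), s₀ < φ ρ ∧ Fint f (φ ρ) = (B / 4) * ρ * Real.exp (-ρ + 1)) :
    ∃ C > (0 : ℝ), ∃ ρ₀ > (1 : ℝ), ∀ ρ ≥ ρ₀,
      |Real.sqrt B * ∫ τ in Set.Ioi ρ, (ρ * τ) ^ ((1 : ℝ) / 4)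
          * Real.sin ((2 / Real.sqrt B) * (ρ ^ ((1 : ℝ) / 2) - τ ^ ((1 : ℝ) / 2)))
          * Ifun f φ B τ|
        ≤ C * f (φ ρ) * Fint f (φ ρ) *
            sSup ((fun τ => eps1 f φ B τ + eps2 f φ B τ) '' Set.Ici ρ) := by
  have hfc : ContinuousOn f (Set.Ioi s₀) := hf.continuousOn
  have hfd : ∀ s, s₀ < s → DifferentiableAt ℝ f s := fun s hs =>
    (hf.contDiffAt (Ioi_mem_nhds hs)).differentiableAt (by norm_num)
  have hfd2 : ∀ s, s₀ < s → DifferentiableAt ℝ (deriv f) s := fun s hs =>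
    (ContDiffAt.derivWithin (m := 1) (hf.contDiffAt (Ioi_mem_nhds hs)) (by norm_num)).differentiableAt
      (by norm_num)
  have hB0 : 0 < B := by linarith
  have hBi : 1 / B ≤ 1 := by rw [div_le_one hB0]; exact hB
  have hBi0 : 0 < 1 / B := by positivity
  have hφt := phi_tendsto f φ s₀ B hB hfc hfpos hfint hφ
  set L : ℝ → ℝ := fun ρ => -Real.log ((B / 4) * ρ * Real.exp (-ρ + 1)) with hL
  have ev1 := hφt.eventually (hf2b.eventually (lt_mem_nhds hBi0))
  have ev2 := hφt.eventually (hf2b.eventually (gt_mem_nhds (by linarith : 1 / B < 2)))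
  obtain ⟨ρ₂, hρ₂⟩ := eventually_atTop.1 (ev1.and (ev2.and (L_bounds B hB)))
  set ρ₁ := max ρ₂ 3 with hρ₁
  have hρ₁3 : 3 ≤ ρ₁ := le_max_right _ _
  have hall : ∀ τ, ρ₁ < τ → 3 < τ ∧ 0 < invB2 f (Fint f) (φ τ) ∧ invB2 f (Fint f) (φ τ) < 2 ∧
      τ / 2 ≤ L τ ∧ L τ ≤ 2 * τ := fun τ hτ =>
    ⟨lt_of_le_of_lt hρ₁3 hτ, hρ₂ τ ((le_max_left _ _).trans hτ.le)⟩
  have hlogF : ∀ τ, ρ₁ < τ → Real.log (Fint f (φ τ)) = -L τ := fun τ hτ => by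
    rw [(hφ τ (by linarith)).2]; simp [hL]
  have hφs : ∀ τ, ρ₁ < τ → s₀ < φ τ := fun τ hτ => (hφ τ (by linarith)).1
  have hφd : ∀ τ, ρ₁ < τ → HasDerivAt φ (f (φ τ) * Fint f (φ τ) * (1 - 1 / τ)) τ := fun τ hτ =>
    phi_hasDerivAt f φ s₀ B hfc hfpos hfint hφ τ (by linarith)
  have hFd : ∀ τ, ρ₁ < τ → HasDerivAt (Fint f) (-1 / f (φ τ)) (φ τ) := fun τ hτ =>
    Fint_hasDerivAt f s₀ hfc hfpos hfint _ (hφs τ hτ)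
  have hl : ∀ τ, ρ₁ < τ → 0 < 1 - 1 / τ ∧ 1 - 1 / τ ≤ 1 := fun τ hτ => by
    have : 0 < τ := by linarith
    have h1 : 0 < 1 / τ := by positivity
    have h2 : 1 / τ < 1 := by rw [div_lt_one this]; linarith
    constructor <;> linarith
  set q : ℝ → ℝ := fun τ => deriv f (φ τ) * Fint f (φ τ) with hq
  set E : ℝ → ℝ := fun τ => f (φ τ) * Fint f (φ τ) with hE
  have hqd : ∀ τ, ρ₁ < τ → HasDerivAt q (invB2 f (Fint f) (φ τ) * (1 - 1 / τ) / L τ ^ 2) τ := by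
    intro τ hτ
    have hs := hφs τ hτ
    have := qderiv f (Fint f) φ τ (1 - 1 / τ) (hFd τ hτ) (hfd _ hs) (hfd2 _ hs) (hfpos _ hs)
      (hf' _ hs).ne' (by rw [hlogF τ hτ]; linarith [(hall τ hτ).2.2.2.1]) (hφd τ hτ)
    rw [hlogF τ hτ, neg_sq] at this
    exact this
  have hEd : ∀ τ, ρ₁ < τ → HasDerivAt E (E τ * (1 - 1 / τ) * (q τ - 1)) τ := by
    intro τ hτ
    have hs := hφs τ hτ
    exact Ederiv f (Fint f) φ τ (1 - 1 / τ) (hFd τ hτ) (hfd _ hs) (hfpos _ hs) (hφd τ hτ)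
  have hEpos : ∀ τ, ρ₁ < τ → 0 < E τ := fun τ hτ =>
    mul_pos (hfpos _ (hφs τ hτ)) (Fint_pos f s₀ hfpos hfint _ (hφs τ hτ))
  have hqt : Tendsto q atTop (nhds 1) := hf2a.comp hφt
  have hLpos : ∀ τ, ρ₁ < τ → 0 < L τ := fun τ hτ => by linarith [(hall τ hτ).2.2.2.1]
  have hq1 : ∀ τ, ρ₁ < τ → q τ ≤ 1 := by
    have hm : MonotoneOn q (Set.Ioi ρ₁) := by
      apply monotoneOn_of_deriv_nonneg (convex_Ioi ρ₁)
      · intro x hx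
        exact (hqd x hx).continuousAt.continuousWithinAt
      · intro x hx
        rw [interior_Ioi] at hx
        exact (hqd x hx).differentiableAt.differentiableWithinAt
      · intro x hx
        rw [interior_Ioi] at hx
        rw [(hqd x hx).deriv]
        have := (hall x hx).2.1
        have := (hl x hx).1
        positivity
    intro τ hτ
    refine ge_of_tendsto hqt ?_
    filter_upwards [eventually_ge_atTop τ] with x hx
    exact hm hτ (lt_of_lt_of_le hτ hx) hx
  have hLt : Tendsto L atTop atTop := by
    refine tendsto_atTop_mono' atTop ?_ (tendsto_id.atTop_div_const (by norm_num : (0 : ℝ) < 2))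
    filter_upwards [eventually_gt_atTop ρ₁] with x hx
    exact (hall x hx).2.2.2.1
  have hq2 : ∀ τ, ρ₁ < τ → 1 - q τ ≤ 2 / L τ := by
    have hd : ∀ τ, ρ₁ < τ → HasDerivAt (fun τ => q τ + 2 * (L τ)⁻¹)
        ((invB2 f (Fint f) (φ τ) - 2) * (1 - 1 / τ) / L τ ^ 2) τ := by
      intro τ hτ
      have hLd : HasDerivAt L (1 - 1 / τ) τ := L_hasDerivAt B τ hB (by linarith)
      refine ((hqd τ hτ).add ((hLd.inv (hLpos τ hτ).ne').const_mul 2)).congr_deriv ?_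
      ring
    have hm : AntitoneOn (fun τ => q τ + 2 * (L τ)⁻¹) (Set.Ioi ρ₁) := by
      apply antitoneOn_of_deriv_nonpos (convex_Ioi ρ₁)
      · intro x hx
        exact (hd x hx).continuousAt.continuousWithinAt
      · intro x hx
        rw [interior_Ioi] at hx
        exact (hd x hx).differentiableAt.differentiableWithinAt
      · intro x hx
        rw [interior_Ioi] at hx
        rw [(hd x hx).deriv]
        have h1 := (hall x hx).2.2.1
        have h2 := (hl x hx).1
        apply div_nonpos_of_nonpos_of_nonneg _ (by positivity)
        apply mul_nonpos_of_nonpos_of_nonneg _ h2.le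
        linarith
    have ht : Tendsto (fun τ => q τ + 2 * (L τ)⁻¹) atTop (nhds 1) := by
      have := hqt.add (hLt.inv_tendsto_atTop.const_mul 2)
      simpa using this
    intro τ hτ
    have : 1 ≤ q τ + 2 * (L τ)⁻¹ := by
      refine le_of_tendsto ht ?_
      filter_upwards [eventually_ge_atTop τ] with x hx
      exact hm hτ (lt_of_lt_of_le hτ hx) hx
    rw [div_eq_mul_inv]
    linarith
  set P : ℝ → ℝ := fun r => deriv (modelg B) (modelpsi B r) * modelG B (modelpsi B r) with hP
  have hmod := fun τ (hτ : ρ₁ < τ) => model_bounds B τ (L τ) hB (hall τ hτ).1 rfl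
    (hall τ hτ).2.2.2.1 (hall τ hτ).2.2.2.2
  have hB1f : ∀ τ, ρ₁ < τ → invB1 f (Fint f) (φ τ) = L τ * (1 - q τ) := by
    intro τ hτ
    unfold invB1
    rw [hlogF τ hτ, neg_neg]
  have hB1g : ∀ τ, ρ₁ < τ → invB1 (modelg B) (modelG B) (modelpsi B τ) = L τ * (1 - P τ) := by
    intro τ hτ
    unfold invB1
    simp only [hP]
    rw [(modelFacts B τ hB (hall τ hτ).1).hG]
  have he1 : ∀ τ, ρ₁ < τ → eps1 f φ B τ = L τ * |q τ - P τ| := by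
    intro τ hτ
    unfold eps1
    rw [hB1f τ hτ, hB1g τ hτ, ← mul_sub, abs_mul, abs_of_pos (hLpos τ hτ), abs_sub_comm (q τ)]
    congr 2
    ring
  set e : ℝ → ℝ := fun τ => eps1 f φ B τ + eps2 f φ B τ with he
  have he1n : ∀ τ, 0 ≤ eps1 f φ B τ := fun τ => abs_nonneg _
  have he2n : ∀ τ, 0 ≤ eps2 f φ B τ := fun τ => abs_nonneg _
  refine ⟨74 * B, by positivity, ρ₁ + 1, by linarith, ?_⟩
  intro ρ hρ
  have hρ' : ρ₁ < ρ := by linarith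
  have hcore := core E (fun τ => E τ * (1 - 1 / τ) * (q τ - 1)) (fun τ => q τ - P τ)
    (fun τ => invB2 f (Fint f) (φ τ) * (1 - 1 / τ) / L τ ^ 2
      - invB2 (modelg B) (modelG B) (modelpsi B τ) * (1 - 1 / τ) / L τ ^ 2) e B ρ₁ ρ 200 hB
    (by linarith) hρ' hEd (fun τ hτ => (hqd τ hτ).sub (hmod τ hτ).1) hEpos
    (fun τ hτ => mul_nonpos_of_nonneg_of_nonpos
      (mul_nonneg (hEpos τ hτ).le (hl τ hτ).1.le) (by linarith [hq1 τ hτ]))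
    (by
      intro τ hτ
      have hτ0 : 0 < τ := by linarith
      have a1 : 1 - q τ ≤ 4 / τ := by
        refine (hq2 τ hτ).trans ?_
        rw [div_le_div_iff₀ (hLpos τ hτ) hτ0]
        linarith [(hall τ hτ).2.2.2.1]
      have a2 := hq1 τ hτ
      have a3 := hEpos τ hτ
      have a4 : E τ * (1 - 1 / τ) * (1 - q τ) ≤ E τ * 1 * (4 / τ) := by
        have := (hl τ hτ).2
        gcongr
      have a5 : E τ * 1 * (4 / τ) = 4 * E τ / τ := by ring
      linarith)
    (by
      intro τ hτ
      have hτ0 : 0 < τ := by linarith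
      have a1 := he1 τ hτ
      have a2 := he2n τ
      have a3 := (hall τ hτ).2.2.2.1
      rw [le_div_iff₀ hτ0]
      simp only [he]
      nlinarith [abs_nonneg (q τ - P τ)])
    (by
      intro τ hτ
      have hτ0 : 0 < τ := by linarith
      have a3 := (hall τ hτ).2.2.2.1
      have a4 := hLpos τ hτ
      have a5 := hl τ hτ
      rw [← sub_div, ← sub_mul, abs_div, abs_mul, abs_of_pos a5.1, abs_of_pos (pow_pos a4 2)]
      change eps2 f φ B τ * (1 - 1 / τ) / L τ ^ 2 ≤ _
      have a6 := he2n τ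
      calc _ ≤ eps2 f φ B τ * 1 / (τ / 2) ^ 2 := by
            gcongr
            exact a5.2
        _ = 4 * eps2 f φ B τ / τ ^ 2 := by field_simp; ring
        _ ≤ _ := by
          gcongr
          simp only [he]
          linarith [he1n τ])
    (fun τ hτ => add_nonneg (he1n τ) (he2n τ))
    (by
      intro τ hτ
      have b1 : eps1 f φ B τ ≤ 2 + 16 := by
        unfold eps1
        refine (abs_sub _ _).trans (add_le_add ?_ (hmod τ hτ).2.2)
        have a4 := hLpos τ hτ
        have := hq2 τ hτ
        rw [le_div_iff₀ a4] at this
        have h1 := hq1 τ hτ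
        rw [hB1f τ hτ, abs_of_nonneg (mul_nonneg a4.le (by linarith))]
        linarith
      have b2 : eps2 f φ B τ ≤ 2 + 128 := by
        unfold eps2
        refine (abs_sub _ _).trans (add_le_add ?_ (hmod τ hτ).2.1)
        rw [abs_of_pos (hall τ hτ).2.1]
        exact (hall τ hτ).2.2.1.le
      simp only [he]
      linarith)
  have hI : (∫ τ in Set.Ioi ρ, (ρ * τ) ^ ((1 : ℝ) / 4)
          * Real.sin ((2 / Real.sqrt B) * (ρ ^ ((1 : ℝ) / 2) - τ ^ ((1 : ℝ) / 2)))
          * Ifun f φ B τ) = ∫ τ in Set.Ioi ρ, (ρ * τ) ^ ((1 : ℝ) / 4)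
          * Real.sin ((2 / Real.sqrt B) * (ρ ^ ((1 : ℝ) / 2) - τ ^ ((1 : ℝ) / 2)))
          * (E τ * (1 - 1 / τ) ^ 2 * (q τ - P τ)) := by
    apply setIntegral_congr_fun measurableSet_Ioi
    intro τ hτ
    have hτ1 : ρ₁ < τ := hρ'.trans hτ
    have mf := modelFacts B τ hB (hall τ hτ1).1
    have hGpos : 0 < modelG B (modelpsi B τ) := by
      rw [mf.hG]
      have : 0 < τ := by linarith
      positivity
    have hgpos := mf.hgpos
    simp only
    congr 1
    unfold Ifun
    rw [mf.hpsi.deriv]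
    simp only [hE, hq, hP]
    congr 2
    field_simp
  rw [hI]
  refine hcore.trans (le_of_eq ?_)
  simp only [hE, he]
  ring
end

section
/- Let q > 1 and r ∈ ℝ, and set F(s) := ∫_s^∞ τ^{−r}·e^{−τ^q} dτ for s > 0. There exists s₁ > 1 such that F is a strictly decreasing continuous bijection from [s₁,∞) onto (0, F(s₁)]; let F⁻¹ denote its inverse. Then there exist C > 0 and w₀ ∈ (0, F(s₁)) such that for all 0 < w < w₀: | F⁻¹(w) − ( −log w − ((q+r−1)/q)·log(−log w) + log(1/q) )^{1/q} | ≤ C · log(−log w) / (−log w)^{2 − 1/q}. -/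
open MeasureTheory

/-- `F(s) = ∫_s^∞ τ^{−r} e^{−τ^q} dτ`, the function `F` associated with
`f(s) = s^r e^{s^q}`. -/
noncomputable def F14 (q r s : ℝ) : ℝ := ∫ τ in Set.Ioi s, τ ^ (-r) * Real.exp (-(τ ^ q))

open Filter

lemma rpow_sub_le {p x y : ℝ} (hp : p ≤ 1) (hx : 0 < x) (hxy : x ≤ y) :
    y ^ p - x ^ p ≤ x ^ (p - 1) * (y - x) := by
  have h1 : (y / x) ^ p ≤ y / x := by
    calc (y / x) ^ p ≤ (y / x) ^ (1:ℝ) :=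
          Real.rpow_le_rpow_of_exponent_le ((one_le_div hx).2 hxy) hp
      _ = y / x := Real.rpow_one _
  have h2 : y ^ p = x ^ p * (y / x) ^ p := by
    rw [← Real.mul_rpow hx.le (by have := hx.trans_le hxy; positivity)]
    congr 1; field_simp
  have h3 : x ^ (p - 1) = x ^ p / x := by rw [Real.rpow_sub hx, Real.rpow_one]
  have h4 : 0 ≤ x ^ p := Real.rpow_nonneg hx.le _
  rw [h2, h3]
  have h5 := mul_le_mul_of_nonneg_left h1 h4
  have h6 : x ^ p / x * (y - x) = x ^ p * (y / x) - x ^ p := by field_simp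
  linarith

lemma abs_rpow_sub_le {p m x y : ℝ} (hp0 : 0 ≤ p) (hp : p ≤ 1) (hm : 0 < m) (hx : m ≤ x) (hy : m ≤ y) :
    |x ^ p - y ^ p| ≤ m ^ (p - 1) * |x - y| := by
  have key : ∀ x y : ℝ, m ≤ x → x ≤ y → |x ^ p - y ^ p| ≤ m ^ (p - 1) * |x - y| := by
    intro x y hx hxy
    have h0 := hm.trans_le hx
    have h1 := rpow_sub_le hp h0 hxy
    have h2 : x ^ p ≤ y ^ p := Real.rpow_le_rpow h0.le hxy hp0
    have h3 : x ^ (p - 1) ≤ m ^ (p - 1) :=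
      Real.rpow_le_rpow_of_nonpos hm hx (by linarith)
    rw [abs_sub_comm, abs_of_nonneg (by linarith), abs_sub_comm, abs_of_nonneg (by linarith)]
    exact h1.trans (mul_le_mul_of_nonneg_right h3 (by linarith))
  rcases le_total x y with h | h
  · exact key x y hx h
  · rw [abs_sub_comm, abs_sub_comm x]
    exact key y x hy h

lemma abs_log_sub_le {m x y : ℝ} (hm : 0 < m) (hx : m ≤ x) (hy : m ≤ y) :
    |Real.log x - Real.log y| ≤ |x - y| / m := by
  have key : ∀ x y : ℝ, m ≤ x → m ≤ y → Real.log x - Real.log y ≤ |x - y| / m := by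
    intro x y hx hy
    have hx0 := hm.trans_le hx
    have hy0 := hm.trans_le hy
    rw [← Real.log_div hx0.ne' hy0.ne']
    have := Real.log_le_sub_one_of_pos (div_pos hx0 hy0)
    have h2 : x / y - 1 = (x - y) / y := by field_simp
    have h3 : (x - y) / y ≤ |x - y| / y := div_le_div_of_nonneg_right (le_abs_self _) hy0.le
    have h4 : |x - y| / y ≤ |x - y| / m := div_le_div_of_nonneg_left (abs_nonneg _) hm hy
    linarith
  rw [abs_le]
  have := key x y hx hy
  have h2 := key y x hy hx
  rw [abs_sub_comm] at h2
  constructor <;> linarith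

lemma lemA (a b K p : ℝ) (hK : 0 < K) (hp0 : 0 ≤ p) (hp : p ≤ 1) :
    ∃ C > 0, ∃ X₀ : ℝ, ∀ X ≥ X₀, ∀ L : ℝ, |L - X - a * Real.log X - b| ≤ K / X →
      |X ^ p - (L - a * Real.log L - b) ^ p| ≤ C * Real.log L / L ^ (2 - p) := by
  set N : ℝ := |a| + |b| + K with hN
  have hN0 : 0 < N := by positivity
  set M : ℝ := |a| * (2 * N) + K with hM
  have hM0 : 0 < M := by positivity
  have ev : ∀ c > 0, ∀ᶠ X : ℝ in atTop, c * Real.log X ≤ X / 2 := by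
    intro c hc
    have := Real.isLittleO_log_id_atTop.bound (c := 1 / (2 * c)) (by positivity)
    filter_upwards [this, eventually_ge_atTop 1] with X h h1
    simp only [id, Real.norm_eq_abs] at h
    rw [abs_of_nonneg (Real.log_nonneg h1), abs_of_nonneg (by linarith)] at h
    calc c * Real.log X ≤ c * (1 / (2 * c) * X) := mul_le_mul_of_nonneg_left h hc.le
      _ = X / 2 := by field_simp
  have evl : ∀ᶠ X : ℝ in atTop, 1 ≤ Real.log X := Real.tendsto_log_atTop.eventually_ge_atTop 1
  obtain ⟨X₀, hX₀⟩ := eventually_atTop.1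
    ((((ev N hN0).and (ev M hM0)).and evl).and (eventually_ge_atTop (4:ℝ)))
  refine ⟨(1/2) ^ (p - 1) * M * (1/2) ^ (p - 2) * 2, by positivity, X₀, ?_⟩
  intro X hX L hL
  obtain ⟨⟨⟨hNX, hMX⟩, hl⟩, h4⟩ := hX₀ X hX
  set l := Real.log X with hldef
  have hX0 : 0 < X := by linarith
  have hKX : K / X ≤ K := div_le_self hK.le (by linarith)
  have hal : |a * l| = |a| * l := by rw [abs_mul, abs_of_nonneg (by linarith : 0 ≤ l)]
  have hLX : |L - X| ≤ N * l := by
    have e : L - X = (L - X - a * l - b) + a * l + b := by ring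
    have t1 := abs_add_three (L - X - a * l - b) (a * l) b
    rw [← e, hal] at t1
    have : |b| ≤ |b| * l := le_mul_of_one_le_right (abs_nonneg _) hl
    have : K ≤ K * l := le_mul_of_one_le_right hK.le hl
    rw [hN]; nlinarith
  have hLX' := abs_le.1 (hLX.trans hNX)
  have hL1 : X / 2 ≤ L := by linarith [hLX'.1]
  have hL2 : L ≤ 2 * X := by linarith [hLX'.2]
  have hL0 : 0 < L := by linarith
  set Y := L - a * Real.log L - b with hY
  have hlog : |l - Real.log L| ≤ N * l / (X / 2) := by
    have := abs_log_sub_le (m := X / 2) (by linarith) (by linarith : X / 2 ≤ X) hL1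
    rw [abs_sub_comm X] at this
    exact this.trans (div_le_div_of_nonneg_right hLX (by linarith))
  have hXY : |X - Y| ≤ M * l / X := by
    have e : X - Y = -((L - X - a * l - b) + a * (l - Real.log L)) := by rw [hY]; ring
    rw [e, abs_neg]
    refine (abs_add_le _ _).trans ?_
    rw [abs_mul]
    have h1 := mul_le_mul_of_nonneg_left hlog (abs_nonneg a)
    have h2 : K / X ≤ K * l / X :=
      div_le_div_of_nonneg_right (le_mul_of_one_le_right hK.le hl) hX0.le
    have h3 : M * l / X = |a| * (N * l / (X / 2)) + K * l / X := by rw [hM]; field_simp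
    linarith
  have hXY2 : |X - Y| ≤ X / 2 := by
    refine hXY.trans ((div_le_self (by positivity) (by linarith)).trans hMX)
  have hY1 : X / 2 ≤ Y := by linarith [(abs_le.1 hXY2).2]
  have h1 := abs_rpow_sub_le hp0 hp (by linarith) (by linarith : X / 2 ≤ X) hY1
  have h2 : (X / 2) ^ (p - 1) * |X - Y| ≤ (X / 2) ^ (p - 1) * (M * l / X) :=
    mul_le_mul_of_nonneg_left hXY (by positivity)
  have h3 : (X / 2) ^ (p - 1) * (M * l / X) = (1/2) ^ (p - 1) * M * l * X ^ (p - 2) := by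
    rw [show X / 2 = (1/2) * X by ring, Real.mul_rpow (by norm_num) hX0.le,
      show p - 1 = (p - 2) + 1 by ring, Real.rpow_add hX0, Real.rpow_one]
    field_simp
  have h5 : X ^ (p - 2) ≤ (1/2) ^ (p - 2) * L ^ (p - 2) := by
    rw [← Real.mul_rpow (by norm_num) hL0.le]
    exact Real.rpow_le_rpow_of_nonpos (by linarith) (by linarith) (by linarith)
  have h6 : l ≤ 2 * Real.log L := by
    rw [hldef, show 2 * Real.log L = Real.log (L ^ 2) by rw [Real.log_pow]; norm_num]
    exact Real.log_le_log hX0 (by nlinarith)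
  have h7 : l * X ^ (p - 2) ≤ (2 * Real.log L) * ((1/2) ^ (p - 2) * L ^ (p - 2)) :=
    mul_le_mul h6 h5 (by positivity) (by linarith)
  have h8 : L ^ (p - 2) = (L ^ (2 - p))⁻¹ := by
    rw [← Real.rpow_neg hL0.le]; congr 1; ring
  calc _ ≤ (1/2) ^ (p - 1) * M * (l * X ^ (p - 2)) := by
        rw [← mul_assoc]; linarith
    _ ≤ (1/2) ^ (p - 1) * M * ((2 * Real.log L) * ((1/2) ^ (p - 2) * L ^ (p - 2))) :=
        mul_le_mul_of_nonneg_left h7 (by positivity)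
    _ = _ := by rw [h8]; ring

lemma g_int (t q : ℝ) (hq : 1 < q) {s : ℝ} (hs : 1 ≤ s) :
    IntegrableOn (fun τ : ℝ => τ ^ t * Real.exp (-(τ ^ q))) (Set.Ioi s) := by
  have h := (integrableOn_rpow_mul_exp_neg_rpow (p := q) (s := max t 0)
    (by have := le_max_right t 0; linarith) (by linarith)).mono_set
    (Set.Ioi_subset_Ioi (by linarith : (0:ℝ) ≤ s))
  refine Integrable.mono' h ?_ ?_
  · refine ContinuousOn.aestronglyMeasurable ?_ measurableSet_Ioi
    intro x hx
    have hx0 : x ≠ 0 := by have : s < x := hx; linarith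
    have h1 := Real.continuousAt_rpow_const x t (Or.inl hx0)
    have h2 := Real.continuousAt_rpow_const x q (Or.inl hx0)
    exact (h1.mul (Real.continuous_exp.continuousAt.comp h2.neg)).continuousWithinAt
  · refine (ae_restrict_iff' measurableSet_Ioi).2 (Eventually.of_forall fun x hx => ?_)
    have hx0 : s < x := hx
    have : 0 < x := by linarith
    rw [Real.norm_of_nonneg (by positivity)]
    exact mul_le_mul_of_nonneg_right
      (Real.rpow_le_rpow_of_exponent_le (by linarith) (le_max_left _ _)) (Real.exp_pos _).le

lemma F_sub (q r : ℝ) (hq : 1 < q) {s t : ℝ} (hs : 1 ≤ s) (hst : s < t) :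
    F14 q r t < F14 q r s := by
  have h := intervalIntegral.integral_Ioi_sub_Ioi (g_int (-r) q hq hs) hst.le
  have h2 : 0 < ∫ x in s..t, x ^ (-r) * Real.exp (-(x ^ q)) := by
    apply intervalIntegral.intervalIntegral_pos_of_pos_on _ _ hst
    · rw [intervalIntegrable_iff_integrableOn_Ioc_of_le hst.le]
      exact (g_int (-r) q hq hs).mono_set Set.Ioc_subset_Ioi_self
    · intro x hx
      have : 0 < x := by linarith [hx.1]
      positivity
  unfold F14
  linarith

lemma F_pos (q r : ℝ) (hq : 1 < q) {s : ℝ} (hs : 1 ≤ s) : 0 < F14 q r s := by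
  have h := F_sub q r hq hs (lt_add_one s)
  refine lt_of_le_of_lt ?_ h
  refine setIntegral_nonneg measurableSet_Ioi fun x hx => ?_
  have hx0 : s + 1 < x := hx
  have : 0 < x := by linarith
  positivity

lemma F_approx (q r : ℝ) (hq : 1 < q) {s : ℝ} (hs : 1 ≤ s) :
    |s ^ (1 - r - q) * Real.exp (-(s ^ q)) / q - F14 q r s| ≤
      |q + r - 1| / q * s ^ (-q) * F14 q r s := by
  have hq0 : 0 < q := by linarith
  set c := (q + r - 1) / q with hc
  set G : ℝ → ℝ := fun x => x ^ (1 - r - q) * Real.exp (-(x ^ q)) / q with hG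
  set g : ℝ → ℝ := fun x => x ^ (-r) * Real.exp (-(x ^ q)) with hg
  set k : ℝ → ℝ := fun x => x ^ (-r - q) * Real.exp (-(x ^ q)) with hk
  have ig : IntegrableOn g (Set.Ioi s) := g_int _ q hq hs
  have ik : IntegrableOn k (Set.Ioi s) := g_int _ q hq hs
  have iG : IntegrableOn G (Set.Ioi s) := (g_int (1 - r - q) q hq hs).div_const q
  have hd : ∀ x ∈ Set.Ici s, HasDerivAt G (-(g x + c * k x)) x := by
    intro x hx
    have hsx : s ≤ x := hx
    have hx0 : 0 < x := by linarith
    have h1 := Real.hasDerivAt_rpow_const (x := x) (p := 1 - r - q) (Or.inl hx0.ne')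
    have h2 := (Real.hasDerivAt_rpow_const (x := x) (p := q) (Or.inl hx0.ne')).neg.exp
    have h3 := (h1.mul h2).div_const q
    refine h3.congr_deriv ?_
    simp only [hg, hk, hc, Pi.neg_apply]
    have e1 : x ^ (-r) = x ^ (1 - r - q) * x ^ (q - 1) := by
      rw [← Real.rpow_add hx0]; congr 1; ring
    rw [e1, show 1 - r - q - 1 = -r - q by ring]
    field_simp
    ring
  have id' : IntegrableOn (fun x => -(g x + c * k x)) (Set.Ioi s) :=
    (ig.add (ik.const_mul c)).neg
  have hlim : Tendsto G atTop (nhds 0) :=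
    tendsto_zero_of_hasDerivAt_of_integrableOn_Ioi
      (fun x hx => hd x (Set.Ioi_subset_Ici_self hx)) id' iG
  have hI := integral_Ioi_of_hasDerivAt_of_tendsto' hd id' hlim
  rw [integral_neg, integral_add ig (ik.const_mul c), integral_const_mul] at hI
  have hF : F14 q r s = ∫ x in Set.Ioi s, g x := rfl
  have hGF : G s - F14 q r s = c * ∫ x in Set.Ioi s, k x := by rw [hF]; linarith
  have hk0 : 0 ≤ ∫ x in Set.Ioi s, k x := by
    refine setIntegral_nonneg measurableSet_Ioi fun x hx => ?_
    have hx0 : s < x := hx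
    have : 0 < x := by linarith
    simp only [hk]; positivity
  have hk1 : ∫ x in Set.Ioi s, k x ≤ s ^ (-q) * F14 q r s := by
    rw [hF, ← integral_const_mul]
    refine setIntegral_mono_on ik (ig.const_mul _) measurableSet_Ioi fun x hx => ?_
    have hx0 : s < x := hx
    have hx1 : 0 < x := by linarith
    simp only [hk, hg]
    rw [← mul_assoc, show -r - q = -q + -r by ring, Real.rpow_add hx1]
    have : x ^ (-q) ≤ s ^ (-q) :=
      Real.rpow_le_rpow_of_nonpos (by linarith) hx0.le (by linarith)
    gcongr
  change |G s - F14 q r s| ≤ _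
  rw [hGF, abs_mul, abs_of_nonneg hk0, hc, abs_div, abs_of_pos hq0, mul_assoc]
  exact mul_le_mul_of_nonneg_left hk1 (by positivity)

lemma F_tendsto (q r : ℝ) (hq : 1 < q) : Tendsto (F14 q r) atTop (nhds 0) := by
  have h := intervalIntegral_tendsto_integral_Ioi 1 (g_int (-r) q hq le_rfl) tendsto_id
  have h2 := (tendsto_const_nhds (x := F14 q r 1)).sub h
  have h3 : F14 q r 1 - ∫ x in Set.Ioi (1:ℝ), x ^ (-r) * Real.exp (-(x ^ q)) = 0 := sub_self _
  rw [h3] at h2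
  refine h2.congr' ?_
  filter_upwards [eventually_ge_atTop 1] with s hs
  have h := intervalIntegral.integral_Ioi_sub_Ioi (g_int (-r) q hq le_rfl) hs
  simp only [id]
  rw [← h]; unfold F14; ring

/-- log form -/
lemma logF (q r : ℝ) (hq : 1 < q) : ∃ K > 0, ∃ S : ℝ, ∀ s ≥ S,
    |-Real.log (F14 q r s) - s ^ q - ((q + r - 1) / q) * Real.log (s ^ q) - Real.log q|
      ≤ K / s ^ q := by
  have hq0 : 0 < q := by linarith
  set K := |q + r - 1| / q + 1 with hK
  have hK0 : 0 < K := by positivity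
  have ev : ∀ᶠ s : ℝ in atTop, 2 * K ≤ s ^ q := (tendsto_rpow_atTop hq0).eventually_ge_atTop _
  obtain ⟨S, hS⟩ := eventually_atTop.1 (ev.and (eventually_ge_atTop 1))
  refine ⟨2 * K, by positivity, S, fun s hs => ?_⟩
  obtain ⟨h1, h2⟩ := hS s hs
  have hs0 : 0 < s := by linarith
  have hX : 0 < s ^ q := by positivity
  have hF := F_pos q r hq h2
  have hA := F_approx q r hq h2
  set F := F14 q r s
  set G := s ^ (1 - r - q) * Real.exp (-(s ^ q)) / q with hG
  have hG0 : 0 < G := by positivity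
  have hlG : Real.log G = (1 - r - q) * Real.log s - s ^ q - Real.log q := by
    rw [hG, Real.log_div (by positivity) hq0.ne', Real.log_mul (by positivity) (by positivity),
      Real.log_rpow hs0, Real.log_exp]; ring
  have e : -Real.log F - s ^ q - ((q + r - 1) / q) * Real.log (s ^ q) - Real.log q
      = Real.log G - Real.log F := by
    rw [hlG, Real.log_rpow hs0]; field_simp; ring
  rw [e]
  have hA' : |G - F| ≤ K / s ^ q * F := by
    refine hA.trans ?_
    rw [Real.rpow_neg hs0.le, ← div_eq_mul_inv]
    gcongr
    linarith
  have h3 : K / s ^ q ≤ 1 / 2 := by rw [div_le_iff₀ hX]; linarith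
  have h4 : F / 2 ≤ G := by
    have := (abs_le.1 hA').1
    nlinarith
  refine (abs_log_sub_le (by linarith) h4 (by linarith : F / 2 ≤ F)).trans ?_
  rw [div_le_iff₀ (by linarith)]
  calc _ ≤ _ := hA'
    _ = _ := by ring

/-- Asymptotic expansion (3.4) of `F⁻¹` near `0` for `f(s) = s^r e^{s^q}`. -/
theorem stmt14 (q r : ℝ) (hq : 1 < q) :
    ∃ s₁ > (1 : ℝ),
      StrictAntiOn (F14 q r) (Set.Ici s₁) ∧
      ContinuousOn (F14 q r) (Set.Ici s₁) ∧
      Set.BijOn (F14 q r) (Set.Ici s₁) (Set.Ioc 0 (F14 q r s₁)) ∧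
      ∃ Finv : ℝ → ℝ,
        (∀ w ∈ Set.Ioc (0 : ℝ) (F14 q r s₁), Finv w ∈ Set.Ici s₁ ∧ F14 q r (Finv w) = w) ∧
        ∃ C > (0 : ℝ), ∃ w₀ ∈ Set.Ioo (0 : ℝ) (F14 q r s₁), ∀ w ∈ Set.Ioo (0 : ℝ) w₀,
          |Finv w - (-Real.log w - ((q + r - 1) / q) * Real.log (-Real.log w)
              + Real.log (1 / q)) ^ (1 / q)|
            ≤ C * Real.log (-Real.log w) / (-Real.log w) ^ (2 - 1 / q) := by
  have hq0 : 0 < q := by linarith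
  have hanti : StrictAntiOn (F14 q r) (Set.Ici 2) := fun x hx y _ hxy =>
    F_sub q r hq (by have : (2:ℝ) ≤ x := hx; linarith) hxy
  have hcont : ContinuousOn (F14 q r) (Set.Ici 2) :=
    (g_int (-r) q hq (by norm_num : (1:ℝ) ≤ 2)).continuousOn_Ici_primitive_Ioi
  have hsurj : Set.SurjOn (F14 q r) (Set.Ici 2) (Set.Ioc 0 (F14 q r 2)) := by
    intro w hw
    obtain ⟨t, ht, ht2⟩ := (((F_tendsto q r hq).eventually_lt_const hw.1).and
      (eventually_ge_atTop 2)).exists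
    obtain ⟨x, hx, hxw⟩ := intermediate_value_Icc' ht2
      (hcont.mono Set.Icc_subset_Ici_self) ⟨ht.le, hw.2⟩
    exact ⟨x, hx.1, hxw⟩
  have hmaps : Set.MapsTo (F14 q r) (Set.Ici 2) (Set.Ioc 0 (F14 q r 2)) := by
    intro x hx
    have h2 : (2:ℝ) ≤ x := hx
    exact ⟨F_pos q r hq (by linarith), hanti.antitoneOn (Set.self_mem_Ici) hx h2⟩
  refine ⟨2, by norm_num, hanti, hcont, ⟨hmaps, hanti.injOn, hsurj⟩,
    Function.invFunOn (F14 q r) (Set.Ici 2), ?_, ?_⟩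
  · intro w hw
    have := hsurj hw
    exact ⟨Function.invFunOn_mem this, Function.invFunOn_eq this⟩
  obtain ⟨K, hK, S, hS⟩ := logF q r hq
  obtain ⟨C, hC, X₀, hX₀⟩ := lemA ((q + r - 1) / q) (Real.log q) K (1 / q) hK
    (by positivity) (by rw [div_le_iff₀ hq0]; linarith)
  obtain ⟨T, hT⟩ := eventually_atTop.1 (((tendsto_rpow_atTop hq0).eventually_ge_atTop X₀).and
    ((eventually_ge_atTop S).and (eventually_gt_atTop 2)))
  have hT2 : 2 < T := (hT T le_rfl).2.2
  refine ⟨C, hC, F14 q r T, ⟨F_pos q r hq (by linarith), F_sub q r hq (by norm_num) hT2⟩, ?_⟩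
  intro w hw
  have hw' : w ∈ Set.Ioc 0 (F14 q r 2) :=
    ⟨hw.1, hw.2.le.trans (F_sub q r hq (by norm_num) hT2).le⟩
  have hm : Function.invFunOn (F14 q r) (Set.Ici 2) w ∈ Set.Ici 2 :=
    Function.invFunOn_mem (hsurj hw')
  have he : F14 q r (Function.invFunOn (F14 q r) (Set.Ici 2) w) = w :=
    Function.invFunOn_eq (hsurj hw')
  set s := Function.invFunOn (F14 q r) (Set.Ici 2) w
  have hsT : T ≤ s := by
    by_contra! hlt
    have := hanti hm hT2.le hlt
    rw [he] at this
    linarith [hw.2]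
  obtain ⟨a1, a2, a3⟩ := hT s hsT
  have h := hS s a2
  rw [he] at h
  have h' := hX₀ (s ^ q) a1 (-Real.log w) h
  rw [← Real.rpow_mul (by linarith), mul_one_div_cancel hq0.ne', Real.rpow_one] at h'
  rw [one_div q, Real.log_inv, ← sub_eq_add_neg, ← one_div q]
  exact h'
end

section
/- Let q > 1 and r ∈ ℝ, and let f(s) := s^r·e^{s^q} for s > 0. Then there exist C > 0 and s₁ > 1 such that for all s ≥ s₁: | 1/B₁[f](s) − (1 − 1/q) | ≤ C·(log s)/s^q and | 1/B₂[f](s) − (1 − 1/q) | ≤ C·(log s)/s^q. -/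
open MeasureTheory Filter

lemma auxInt (q p s : ℝ) (hq : 1 < q) (hs : 1 ≤ s) :
    IntegrableOn (fun τ : ℝ => τ ^ p * Real.exp (-τ ^ q)) (Set.Ioi s) := by
  have h0 : IntegrableOn (fun τ : ℝ => τ ^ (max p 0) * Real.exp (-τ ^ q)) (Set.Ioi s) := by
    refine (integrableOn_rpow_mul_exp_neg_rpow (p := q) (s := max p 0) ?_ (by linarith)).mono_set ?_
    · have := le_max_right p 0
      linarith
    · exact Set.Ioi_subset_Ioi (by linarith)
  refine h0.mono' ?_ ?_
  · refine ContinuousOn.aestronglyMeasurable ?_ measurableSet_Ioi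
    intro x hx
    have hx0 : x ≠ 0 := by
      have : s < x := hx
      linarith
    refine ContinuousAt.continuousWithinAt ?_
    have h1 : ContinuousAt (fun τ : ℝ => τ ^ p) x := Real.continuousAt_rpow_const x p (Or.inl hx0)
    have h2 : ContinuousAt (fun τ : ℝ => τ ^ q) x := Real.continuousAt_rpow_const x q (Or.inl hx0)
    exact h1.mul (h2.neg.rexp)
  · refine (ae_restrict_iff' measurableSet_Ioi).2 (Eventually.of_forall ?_)
    intro x hx
    have hx1 : s < x := hx
    have hx0 : 0 < x := by linarith
    rw [Real.norm_of_nonneg (by positivity)]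
    gcongr
    · linarith
    · exact le_max_left _ _

lemma auxDeriv (q p c s : ℝ) (hs : 0 < s) :
    HasDerivAt (fun τ : ℝ => τ ^ p * Real.exp (c * τ ^ q))
      (p * (s ^ (p - 1) * Real.exp (c * s ^ q)) + c * q * (s ^ (p + q - 1) * Real.exp (c * s ^ q))) s := by
  have h1 := Real.hasDerivAt_rpow_const (x := s) (p := p) (Or.inl hs.ne')
  have h2 := Real.hasDerivAt_rpow_const (x := s) (p := q) (Or.inl hs.ne')
  refine (h1.mul ((h2.const_mul c).exp)).congr_deriv ?_
  rw [show p + q - 1 = p + (q - 1) by ring, Real.rpow_add hs]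
  ring

lemma auxTend (q p : ℝ) (hq : 1 < q) :
    Tendsto (fun τ : ℝ => τ ^ p * Real.exp (-τ ^ q)) atTop (nhds 0) := by
  have h := (tendsto_rpow_mul_exp_neg_mul_atTop_nhds_zero (p / q) 1 one_pos).comp
    (tendsto_rpow_atTop (y := q) (by linarith))
  refine h.congr' ?_
  filter_upwards [eventually_gt_atTop 0] with x hx
  simp only [Function.comp]
  rw [← Real.rpow_mul hx.le, mul_div_cancel₀ _ (by linarith : q ≠ 0)]
  simp

noncomputable def auxJ (q p s : ℝ) : ℝ := ∫ τ in Set.Ioi s, τ ^ p * Real.exp (-τ ^ q)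

lemma auxIBP (q p s : ℝ) (hq : 1 < q) (hs : 1 ≤ s) :
    q * auxJ q (p + q - 1) s - p * auxJ q (p - 1) s = s ^ p * Real.exp (-s ^ q) := by
  have hd : ∀ x ∈ Set.Ici s, HasDerivAt (fun τ : ℝ => τ ^ p * Real.exp (-τ ^ q))
      (p * (x ^ (p - 1) * Real.exp (-x ^ q)) - q * (x ^ (p + q - 1) * Real.exp (-x ^ q))) x := by
    intro x hx
    have hx1 : s ≤ x := hx
    have := auxDeriv q p (-1) x (by linarith)
    simp only [neg_mul, one_mul] at this
    refine this.congr_deriv ?_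
    ring
  have i1 := (auxInt q (p - 1) s hq hs).const_mul p
  have i2 := (auxInt q (p + q - 1) s hq hs).const_mul q
  have := integral_Ioi_of_hasDerivAt_of_tendsto' hd (i1.sub i2) (auxTend q p hq)
  rw [integral_sub i1 i2, integral_const_mul, integral_const_mul] at this
  unfold auxJ
  linarith

lemma auxJ_nonneg (q p s : ℝ) (hs : 1 ≤ s) : 0 ≤ auxJ q p s := by
  refine setIntegral_nonneg measurableSet_Ioi ?_
  intro x hx
  have hx1 : s < x := hx
  have hx0 : 0 < x := by linarith
  positivity

lemma auxJ_le (q p a s : ℝ) (hq : 1 < q) (ha : 0 ≤ a) (hs : 1 ≤ s) :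
    auxJ q (p - a) s ≤ s ^ (-a) * auxJ q p s := by
  unfold auxJ
  rw [← integral_const_mul]
  refine setIntegral_mono_on (auxInt q _ s hq hs) ((auxInt q p s hq hs).const_mul _)
    measurableSet_Ioi ?_
  intro x hx
  have hx1 : s < x := hx
  have hx0 : 0 < x := by linarith
  rw [sub_eq_add_neg, Real.rpow_add hx0]
  have : x ^ (-a) ≤ s ^ (-a) := Real.rpow_le_rpow_of_nonpos (by linarith) hx1.le (by linarith)
  have h2 : 0 ≤ x ^ p * Real.exp (-x ^ q) := by positivity
  nlinarith [mul_le_mul_of_nonneg_right this h2]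

/-- normalized -/
noncomputable def auxPhi (q r n s : ℝ) : ℝ :=
  s ^ (r - 1) * Real.exp (s ^ q) * auxJ q (-r - n * q) s

lemma auxPhi_rec (q r n s : ℝ) (hq : 1 < q) (hs : 1 ≤ s) :
    q * auxPhi q r (n - 1) s + (n * q + r - 1) * auxPhi q r n s = (s ^ q) ^ (-n) := by
  have h := auxIBP q (1 - r - n * q) s hq hs
  have hs0 : 0 < s := by linarith
  unfold auxPhi
  have e1 : -r - (n - 1) * q = 1 - r - n * q + q - 1 := by ring
  have e2 : -r - n * q = 1 - r - n * q - 1 := by ring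
  rw [e1, e2]
  have e3 : (s ^ q) ^ (-n) = s ^ (r - 1) * Real.exp (s ^ q) * (s ^ (1 - r - n * q) * Real.exp (-s ^ q)) := by
    rw [← Real.rpow_mul hs0.le, show q * -n = (r - 1) + (1 - r - n * q) by ring, Real.rpow_add hs0,
      Real.exp_neg]
    field_simp
  rw [e3, ← h]
  ring

/-- expansion -/
lemma auxExp (q r s : ℝ) (hq : 1 < q) (hs : 1 ≤ s) :
    ∃ t, 0 ≤ t ∧ t ≤ (s ^ q)⁻¹ ^ 3 * auxPhi q r 0 s ∧
    q * auxPhi q r 0 s = (s ^ q)⁻¹ - (q + r - 1) / q * (s ^ q)⁻¹ ^ 2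
      + (q + r - 1) * (2 * q + r - 1) / q ^ 2 * (s ^ q)⁻¹ ^ 3
      - (q + r - 1) * (2 * q + r - 1) * (3 * q + r - 1) / q ^ 2 * t := by
  have hs0 : 0 < s := by linarith
  have hu : 0 < s ^ q := by positivity
  have h1 := auxPhi_rec q r 1 s hq hs
  have h2 := auxPhi_rec q r 2 s hq hs
  have h3 := auxPhi_rec q r 3 s hq hs
  norm_num at h1 h2 h3
  have g2 : (s ^ q) ^ (-2 : ℝ) = (s ^ q)⁻¹ ^ 2 := by
    rw [Real.rpow_neg hu.le, inv_pow]; norm_cast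
  have g3 : (s ^ q) ^ (-3 : ℝ) = (s ^ q)⁻¹ ^ 3 := by
    rw [Real.rpow_neg hu.le, inv_pow]; norm_cast
  have g1 : (s ^ q) ^ (-1 : ℝ) = (s ^ q)⁻¹ := by
    rw [Real.rpow_neg hu.le]; simp
  rw [← inv_pow] at h2 h3
  rw [g1] at h1
  refine ⟨auxPhi q r 3 s, ?_, ?_, ?_⟩
  · unfold auxPhi
    have := auxJ_nonneg q (-r - 3 * q) s hs
    positivity
  · have := auxJ_le q (-r) (3 * q) s hq (by linarith) hs
    have e : s ^ (-(3 * q)) = (s ^ q)⁻¹ ^ 3 := by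
      rw [← g3, ← Real.rpow_mul hs0.le]; congr 1; ring
    rw [e] at this
    unfold auxPhi
    have hp : 0 ≤ s ^ (r - 1) * Real.exp (s ^ q) := by positivity
    have := mul_le_mul_of_nonneg_left this hp
    simp only [zero_mul, sub_zero]
    linarith
  · have hq0 : q ≠ 0 := by linarith
    generalize (s ^ q)⁻¹ = x at *
    field_simp
    linear_combination q ^ 2 * h1 - q * (q + r - 1) * h2 + (q + r - 1) * (2 * q + r - 1) * h3

lemma auxSigma (q r : ℝ) (hq : 1 < q) :
    ∃ K > (0 : ℝ), ∃ ε > (0 : ℝ), ∀ s ≥ (1 : ℝ), (s ^ q)⁻¹ ≤ ε → ∃ σ, |σ| ≤ K ∧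
      q * auxPhi q r 0 s = (s ^ q)⁻¹ * (1 - (q + r - 1) / q * (s ^ q)⁻¹
      + (q + r - 1) * (2 * q + r - 1) / q ^ 2 * (s ^ q)⁻¹ ^ 2 + σ * (s ^ q)⁻¹ ^ 3) := by
  obtain ⟨α, hα⟩ : ∃ α, α = (q + r - 1) / q := ⟨_, rfl⟩
  obtain ⟨γ, hγ⟩ : ∃ γ, γ = (q + r - 1) * (2 * q + r - 1) / q ^ 2 := ⟨_, rfl⟩
  obtain ⟨κ, hκ⟩ : ∃ κ, κ = (q + r - 1) * (2 * q + r - 1) * (3 * q + r - 1) / q ^ 2 := ⟨_, rfl⟩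
  rw [← hα, ← hγ]
  refine ⟨|κ| * (2 * (1 + |α| + |γ|)) + 1, by positivity, min 1 (1 / (2 * (|κ| + 1))),
    by positivity, ?_⟩
  intro s hs hx
  obtain ⟨t, ht0, ht, he⟩ := auxExp q r s hq hs
  rw [← hα, ← hγ, ← hκ] at he
  have hx0 : 0 < (s ^ q)⁻¹ := by positivity
  generalize (s ^ q)⁻¹ = x at *
  have hp0 : 0 ≤ auxPhi q r 0 s := by
    have h3 : 0 < x ^ 3 := by positivity
    by_contra h
    push Not at h
    have := mul_neg_of_pos_of_neg h3 h
    linarith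
  generalize auxPhi q r 0 s = φ at *
  have hx1 : x ≤ 1 := hx.trans (min_le_left _ _)
  have hx2 : x * (2 * (|κ| + 1)) ≤ 1 := by
    have := hx.trans (min_le_right _ _)
    rwa [le_div_iff₀ (by positivity)] at this
  have hxx : x ^ 2 ≤ x := by nlinarith
  have hxxx : x ^ 3 ≤ x := by nlinarith
  have hκt : |κ * t| ≤ |κ| * (x ^ 3 * φ) := by
    rw [abs_mul, abs_of_nonneg ht0]
    gcongr
  have hφ : φ ≤ 2 * (1 + |α| + |γ|) * x := by
    have a1 : -(α * x ^ 2) ≤ |α| * x := by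
      calc -(α * x ^ 2) ≤ |α * x ^ 2| := neg_le_abs _
        _ = |α| * x ^ 2 := by rw [abs_mul, abs_of_nonneg (sq_nonneg x)]
        _ ≤ |α| * x := by gcongr
    have a2 : γ * x ^ 3 ≤ |γ| * x := by
      calc γ * x ^ 3 ≤ |γ| * x ^ 3 := by gcongr; exact le_abs_self _
        _ ≤ |γ| * x := by gcongr
    have a3 : |κ| * (x ^ 3 * φ) ≤ φ / 2 := by
      have : |κ| * (x ^ 3 * φ) ≤ |κ| * (x * φ) := by gcongr
      nlinarith [mul_le_mul_of_nonneg_right hx2 hp0, mul_nonneg hx0.le hp0]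
    have a4 := neg_le_abs (κ * t)
    nlinarith
  refine ⟨-(κ * t) / x ^ 4, ?_, ?_⟩
  · rw [abs_div, abs_neg, abs_of_pos (by positivity : 0 < x ^ 4), div_le_iff₀ (by positivity)]
    calc |κ * t| ≤ |κ| * (x ^ 3 * φ) := hκt
      _ ≤ |κ| * (x ^ 3 * (2 * (1 + |α| + |γ|) * x)) := by gcongr
      _ ≤ _ := by nlinarith [pow_pos hx0 4]
  · rw [he]
    field_simp
    ring

lemma auxBound (g : ℝ × ℝ → ℝ) (hg : Continuous g) (K : ℝ) :
    ∃ M > (0 : ℝ), ∀ x σ : ℝ, 0 < x → x ≤ 1 → |σ| ≤ K → |g (x, σ)| ≤ M := by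
  obtain ⟨M, hM⟩ := ((isCompact_Icc (a := (0 : ℝ)) (b := 1)).prod
    (isCompact_Icc (a := -K) (b := K))).exists_bound_of_continuousOn hg.continuousOn
  refine ⟨|M| + 1, by positivity, ?_⟩
  intro x σ h0 h1 h2
  have := hM (x, σ) ⟨⟨h0.le, h1⟩, abs_le.1 h2⟩
  rw [Real.norm_eq_abs] at this
  linarith [le_abs_self M]

lemma auxAlg (q r K : ℝ) (hq : 1 < q) :
    ∃ C > (0 : ℝ), ∃ ε > (0 : ℝ), ∀ x σ y : ℝ, 0 < x → x ≤ ε → |σ| ≤ K →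
      y = 1 - (q + r - 1) / q * x + (q + r - 1) * (2 * q + r - 1) / q ^ 2 * x ^ 2 + σ * x ^ 3 →
      1 / 2 ≤ y ∧ y ≤ 2 ∧ 1 / 2 ≤ 1 + r / q * x ∧
      |(1 - (1 + r / q * x) * y) / x - (1 - 1 / q)| ≤ C * x ∧
      |(((1 + r / q * x) ^ 2 + (1 - 1 / q) * x - r / q ^ 2 * x ^ 2) * y / (1 + r / q * x) - 1) / x ^ 2
        - (1 - 1 / q)| ≤ C * x := by
  have hq0 : q ≠ 0 := by linarith
  obtain ⟨M1, hM1, h1⟩ := auxBound (fun z => - (q + r - 1) / q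
    + (q + r - 1) * (2 * q + r - 1) / q ^ 2 * z.1 + z.2 * z.1 ^ 2) (by fun_prop) K
  obtain ⟨M2, hM2, h2⟩ := auxBound (fun z =>
    -((q + r - 1) * (2 * q + r - 1) / q ^ 2 - r / q * ((q + r - 1) / q))
    - (z.2 + r / q * ((q + r - 1) * (2 * q + r - 1) / q ^ 2)) * z.1 - r / q * z.2 * z.1 ^ 2)
    (by fun_prop) K
  obtain ⟨M3, hM3, h3⟩ := auxBound (fun z =>
    z.2 + (2 * (r / q) + (1 - 1 / q)) * ((q + r - 1) * (2 * q + r - 1) / q ^ 2)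
    - ((r / q) ^ 2 - r / q ^ 2) * ((q + r - 1) / q)
    + ((2 * (r / q) + (1 - 1 / q)) * z.2
      + ((r / q) ^ 2 - r / q ^ 2) * ((q + r - 1) * (2 * q + r - 1) / q ^ 2)) * z.1
    + ((r / q) ^ 2 - r / q ^ 2) * z.2 * z.1 ^ 2 - (1 - 1 / q) * (r / q))
    (by fun_prop) K
  refine ⟨M2 + 2 * M3, by positivity, min 1 (1 / (2 * (M1 + |r / q|))), by positivity, ?_⟩
  intro x σ y hx0 hx hσ hy
  have hx1 : x ≤ 1 := hx.trans (min_le_left _ _)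
  have hx2 : x * (2 * (M1 + |r / q|)) ≤ 1 := by
    have := hx.trans (min_le_right _ _)
    rwa [le_div_iff₀ (by positivity)] at this
  have g1 := h1 x σ hx0 hx1 hσ
  have g2 := h2 x σ hx0 hx1 hσ
  have g3 := h3 x σ hx0 hx1 hσ
  simp only at g1 g2 g3
  have hρ : 1 / 2 ≤ 1 + r / q * x := by
    have := neg_abs_le (r / q)
    nlinarith [mul_le_mul_of_nonneg_right this hx0.le]
  have hρ0 : 1 + r / q * x ≠ 0 := by linarith
  have hy1 : |y - 1| ≤ 1 / 2 := by
    have : y - 1 = x * (- (q + r - 1) / q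
      + (q + r - 1) * (2 * q + r - 1) / q ^ 2 * x + σ * x ^ 2) := by rw [hy]; ring
    rw [this, abs_mul, abs_of_pos hx0]
    nlinarith [mul_le_mul_of_nonneg_left g1 hx0.le, abs_nonneg (r / q)]
  rw [abs_le] at hy1
  refine ⟨by linarith, by linarith, hρ, ?_, ?_⟩
  · have e : (1 - (1 + r / q * x) * y) / x - (1 - 1 / q) =
      x * (-((q + r - 1) * (2 * q + r - 1) / q ^ 2 - r / q * ((q + r - 1) / q))
    - (σ + r / q * ((q + r - 1) * (2 * q + r - 1) / q ^ 2)) * x - r / q * σ * x ^ 2) := by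
      rw [hy]
      field_simp
      ring
    rw [e, abs_mul, abs_of_pos hx0]
    nlinarith [mul_le_mul_of_nonneg_left g2 hx0.le]
  · have e : (((1 + r / q * x) ^ 2 + (1 - 1 / q) * x - r / q ^ 2 * x ^ 2) * y / (1 + r / q * x) - 1) / x ^ 2
        - (1 - 1 / q) = x * (σ + (2 * (r / q) + (1 - 1 / q)) * ((q + r - 1) * (2 * q + r - 1) / q ^ 2)
    - ((r / q) ^ 2 - r / q ^ 2) * ((q + r - 1) / q)
    + ((2 * (r / q) + (1 - 1 / q)) * σ
      + ((r / q) ^ 2 - r / q ^ 2) * ((q + r - 1) * (2 * q + r - 1) / q ^ 2)) * x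
    + ((r / q) ^ 2 - r / q ^ 2) * σ * x ^ 2 - (1 - 1 / q) * (r / q)) / (1 + r / q * x) := by
      have e0 : (((1 + r / q * x) ^ 2 + (1 - 1 / q) * x - r / q ^ 2 * x ^ 2) * y / (1 + r / q * x) - 1) / x ^ 2
        - (1 - 1 / q) = ((((1 + r / q * x) ^ 2 + (1 - 1 / q) * x - r / q ^ 2 * x ^ 2) * y
          - (1 + r / q * x)) / x ^ 2 - (1 - 1 / q) * (1 + r / q * x)) / (1 + r / q * x) := by
        generalize 1 + r / q * x = D at *
        field_simp
      rw [e0]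
      congr 1
      rw [hy]
      field_simp
      ring
    rw [e, abs_div, abs_mul, abs_of_pos hx0, abs_of_pos (by linarith : 0 < 1 + r / q * x),
      div_le_iff₀ (by linarith)]
    have k1 := mul_le_mul_of_nonneg_left g3 hx0.le
    have k2 : (M2 + 2 * M3) * x * (1 / 2) ≤ (M2 + 2 * M3) * x * (1 + r / q * x) := by gcongr
    nlinarith [mul_pos hM2 hx0]

lemma auxMul (f g a b M N δ : ℝ) (hf : |f - a| ≤ M * δ) (hg : |g - b| ≤ N * δ) (hδ : 0 ≤ δ)
    (hδ1 : δ ≤ 1) (hM : 0 ≤ M) (hN : 0 ≤ N) :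
    |f * g - a * b| ≤ (M * (|b| + N) + |a| * N) * δ := by
  have hgb : |g| ≤ |b| + N := by
    have : |g| ≤ |g - b| + |b| := by simpa using abs_add_le (g - b) b
    nlinarith
  calc |f * g - a * b| = |(f - a) * g + a * (g - b)| := by ring_nf
    _ ≤ |f - a| * |g| + |a| * |g - b| := by
        rw [← abs_mul, ← abs_mul]; exact abs_add_le _ _
    _ ≤ (M * δ) * (|b| + N) + |a| * (N * δ) := by gcongr
    _ = _ := by ring

lemma auxD1 (q r s : ℝ) (hs : 0 < s) :
    deriv (fun x : ℝ => x ^ r * Real.exp (x ^ q)) s =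
      r * (s ^ (r - 1) * Real.exp (s ^ q)) + q * (s ^ (r + q - 1) * Real.exp (s ^ q)) := by
  have := (auxDeriv q r 1 s hs).deriv
  simpa only [one_mul] using this

lemma auxD1' (q r s : ℝ) (hs : 0 < s) :
    deriv (fun x : ℝ => x ^ r * Real.exp (x ^ q)) s =
      s ^ (r - 1) * Real.exp (s ^ q) * (r + q * s ^ q) := by
  rw [auxD1 q r s hs, show r + q - 1 = (r - 1) + q by ring, Real.rpow_add hs]
  ring

lemma auxD2 (q r s : ℝ) (hs : 0 < s) :
    deriv (deriv (fun x : ℝ => x ^ r * Real.exp (x ^ q))) s =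
      s ^ (r - 1) * Real.exp (s ^ q) / s * ((r + q * s ^ q) ^ 2 + q * (q - 1) * s ^ q - r) := by
  have he : deriv (fun x : ℝ => x ^ r * Real.exp (x ^ q)) =ᶠ[nhds s] fun s =>
      r * (s ^ (r - 1) * Real.exp (s ^ q)) + q * (s ^ (r + q - 1) * Real.exp (s ^ q)) := by
    filter_upwards [lt_mem_nhds hs] with x hx
    exact auxD1 q r x hx
  rw [he.deriv_eq]
  have h1 := auxDeriv q (r - 1) 1 s hs
  have h2 := auxDeriv q (r + q - 1) 1 s hs
  simp only [one_mul] at h1 h2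
  refine ((h1.const_mul r).add (h2.const_mul q)).deriv.trans ?_
  rw [show r - 1 - 1 = (r - 1) + (-1) by ring, show r - 1 + q - 1 = (r - 1) + q + (-1) by ring,
    show r + q - 1 - 1 = (r - 1) + q + (-1) by ring,
    show r + q - 1 + q - 1 = (r - 1) + q + q + (-1) by ring]
  simp only [Real.rpow_add hs, Real.rpow_neg_one]
  field_simp
  ring

lemma auxFint (q r s : ℝ) (hs : 0 < s) :
    Fint (fun x => x ^ r * Real.exp (x ^ q)) s = auxJ q (-r) s := by
  unfold Fint auxJ
  refine setIntegral_congr_fun measurableSet_Ioi ?_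
  intro x hx
  have hx1 : s < x := hx
  have hx0 : 0 < x := by linarith
  simp only
  rw [Real.rpow_neg hx0.le, Real.exp_neg, one_div, mul_inv]

lemma auxB1 (q r s x y : ℝ) (hq : 1 < q) (hs : 0 < s) (hx : x = (s ^ q)⁻¹)
    (hy : q * auxPhi q r 0 s = x * y) :
    invB1 (fun x => x ^ r * Real.exp (x ^ q)) (Fint (fun x => x ^ r * Real.exp (x ^ q))) s =
      (-Real.log (auxJ q (-r) s) * x) * ((1 - (1 + r / q * x) * y) / x) := by
  have hx0 : 0 < x := by rw [hx]; positivity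
  have hu : s ^ q = x⁻¹ := by rw [hx, inv_inv]
  have hq0 : q ≠ 0 := by linarith
  unfold invB1
  rw [auxFint q r s hs, auxD1' q r s hs]
  have e : s ^ (r - 1) * Real.exp (s ^ q) * (r + q * s ^ q) * auxJ q (-r) s
    = (1 + r / q * x) * y := by
    have : s ^ (r - 1) * Real.exp (s ^ q) * auxJ q (-r) s = x * y / q := by
      rw [← hy]; unfold auxPhi; field_simp; simp
    calc _ = (s ^ (r - 1) * Real.exp (s ^ q) * auxJ q (-r) s) * (r + q * s ^ q) := by ring
      _ = _ := by rw [this, hu]; field_simp; ring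
  rw [e]
  field_simp

lemma auxB2 (q r s x y : ℝ) (hq : 1 < q) (hs : 0 < s) (hx : x = (s ^ q)⁻¹)
    (hD : 1 + r / q * x ≠ 0) (hy : q * auxPhi q r 0 s = x * y) :
    invB2 (fun x => x ^ r * Real.exp (x ^ q)) (Fint (fun x => x ^ r * Real.exp (x ^ q))) s =
      ((1 + r / q * x) * y) * (((-Real.log (auxJ q (-r) s) * x) * (-Real.log (auxJ q (-r) s) * x)) *
      ((((1 + r / q * x) ^ 2 + (1 - 1 / q) * x - r / q ^ 2 * x ^ 2) * y / (1 + r / q * x) - 1) / x ^ 2)) := by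
  have hx0 : 0 < x := by rw [hx]; positivity
  have hu : s ^ q = x⁻¹ := by rw [hx, inv_inv]
  have hq0 : q ≠ 0 := by linarith
  have h0 : s ^ (r - 1) * Real.exp (s ^ q) * auxJ q (-r) s = x * y / q := by
    rw [← hy]; unfold auxPhi; field_simp; simp
  unfold invB2
  rw [auxFint q r s hs, auxD1' q r s hs, auxD2 q r s hs]
  have e : s ^ (r - 1) * Real.exp (s ^ q) * (r + q * s ^ q) * auxJ q (-r) s
    = (1 + r / q * x) * y := by
    calc _ = (s ^ (r - 1) * Real.exp (s ^ q) * auxJ q (-r) s) * (r + q * s ^ q) := by ring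
      _ = _ := by rw [h0, hu]; field_simp; ring
  have hP : r + q * s ^ q = q / x * (1 + r / q * x) := by rw [hu]; field_simp; ring
  have hP0 : r + q * s ^ q ≠ 0 := by
    rw [hP]; positivity
  have hr : s ^ r = s * s ^ (r - 1) := by
    rw [Real.rpow_sub_one hs.ne']; field_simp
  have e2 : s ^ r * Real.exp (s ^ q) * (s ^ (r - 1) * Real.exp (s ^ q) / s *
      ((r + q * s ^ q) ^ 2 + q * (q - 1) * s ^ q - r)) * auxJ q (-r) s /
      (s ^ (r - 1) * Real.exp (s ^ q) * (r + q * s ^ q)) =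
      ((1 + r / q * x) ^ 2 + (1 - 1 / q) * x - r / q ^ 2 * x ^ 2) * y / (1 + r / q * x) := by
    have hA : s ^ (r - 1) * Real.exp (s ^ q) ≠ 0 := by positivity
    rw [hr, mul_assoc s]
    generalize s ^ (r - 1) * Real.exp (s ^ q) = A at *
    calc _ = (A * auxJ q (-r) s) * ((r + q * s ^ q) ^ 2 + q * (q - 1) * s ^ q - r)
            / (r + q * s ^ q) := by field_simp
      _ = _ := by
        rw [h0, hP, hu]
        generalize hDD : 1 + r / q * x = D at *
        field_simp
  rw [e, e2]
  field_simp

lemma auxLog (q r s x y : ℝ) (hq : 1 < q) (hs : Real.exp 1 ≤ s) (hx : x = (s ^ q)⁻¹)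
    (hy1 : 1 / 2 ≤ y) (hy2 : y ≤ 2) (hy : q * auxPhi q r 0 s = x * y) :
    |-Real.log (auxJ q (-r) s) * x - 1| ≤ (|r - 1 + q| + Real.log q + Real.log 2) * (Real.log s / s ^ q) := by
  have hs0 : 0 < s := (Real.exp_pos 1).trans_le hs
  have hl : 1 ≤ Real.log s := by
    rw [Real.le_log_iff_exp_le hs0]; exact hs
  have hx0 : 0 < x := by rw [hx]; positivity
  have hq0 : 0 < q := by linarith
  have hy0 : 0 < y := by linarith
  have hF : auxJ q (-r) s = x * y / q / (s ^ (r - 1) * Real.exp (s ^ q)) := by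
    rw [← hy]; unfold auxPhi; field_simp; simp
  have hlx : Real.log x = - (q * Real.log s) := by rw [hx, Real.log_inv, Real.log_rpow hs0]
  have hu : s ^ q = x⁻¹ := by rw [hx, inv_inv]
  rw [hF, Real.log_div (by positivity) (by positivity), Real.log_div (by positivity) (by positivity),
    Real.log_mul (by positivity) (by positivity), Real.log_mul (by positivity) (by positivity),
    Real.log_exp, Real.log_rpow hs0, hlx, hu]
  have e : -(-(q * Real.log s) + Real.log y - Real.log q - ((r - 1) * Real.log s + x⁻¹)) * x - 1
    = x * ((r - 1 + q) * Real.log s + (Real.log q - Real.log y)) := by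
    field_simp; ring
  rw [e, abs_mul, abs_of_pos hx0]
  have hlq : 0 ≤ Real.log q := Real.log_nonneg hq.le
  have hl2 : 0 ≤ Real.log 2 := Real.log_nonneg (by norm_num)
  have hly : |Real.log y| ≤ Real.log 2 := by
    rw [abs_le]
    constructor
    · rw [← Real.log_inv]
      exact Real.log_le_log (by norm_num) (by linarith)
    · exact Real.log_le_log hy0 hy2
  have k1 : |(r - 1 + q) * Real.log s + (Real.log q - Real.log y)| ≤
      |r - 1 + q| * Real.log s + (Real.log q + Real.log 2) := by
    refine (abs_add_le _ _).trans (add_le_add ?_ ?_)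
    · rw [abs_mul, abs_of_pos (by linarith : 0 < Real.log s)]
    · rw [abs_le] at *
      constructor <;> linarith
  have k2 : |r - 1 + q| * Real.log s + (Real.log q + Real.log 2) ≤
      (|r - 1 + q| + Real.log q + Real.log 2) * Real.log s := by nlinarith
  have := mul_le_mul_of_nonneg_left (k1.trans k2) hx0.le
  refine this.trans (le_of_eq ?_)
  field_simp

/-- Estimates (3.5a), (3.5b): for `f(s) = s^r e^{s^q}` with `q > 1`,
`1/B₁[f](s) = 1 − 1/q + O((log s)/s^q)` and `1/B₂[f](s) = 1 − 1/q + O((log s)/s^q)`. -/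
theorem stmt15 (q r : ℝ) (hq : 1 < q) :
    ∃ C > (0 : ℝ), ∃ s₁ > (1 : ℝ), ∀ s ≥ s₁,
      |invB1 (fun x => x ^ r * Real.exp (x ^ q))
          (Fint (fun x => x ^ r * Real.exp (x ^ q))) s - (1 - 1 / q)|
        ≤ C * Real.log s / s ^ q
      ∧ |invB2 (fun x => x ^ r * Real.exp (x ^ q))
          (Fint (fun x => x ^ r * Real.exp (x ^ q))) s - (1 - 1 / q)|
        ≤ C * Real.log s / s ^ q := by
  obtain ⟨K, hK, ε₁, hε₁, hσ⟩ := auxSigma q r hq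
  obtain ⟨C, hC, ε₂, hε₂, halg⟩ := auxAlg q r K hq
  obtain ⟨a, ha⟩ : ∃ a, a = 1 - 1 / q := ⟨_, rfl⟩
  obtain ⟨M, hM⟩ : ∃ M, M = |r - 1 + q| + Real.log q + Real.log 2 := ⟨_, rfl⟩
  have hlq : 0 ≤ Real.log q := Real.log_nonneg hq.le
  have hl2 : 0 ≤ Real.log 2 := Real.log_nonneg (by norm_num)
  have hM0 : 0 ≤ M := by rw [hM]; positivity
  have ht : Tendsto (fun s : ℝ => (s ^ q)⁻¹) atTop (nhds 0) :=
    (tendsto_rpow_atTop (by linarith : 0 < q)).inv_tendsto_atTop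
  obtain ⟨s₀, hs₀⟩ := eventually_atTop.1 (ht.eventually (gt_mem_nhds (lt_min hε₁ hε₂)))
  obtain ⟨M2, hM2⟩ : ∃ M2, M2 = M * (|1| + M) + |1| * M := ⟨_, rfl⟩
  have hM20 : 0 ≤ M2 := by rw [hM2]; positivity
  obtain ⟨M3, hM3⟩ : ∃ M3, M3 = M2 * (|a| + C) + |1 * 1| * C := ⟨_, rfl⟩
  have hM30 : 0 ≤ M3 := by rw [hM3]; positivity
  refine ⟨(M * (|a| + C) + |1| * C) + ((|a| + C) * (|1 * 1 * a| + M3) + |1| * M3) + 1, by positivity,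
    max s₀ (Real.exp 1), lt_max_of_lt_right (by simp), ?_⟩
  intro s hs
  have hse : Real.exp 1 ≤ s := (le_max_right _ _).trans hs
  have hs1 : 1 < s := lt_of_lt_of_le (by simp) hse
  have hs0 : 0 < s := by linarith
  have hxε := hs₀ s ((le_max_left _ _).trans hs)
  obtain ⟨σ, hσK, hφ⟩ := hσ s hs1.le (hxε.le.trans (min_le_left _ _))
  obtain ⟨x, hx⟩ : ∃ x, x = (s ^ q)⁻¹ := ⟨_, rfl⟩
  rw [← hx] at hφ hxε
  have hx0 : 0 < x := by rw [hx]; positivity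
  obtain ⟨y, hy⟩ : ∃ y, y = 1 - (q + r - 1) / q * x + (q + r - 1) * (2 * q + r - 1) / q ^ 2 * x ^ 2
    + σ * x ^ 3 := ⟨_, rfl⟩
  rw [← hy] at hφ
  obtain ⟨y1, y2, hD, b1, b2⟩ := halg x σ y hx0 (hxε.le.trans (min_le_right _ _)) hσK hy
  have hL := auxLog q r s x y hq hse hx y1 y2 hφ
  rw [← hM] at hL
  have hB1 := auxB1 q r s x y hq hs0 hx hφ
  have hB2 := auxB2 q r s x y hq hs0 hx (by linarith) hφ
  rw [hB1, hB2, mul_div_assoc, ← ha]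
  rw [← ha] at b1 b2
  generalize hδ : Real.log s / s ^ q = δ at *
  have hl : 1 ≤ Real.log s := by
    rw [Real.le_log_iff_exp_le hs0]; exact hse
  have hδe : δ = Real.log s * x := by rw [hx, ← hδ]; rfl
  have hxδ : x ≤ δ := by rw [hδe]; nlinarith
  have hδ0 : 0 ≤ δ := by linarith
  have hδ1 : δ ≤ 1 := by
    rw [← hδ, div_le_one (by positivity)]
    calc Real.log s ≤ s := Real.log_le_self hs0.le
      _ = s ^ (1 : ℝ) := (Real.rpow_one s).symm
      _ ≤ s ^ q := Real.rpow_le_rpow_of_exponent_le hs1.le hq.le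
  have hx1 : x ≤ 1 := hxδ.trans hδ1
  have hCx : C * x ≤ C * δ := by gcongr
  have c1 := b1.trans hCx
  have c2 := b2.trans hCx
  have cw : |(1 + r / q * x) * y - 1| ≤ (|a| + C) * δ := by
    have e : (1 + r / q * x) * y - 1 = - (x * ((1 - (1 + r / q * x) * y) / x)) := by
      field_simp; ring
    rw [e, abs_neg, abs_mul, abs_of_pos hx0]
    generalize (1 - (1 + r / q * x) * y) / x = z at *
    have : |z| ≤ |z - a| + |a| := by simpa using abs_add_le (z - a) a
    have hCδ : C * δ ≤ C * 1 := mul_le_mul_of_nonneg_left hδ1 hC.le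
    have hz : |z| ≤ |a| + C := by linarith
    calc x * |z| ≤ δ * (|a| + C) := by gcongr
      _ = _ := by ring
  have hC0 := hC.le
  have d1 := auxMul _ _ _ _ _ _ δ hL c1 hδ0 hδ1 hM0 hC0
  have d2 := auxMul _ _ _ _ _ _ δ hL hL hδ0 hδ1 hM0 hM0
  rw [← hM2] at d2
  have d3 := auxMul _ _ _ _ _ _ δ d2 c2 hδ0 hδ1 hM20 hC0
  rw [← hM3] at d3
  have d4 := auxMul _ _ _ _ _ _ δ cw d3 hδ0 hδ1 (by positivity) hM30
  rw [one_mul] at d1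
  rw [show 1 * (1 * 1 * a) = a by ring] at d4
  refine ⟨d1.trans ?_, d4.trans ?_⟩
  · refine mul_le_mul_of_nonneg_right ?_ hδ0
    have : 0 ≤ (|a| + C) * (|1 * 1 * a| + M3) + |1| * M3 := by positivity
    linarith
  · refine mul_le_mul_of_nonneg_right ?_ hδ0
    have : 0 ≤ M * (|a| + C) + |1| * C := by positivity
    linarith
end

section
/- Let q > 1 and r ∈ ℝ, and let f(s) := e^{s^q·(log s)^r} for s > 1. Then there exist C > 0 and s₁ > e such that for all s ≥ s₁: | 1/B₁[f](s) − (1 − 1/q) | ≤ C/(log s) and | 1/B₂[f](s) − (1 − 1/q) | ≤ C/(log s); in particular lim_{s→∞} 1/B₂[f](s) = 1 − 1/q, i.e. B = q/(q−1). -/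
open MeasureTheory Filter

open Asymptotics Topology

namespace S17

/-- `g = c + O(1/log s)`. -/
def Ap (g : ℝ → ℝ) (c : ℝ) : Prop :=
  (fun s => g s - c) =O[atTop] (fun s => (Real.log s)⁻¹)

lemma linv : Tendsto (fun s : ℝ => (Real.log s)⁻¹) atTop (𝓝 0) :=
  tendsto_inv_atTop_zero.comp Real.tendsto_log_atTop

lemma Ap.tendsto {g : ℝ → ℝ} {c : ℝ} (h : Ap g c) : Tendsto g atTop (𝓝 c) := by
  have := (IsBigO.trans_tendsto h linv).add_const c
  simpa using this

lemma Ap.const (c : ℝ) : Ap (fun _ => c) c := by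
  unfold Ap; simpa using isBigO_zero _ _

lemma Ap.ell : Ap (fun s => (Real.log s)⁻¹) 0 := by
  unfold Ap; simpa using isBigO_refl _ _

lemma Ap.congr {g h : ℝ → ℝ} {c d : ℝ} (hg : Ap g c) (e : ∀ᶠ s in atTop, g s = h s)
    (hc : c = d) : Ap h d := by
  subst hc
  refine IsBigO.congr' hg ?_ EventuallyEq.rfl
  filter_upwards [e] with s hs
  rw [hs]

lemma Ap.add {g h : ℝ → ℝ} {c d : ℝ} (hg : Ap g c) (hh : Ap h d) :
    Ap (fun s => g s + h s) (c + d) := by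
  refine (IsBigO.add hg hh).congr_left ?_
  intro s; ring

lemma Ap.neg {g : ℝ → ℝ} {c : ℝ} (hg : Ap g c) :
    Ap (fun s => - g s) (-c) := by
  refine (IsBigO.neg_left hg).congr_left ?_
  intro s; ring

lemma Ap.sub {g h : ℝ → ℝ} {c d : ℝ} (hg : Ap g c) (hh : Ap h d) :
    Ap (fun s => g s - h s) (c - d) := by
  refine (IsBigO.sub hg hh).congr_left ?_
  intro s; ring

lemma Ap.mul {g h : ℝ → ℝ} {c d : ℝ} (hg : Ap g c) (hh : Ap h d) :
    Ap (fun s => g s * h s) (c * d) := by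
  have h1 : h =O[atTop] (fun _ => (1:ℝ)) := hh.tendsto.isBigO_one ℝ
  have h2 := IsBigO.mul hg h1
  simp only [mul_one] at h2
  have h3 := h2.add (IsBigO.const_mul_left hh c)
  refine h3.congr_left ?_
  intro s; ring

lemma Ap.inv {g : ℝ → ℝ} {c : ℝ} (hg : Ap g c) (hc : c ≠ 0) :
    Ap (fun s => (g s)⁻¹) c⁻¹ := by
  have h1 : (fun s => (g s)⁻¹ * (-c⁻¹)) =O[atTop] (fun _ => (1:ℝ)) :=
    ((hg.tendsto.inv₀ hc).mul_const _).isBigO_one ℝ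
  have h2 := IsBigO.mul hg h1
  simp only [mul_one] at h2
  refine h2.congr' ?_ EventuallyEq.rfl
  filter_upwards [hg.tendsto.eventually_ne hc] with s hs
  field_simp
  ring

lemma Ap.div {g h : ℝ → ℝ} {c d : ℝ} (hg : Ap g c) (hh : Ap h d) (hd : d ≠ 0) :
    Ap (fun s => g s / h s) (c / d) := by
  simpa only [div_eq_mul_inv] using hg.mul (hh.inv hd)

/-- exponent -/
noncomputable def phi (q r x : ℝ) : ℝ := x ^ q * (Real.log x) ^ r
noncomputable def pp (q r x : ℝ) : ℝ := q + r * (Real.log x)⁻¹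
noncomputable def phi1 (q r x : ℝ) : ℝ := phi q r x * pp q r x / x
noncomputable def kk (q r x : ℝ) : ℝ :=
  1 - (pp q r x)⁻¹ - r * ((Real.log x)⁻¹) ^ 2 * ((pp q r x)⁻¹) ^ 2
/-- `x k'(x)` -/
noncomputable def kd (q r x : ℝ) : ℝ :=
  - r * ((Real.log x)⁻¹) ^ 2 * ((pp q r x)⁻¹) ^ 2
  + 2 * r * ((Real.log x)⁻¹) ^ 3 * ((pp q r x)⁻¹) ^ 2
  - 2 * r ^ 2 * ((Real.log x)⁻¹) ^ 4 * ((pp q r x)⁻¹) ^ 3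
noncomputable def mm (q r x : ℝ) : ℝ := kd q r x * (pp q r x)⁻¹
/-- barrier -/
noncomputable def WW (q r c x : ℝ) : ℝ :=
  Real.exp (-phi q r x) * (phi1 q r x)⁻¹ *
    (((phi q r x) ^ 2 + c) * ((phi q r x) ^ 2 + kk q r x * phi q r x)⁻¹)

lemma phi_pos (q r : ℝ) {x : ℝ} (hx : 1 < x) : 0 < phi q r x :=
  mul_pos (Real.rpow_pos_of_pos (by linarith) _) (Real.rpow_pos_of_pos (Real.log_pos hx) _)

lemma hd_phi (q r : ℝ) {x : ℝ} (hx : 1 < x) : HasDerivAt (phi q r) (phi1 q r x) x := by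
  have hx0 : 0 < x := by linarith
  have hL := Real.log_pos hx
  have h1 := Real.hasDerivAt_rpow_const (x := x) (p := q) (Or.inl hx0.ne')
  have h2 := (Real.hasDerivAt_log hx0.ne').rpow_const (p := r) (Or.inl hL.ne')
  refine (h1.mul h2).congr_deriv ?_
  unfold phi1 phi pp
  rw [Real.rpow_sub_one hx0.ne', Real.rpow_sub_one hL.ne']
  field_simp

lemma hd_ell {x : ℝ} (hx : 1 < x) :
    HasDerivAt (fun x => (Real.log x)⁻¹) (-((Real.log x)⁻¹) ^ 2 / x) x := by
  have hx0 : 0 < x := by linarith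
  have hL := Real.log_pos hx
  refine ((Real.hasDerivAt_log hx0.ne').inv hL.ne').congr_deriv ?_
  field_simp

lemma hd_pp (q r : ℝ) {x : ℝ} (hx : 1 < x) :
    HasDerivAt (pp q r) (-r * ((Real.log x)⁻¹) ^ 2 / x) x := by
  refine (((hd_ell hx).const_mul r).const_add q).congr_deriv ?_
  ring

lemma hd_kk (q r : ℝ) {x : ℝ} (hx : 1 < x) (hp : 0 < pp q r x) :
    HasDerivAt (kk q r) (kd q r x / x) x := by
  have hx0 : 0 < x := by linarith
  have hL := Real.log_pos hx
  have h1 := (hd_pp q r hx).inv hp.ne'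
  have h2 := (((hd_ell hx).pow 2).const_mul r).mul (h1.pow 2)
  have h3 := (h1.const_sub 1).sub h2
  refine h3.congr_deriv ?_
  unfold kd
  simp
  field_simp
  ring

lemma hd_phi1 (q r : ℝ) {x : ℝ} (hx : 1 < x) (hp : 0 < pp q r x) :
    HasDerivAt (phi1 q r) ((phi1 q r x) ^ 2 * kk q r x / phi q r x) x := by
  have hx0 : 0 < x := by linarith
  have hL := Real.log_pos hx
  have hf := phi_pos q r hx
  have h3 := ((hd_phi q r hx).mul (hd_pp q r hx)).div (hasDerivAt_id x) hx0.ne'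
  refine h3.congr_deriv ?_
  unfold kk phi1
  simp
  field_simp
  ring

lemma hd_WW (q r c : ℝ) {x : ℝ} (hx : 1 < x) (hp : 0 < pp q r x) (hk : 0 ≤ kk q r x) :
    HasDerivAt (WW q r c) (-Real.exp (-phi q r x) * (1 + (c -
      ((kk q r x - mm q r x) * phi q r x ^ 2 - 2 * c * phi q r x - c * (kk q r x + mm q r x))
        / (phi q r x + kk q r x) ^ 2) / phi q r x ^ 2)) x := by
  have hx0 : 0 < x := by linarith
  have hf := phi_pos q r hx
  have hf1 : 0 < phi1 q r x := by unfold phi1; positivity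
  have hden : 0 < (phi q r x) ^ 2 + kk q r x * phi q r x := by positivity
  have hs : 0 < phi q r x + kk q r x := by positivity
  have h1 := hd_phi q r hx
  have h2 := (h1.neg.exp).mul ((hd_phi1 q r hx hp).inv hf1.ne')
  have h3 := ((h1.pow 2).add_const c).mul
    (((h1.pow 2).add ((hd_kk q r hx hp).mul h1)).inv hden.ne')
  refine (h2.mul h3).congr_deriv ?_
  have hkd : kd q r x / x = mm q r x * phi1 q r x / phi q r x := by
    unfold mm phi1
    field_simp
  rw [hkd]
  simp
  have hsp : phi q r x ^ 2 + kk q r x * phi q r x = phi q r x * (phi q r x + kk q r x) := by ring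
  rw [hsp]
  obtain ⟨S, hS⟩ : ∃ S, S = phi q r x + kk q r x := ⟨_, rfl⟩
  have hk2 : kk q r x = S - phi q r x := by rw [hS]; ring
  rw [← hS] at hs ⊢
  rw [hk2]
  field_simp
  ring


lemma cmp_le (g W W' : ℝ → ℝ) (s : ℝ) (hs : 1 < s) (hg : ContinuousOn g (Set.Ioi 1))
    (hi : IntegrableOn g (Set.Ioi s)) (hW : ∀ x ≥ s, HasDerivAt W (W' x) x)
    (h0 : Tendsto W atTop (𝓝 0)) (hle : ∀ x ≥ s, -g x ≤ W' x) :
    W s ≤ ∫ x in Set.Ioi s, g x := by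
  have hd : ∀ x ≥ s, HasDerivAt (fun t => W t + ∫ y in s..t, g y) (W' x + g x) x := by
    intro x hx
    refine (hW x hx).add (intervalIntegral.integral_hasDerivAt_right ?_ ?_ ?_)
    · apply ContinuousOn.intervalIntegrable
      rw [Set.uIcc_of_le hx]
      exact hg.mono (fun y hy => lt_of_lt_of_le hs hy.1)
    · exact hg.stronglyMeasurableAtFilter isOpen_Ioi x (lt_of_lt_of_le hs hx)
    · exact hg.continuousAt (Ioi_mem_nhds (lt_of_lt_of_le hs hx))
  have hmono : MonotoneOn (fun t => W t + ∫ y in s..t, g y) (Set.Ici s) := by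
    apply monotoneOn_of_deriv_nonneg (convex_Ici s)
    · intro x hx
      exact (hd x hx).continuousAt.continuousWithinAt
    · intro x hx
      rw [interior_Ici] at hx
      exact (hd x (le_of_lt hx)).differentiableAt.differentiableWithinAt
    · intro x hx
      rw [interior_Ici] at hx
      rw [(hd x (le_of_lt hx)).deriv]
      linarith [hle x (le_of_lt hx)]
  have hl := h0.add (intervalIntegral_tendsto_integral_Ioi s hi tendsto_id)
  rw [zero_add] at hl
  refine ge_of_tendsto hl ?_
  filter_upwards [eventually_ge_atTop s] with x hx
  have := hmono (Set.self_mem_Ici) hx hx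
  simpa using this

lemma phi_ge (q r : ℝ) (hq : 1 < q) : ∀ᶠ x in atTop, x ≤ phi q r x := by
  have h := (isLittleO_log_rpow_rpow_atTop (s := q - 1) (-r) (by linarith)).bound one_pos
  filter_upwards [h, eventually_gt_atTop 1] with x hx h1
  have hx0 : 0 < x := by linarith
  have hL := Real.log_pos h1
  rw [Real.norm_of_nonneg (by positivity), Real.norm_of_nonneg (by positivity), one_mul,
    Real.rpow_neg hL.le, Real.rpow_sub_one hx0.ne'] at hx
  unfold phi
  have hr : 0 < Real.log x ^ r := by positivity
  rw [inv_le_iff_one_le_mul₀ hr] at hx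
  have : x * 1 ≤ x * (x ^ q / x * Real.log x ^ r) := by gcongr
  calc x = x * 1 := by ring
    _ ≤ _ := this
    _ = _ := by field_simp

lemma Ap_small {g : ℝ → ℝ} (h : g =O[atTop] (fun s => (Real.log s)⁻¹)) : Ap g 0 := by
  unfold Ap; simpa using h

lemma inv_phi_O (q r : ℝ) (hq : 1 < q) :
    (fun x => (phi q r x)⁻¹) =O[atTop] (fun x : ℝ => x⁻¹) := by
  refine IsBigO.of_bound 1 ?_
  filter_upwards [phi_ge q r hq, eventually_gt_atTop 1] with x hx h1
  have hx0 : 0 < x := by linarith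
  have := phi_pos q r h1
  rw [Real.norm_of_nonneg (by positivity), Real.norm_of_nonneg (by positivity), one_mul]
  gcongr

lemma inv_O : (fun x : ℝ => x⁻¹) =O[atTop] (fun x : ℝ => (Real.log x)⁻¹ ^ 2) := by
  have h := (Real.isLittleO_pow_log_id_atTop (n := 2)).isBigO
  have h2 := h.inv_rev (by
    filter_upwards [eventually_gt_atTop 1] with x hx h0
    have := Real.log_pos hx
    simp at h0
    rcases h0 with h0 | h0 | h0 <;> linarith)
  simpa [inv_pow] using h2

lemma Ap_iphi (q r : ℝ) (hq : 1 < q) : Ap (fun x => (phi q r x)⁻¹) 0 := by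
  apply Ap_small
  refine ((inv_phi_O q r hq).trans inv_O).trans ?_
  have : (fun x : ℝ => (Real.log x)⁻¹ * (Real.log x)⁻¹) =O[atTop]
      (fun x : ℝ => (1:ℝ) * (Real.log x)⁻¹) :=
    (linv.isBigO_one ℝ).mul (isBigO_refl _ _)
  simpa [pow_two] using this

lemma Ap_pp (q r : ℝ) : Ap (pp q r) q :=
  ((Ap.const q).add ((Ap.const r).mul Ap.ell)).congr (Eventually.of_forall fun x => rfl) (by ring)

lemma Ap_kk (q r : ℝ) (hq : 1 < q) : Ap (kk q r) (1 - 1 / q) := by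
  have hi := (Ap_pp q r).inv (by linarith)
  refine (((Ap.const 1).sub hi).sub
    (((Ap.const r).mul (Ap.ell.mul Ap.ell)).mul (hi.mul hi))).congr
    (Eventually.of_forall fun x => ?_) (by ring)
  unfold kk; ring

lemma Ap_mm (q r : ℝ) (hq : 1 < q) : Ap (mm q r) 0 := by
  have hi := (Ap_pp q r).inv (by linarith)
  have h : Ap (fun x => (Real.log x)⁻¹ * (- r * ((Real.log x)⁻¹ * ((pp q r x)⁻¹ * (pp q r x)⁻¹))
    + 2 * r * ((Real.log x)⁻¹ * (Real.log x)⁻¹ * ((pp q r x)⁻¹ * (pp q r x)⁻¹))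
    - 2 * r ^ 2 * ((Real.log x)⁻¹ * (Real.log x)⁻¹ * (Real.log x)⁻¹ *
      ((pp q r x)⁻¹ * (pp q r x)⁻¹ * (pp q r x)⁻¹))) * (pp q r x)⁻¹) _ :=
    (Ap.ell.mul ((((Ap.const (-r)).mul (Ap.ell.mul (hi.mul hi))).add
      ((Ap.const (2 * r)).mul ((Ap.ell.mul Ap.ell).mul (hi.mul hi)))).sub
      ((Ap.const (2 * r ^ 2)).mul (((Ap.ell.mul Ap.ell).mul Ap.ell).mul
        ((hi.mul hi).mul hi))))).mul hi
  refine h.congr (Eventually.of_forall fun x => ?_) (by ring)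
  unfold mm kd; ring

lemma Ap.bd {g : ℝ → ℝ} {c : ℝ} (h : Ap g c) :
    ∃ M > 0, ∀ᶠ s in atTop, |g s - c| ≤ M * (Real.log s)⁻¹ := by
  obtain ⟨M, hM, hb⟩ := IsBigO.exists_pos h
  refine ⟨M, hM, ?_⟩
  filter_upwards [hb.bound, eventually_gt_atTop 1] with s hs h1
  have := Real.log_pos h1
  rwa [Real.norm_eq_abs, Real.norm_of_nonneg (by positivity)] at hs

lemma WW_zero (q r c : ℝ) (hq : 1 < q) : Tendsto (WW q r c) atTop (𝓝 0) := by
  have hk0 : 0 < 1 - 1 / q := by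
    rw [sub_pos, div_lt_one (by linarith)]; exact hq
  have hz : Tendsto (fun x : ℝ => Real.exp (-x) * (1 + |c|)) atTop (𝓝 0) := by
    simpa using (Real.tendsto_exp_neg_atTop_nhds_zero).mul_const (1 + |c|)
  refine squeeze_zero_norm' ?_ hz
  filter_upwards [phi_ge q r hq, eventually_gt_atTop 1,
    (Ap_kk q r hq).tendsto.eventually_const_lt hk0,
    (Ap_pp q r).tendsto.eventually_const_lt hq] with x hx h1 hk hp
  have hx0 : 0 < x := by linarith
  have hf := phi_pos q r h1
  have h1p : 1 ≤ phi1 q r x := by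
    unfold phi1
    rw [le_div_iff₀ hx0]
    nlinarith
  have hphi : 1 ≤ phi q r x := by linarith
  unfold WW
  rw [norm_mul, norm_mul, norm_mul, Real.norm_of_nonneg (Real.exp_pos _).le, norm_inv, norm_inv,
    Real.norm_of_nonneg (by positivity : 0 ≤ phi1 q r x),
    Real.norm_of_nonneg (by positivity : 0 ≤ phi q r x ^ 2 + kk q r x * phi q r x)]
  have e1 : Real.exp (-phi q r x) ≤ Real.exp (-x) := by gcongr
  have e2 : (phi1 q r x)⁻¹ ≤ 1 := inv_le_one_of_one_le₀ h1p
  have e3 : ‖phi q r x ^ 2 + c‖ * (phi q r x ^ 2 + kk q r x * phi q r x)⁻¹ ≤ 1 + |c| := by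
    rw [← div_eq_mul_inv, div_le_iff₀ (by positivity)]
    have : ‖phi q r x ^ 2 + c‖ ≤ phi q r x ^ 2 + |c| := by
      refine (norm_add_le _ _).trans ?_
      rw [Real.norm_of_nonneg (by positivity), Real.norm_eq_abs]
    have h2 : 1 ≤ phi q r x ^ 2 := by nlinarith
    have h3 : 0 ≤ kk q r x * phi q r x := by positivity
    nlinarith [abs_nonneg c, mul_nonneg (abs_nonneg c) h3]
  calc _ ≤ Real.exp (-x) * 1 * (1 + |c|) := by gcongr
    _ = _ := by ring

/-- the function of the statement -/
noncomputable def ff (q r x : ℝ) : ℝ := Real.exp (x ^ q * (Real.log x) ^ r)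

lemma one_div_ff (q r x : ℝ) : 1 / ff q r x = Real.exp (-phi q r x) := by
  unfold ff phi; rw [Real.exp_neg, one_div]

lemma cont_g (q r : ℝ) : ContinuousOn (fun x => 1 / ff q r x) (Set.Ioi 1) := by
  intro x hx
  simp only [one_div_ff]
  exact ((hd_phi q r hx).neg.exp).continuousAt.continuousWithinAt

lemma int_g (q r : ℝ) (hq : 1 < q) {s : ℝ} (hs : 1 < s) :
    IntegrableOn (fun x => 1 / ff q r x) (Set.Ioi s) := by
  refine integrable_of_isBigO_exp_neg one_pos
    ((cont_g q r).mono (fun y hy => lt_of_lt_of_le hs hy)) ?_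
  refine IsBigO.of_bound 1 ?_
  filter_upwards [phi_ge q r hq] with x hx
  rw [one_div_ff, Real.norm_of_nonneg (Real.exp_pos _).le,
    Real.norm_of_nonneg (Real.exp_pos _).le, one_mul]
  gcongr
  linarith

/-- `u = f' F` -/
noncomputable def uu (q r x : ℝ) : ℝ := phi1 q r x * Real.exp (phi q r x) * Fint (ff q r) x

lemma k0_pos {q : ℝ} (hq : 1 < q) : 0 < 1 - 1 / q := by
  rw [sub_pos, div_lt_one (by linarith)]; exact hq

lemma Ap_E (q r : ℝ) (hq : 1 < q) :
    Ap (fun x => (uu q r x * (1 + kk q r x / phi q r x) - 1) * phi q r x ^ 2) (1 - 1 / q) := by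
  have hk0 := k0_pos hq
  have hk := Ap_kk q r hq
  have hm := Ap_mm q r hq
  have hi := Ap_iphi q r hq
  have hden := (((Ap.const 1).add (hk.mul hi)).mul ((Ap.const 1).add (hk.mul hi))).inv (by simp)
  have hA := (hk.sub hm).mul hden
  have hB := (hi.mul ((Ap.const 2).add ((hk.add hm).mul hi))).mul hden
  obtain ⟨M1, hM1, bA⟩ := hA.bd
  obtain ⟨M2, hM2, bB⟩ := hB.bd
  set k0 := 1 - 1 / q with hk0d
  set M := M1 + (k0 + 1) * M2 with hMd
  have hM : 0 < M := by positivity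
  have hsm : ∀ᶠ s in atTop, M * (Real.log s)⁻¹ < 1 := by
    have := linv.const_mul M
    rw [mul_zero] at this
    exact this.eventually_lt_const one_pos
  have hall := (((bA.and bB).and (hk.tendsto.eventually_const_lt hk0)).and
    ((Ap_pp q r).tendsto.eventually_const_lt hq)).and hsm
  obtain ⟨S, hS⟩ := eventually_atTop.1 hall
  refine IsBigO.of_bound M ?_
  filter_upwards [eventually_ge_atTop S, eventually_gt_atTop 1] with s hsS hs1
  have hL := Real.log_pos hs1
  obtain ⟨-, hs_small⟩ := hS s hsS
  have hδ : 0 < M * (Real.log s)⁻¹ := by positivity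
  -- main pointwise estimate
  have key : ∀ c, |c| ≤ k0 + 1 → ∀ x ≥ s, |((kk q r x - mm q r x) * phi q r x ^ 2
      - 2 * c * phi q r x - c * (kk q r x + mm q r x))
        / (phi q r x + kk q r x) ^ 2 - k0| ≤ M * (Real.log s)⁻¹ := by
    intro c hc x hx
    obtain ⟨⟨⟨⟨a1, b1⟩, kx⟩, px⟩, -⟩ := hS x (le_trans hsS hx)
    have hx1 : 1 < x := lt_of_lt_of_le hs1 hx
    have hf := phi_pos q r hx1
    have hlx : (Real.log x)⁻¹ ≤ (Real.log s)⁻¹ := by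
      have : Real.log s ≤ Real.log x := Real.log_le_log (by linarith) hx
      gcongr
    simp only [sub_zero, zero_mul, mul_zero, add_zero, mul_one, inv_one] at a1 b1
    have hne : phi q r x + kk q r x ≠ 0 := by positivity
    have hne' : 1 + kk q r x * (phi q r x)⁻¹ ≠ 0 := by positivity
    set A := (kk q r x - mm q r x) *
      ((1 + kk q r x * (phi q r x)⁻¹) * (1 + kk q r x * (phi q r x)⁻¹))⁻¹ with hAd
    set B := (phi q r x)⁻¹ * (2 + (kk q r x + mm q r x) * (phi q r x)⁻¹) *
      ((1 + kk q r x * (phi q r x)⁻¹) * (1 + kk q r x * (phi q r x)⁻¹))⁻¹ with hBd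
    have hid : ((kk q r x - mm q r x) * phi q r x ^ 2
      - 2 * c * phi q r x - c * (kk q r x + mm q r x))
        / (phi q r x + kk q r x) ^ 2 = A - c * B := by
      rw [hAd, hBd]
      have : 1 + kk q r x * (phi q r x)⁻¹ = (phi q r x + kk q r x) / phi q r x := by
        field_simp
      rw [this]
      field_simp
      ring
    rw [hid]
    calc |A - c * B - k0| = |(A - k0) - c * B| := by ring_nf
      _ ≤ |A - k0| + |c * B| := abs_sub _ _
      _ = |A - k0| + |c| * |B| := by rw [abs_mul]
      _ ≤ M1 * (Real.log x)⁻¹ + (k0 + 1) * (M2 * (Real.log x)⁻¹) := by gcongr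
      _ = M * (Real.log x)⁻¹ := by rw [hMd]; ring
      _ ≤ _ := by gcongr
  have hder : ∀ c, ∀ x ≥ s, _ := fun c x hx =>
    hd_WW q r c (lt_of_lt_of_le hs1 hx) (lt_trans one_pos (hS x (le_trans hsS hx)).1.2)
      (hS x (le_trans hsS hx)).1.1.2.le
  have lower : WW q r (k0 - M * (Real.log s)⁻¹) s ≤ Fint (ff q r) s := by
    have hc : |k0 - M * (Real.log s)⁻¹| ≤ k0 + 1 := by
      rw [abs_le]; constructor <;> linarith
    refine cmp_le _ _ _ s hs1 (cont_g q r) (int_g q r hq hs1) (hder _) (WW_zero q r _ hq) ?_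
    intro x hx
    have h1 := (abs_le.1 (key _ hc x hx)).1
    have hf := phi_pos q r (lt_of_lt_of_le hs1 hx)
    simp only [one_div_ff]
    rw [neg_mul, neg_le_neg_iff]
    refine mul_le_of_le_one_right (Real.exp_pos _).le ?_
    rw [add_le_iff_nonpos_right]
    exact div_nonpos_of_nonpos_of_nonneg (by linarith) (by positivity)
  have upper : Fint (ff q r) s ≤ WW q r (k0 + M * (Real.log s)⁻¹) s := by
    have hc : |k0 + M * (Real.log s)⁻¹| ≤ k0 + 1 := by
      rw [abs_le]; constructor <;> linarith
    have := cmp_le (fun x => -(1 / ff q r x)) (fun x => - WW q r (k0 + M * (Real.log s)⁻¹) x) _ s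
      hs1 (cont_g q r).neg (int_g q r hq hs1).neg (fun x hx => (hder _ x hx).neg)
      (by simpa using (WW_zero q r (k0 + M * (Real.log s)⁻¹) hq).neg) ?_
    · rw [integral_neg] at this
      unfold Fint
      linarith
    intro x hx
    have h1 := (abs_le.1 (key _ hc x hx)).2
    have hf := phi_pos q r (lt_of_lt_of_le hs1 hx)
    simp only [one_div_ff]
    rw [neg_mul, neg_neg, neg_neg]
    refine le_mul_of_one_le_right (Real.exp_pos _).le ?_
    rw [le_add_iff_nonneg_right]
    exact div_nonneg (by linarith) (by positivity)
  have hf := phi_pos q r hs1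
  obtain ⟨⟨⟨-, kx⟩, px⟩, -⟩ := hS s hsS
  have hs0 : 0 < s := by linarith
  have hp0 : 0 < pp q r s := by linarith
  have hf1 : 0 < phi1 q r s := by unfold phi1; positivity
  have hWid : ∀ c, (phi1 q r s * Real.exp (phi q r s) * WW q r c s *
      (1 + kk q r s / phi q r s) - 1) * phi q r s ^ 2 = c := by
    intro c
    unfold WW
    rw [Real.exp_neg]
    have h1 := Real.exp_pos (phi q r s)
    have h2 : phi q r s + kk q r s ≠ 0 := by positivity
    have h3 : phi q r s ^ 2 + kk q r s * phi q r s = phi q r s * (phi q r s + kk q r s) := by ring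
    rw [h3]
    field_simp
    ring
  have hmon : ∀ a b, a ≤ b → (phi1 q r s * Real.exp (phi q r s) * a *
      (1 + kk q r s / phi q r s) - 1) * phi q r s ^ 2 ≤ (phi1 q r s * Real.exp (phi q r s) * b *
      (1 + kk q r s / phi q r s) - 1) * phi q r s ^ 2 := by
    intro a b hab
    gcongr
  have l1 := hmon _ _ lower
  have l2 := hmon _ _ upper
  rw [hWid] at l1 l2
  rw [Real.norm_of_nonneg (by positivity : 0 ≤ (Real.log s)⁻¹), Real.norm_eq_abs, abs_le]
  unfold uu
  constructor <;> linarith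


lemma Ap_u (q r : ℝ) (hq : 1 < q) :
    Ap (uu q r) 1 ∧ Ap (fun x => phi q r x * (1 - uu q r x)) (1 - 1 / q) := by
  have hk := Ap_kk q r hq
  have hi := Ap_iphi q r hq
  have hE := Ap_E q r hq
  have hden := ((Ap.const 1).add (hk.mul hi)).inv (by simp)
  constructor
  · refine (((Ap.const 1).add (hE.mul (hi.mul hi))).mul hden).congr ?_ (by simp)
    filter_upwards [eventually_gt_atTop 1, hk.tendsto.eventually_const_lt (k0_pos hq)] with x h1 kx
    have hf := phi_pos q r h1
    have : 1 + kk q r x / phi q r x ≠ 0 := by positivity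
    rw [← div_eq_mul_inv (kk q r x)]
    field_simp
    ring
  · refine ((hk.sub (hE.mul hi)).mul hden).congr ?_ (by simp)
    filter_upwards [eventually_gt_atTop 1, hk.tendsto.eventually_const_lt (k0_pos hq)] with x h1 kx
    have hf := phi_pos q r h1
    have : 1 + kk q r x / phi q r x ≠ 0 := by positivity
    rw [← div_eq_mul_inv (kk q r x)]
    have h2 : phi q r x + kk q r x ≠ 0 := by positivity
    field_simp
    ring

lemma Ap_log (q r : ℝ) (hq : 1 < q) :
    Ap (fun x => -Real.log (Fint (ff q r) x) / phi q r x) 1 := by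
  have hi := Ap_iphi q r hq
  have hu := (Ap_u q r hq).1
  have hp := Ap_pp q r
  have hq0 : 0 < q := by linarith
  -- bounded terms
  have t1 : Tendsto (fun x => Real.log (pp q r x) - Real.log (uu q r x)) atTop
      (𝓝 (Real.log q - Real.log 1)) :=
    (hp.tendsto.log hq0.ne').sub (hu.tendsto.log one_ne_zero)
  have b1 : (fun x => (Real.log (pp q r x) - Real.log (uu q r x)) * (phi q r x)⁻¹) =O[atTop]
      (fun x => (Real.log x)⁻¹) := by
    have h : (fun x => (phi q r x)⁻¹) =O[atTop] (fun x => (Real.log x)⁻¹) := by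
      have := hi
      unfold Ap at this
      simpa using this
    have := (t1.isBigO_one ℝ).mul h
    simpa using this
  have b2 : (fun x => ((q - 1) * Real.log x + r * Real.log (Real.log x)) * (phi q r x)⁻¹)
      =O[atTop] (fun x => (Real.log x)⁻¹) := by
    have hll : (fun x => Real.log (Real.log x)) =O[atTop] Real.log :=
      (Real.isLittleO_log_id_atTop.comp_tendsto Real.tendsto_log_atTop).isBigO
    have h1 : (fun x => (q - 1) * Real.log x + r * Real.log (Real.log x)) =O[atTop] Real.log :=
      ((isBigO_refl _ _).const_mul_left _).add (hll.const_mul_left _)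
    refine (h1.mul ((inv_phi_O q r hq).trans inv_O)).congr' EventuallyEq.rfl ?_
    filter_upwards [eventually_gt_atTop 1] with x h1
    have := Real.log_pos h1
    field_simp
  have hs := (Ap.const 1).add (Ap_small (b1.add b2))
  refine hs.congr ?_ (by simp)
  filter_upwards [eventually_gt_atTop 1, hp.tendsto.eventually_const_lt hq0,
    hu.tendsto.eventually_const_lt one_pos] with x h1 px ux
  have hx0 : 0 < x := by linarith
  have hL := Real.log_pos h1
  have hf := phi_pos q r h1
  have hf1 : 0 < phi1 q r x := by unfold phi1; positivity
  have he := Real.exp_pos (phi q r x)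
  have hF : Fint (ff q r) x ≠ 0 := by
    intro h0
    unfold uu at ux
    rw [h0, mul_zero] at ux
    exact lt_irrefl _ ux
  have hlu : Real.log (uu q r x) = Real.log (phi1 q r x) + phi q r x
      + Real.log (Fint (ff q r) x) := by
    unfold uu
    rw [Real.log_mul (by positivity) hF, Real.log_mul hf1.ne' he.ne', Real.log_exp]
  have hl1 : Real.log (phi1 q r x) = q * Real.log x + r * Real.log (Real.log x)
      + Real.log (pp q r x) - Real.log x := by
    unfold phi1
    rw [Real.log_div (by positivity) hx0.ne', Real.log_mul hf.ne' px.ne']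
    unfold phi
    rw [Real.log_mul (by positivity) (by positivity), Real.log_rpow hx0, Real.log_rpow hL]
  have hl : -Real.log (Fint (ff q r) x) = phi q r x + Real.log (phi1 q r x)
      - Real.log (uu q r x) := by rw [hlu]; ring
  rw [hl, hl1]
  field_simp
  ring

lemma hd_ff (q r : ℝ) {x : ℝ} (hx : 1 < x) :
    HasDerivAt (ff q r) (phi1 q r x * Real.exp (phi q r x)) x :=
  (hd_phi q r hx).exp.congr_deriv (by ring)

lemma hd_ff2 (q r : ℝ) {x : ℝ} (hx : 1 < x) (hp : 0 < pp q r x) :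
    deriv (deriv (ff q r)) x = (phi1 q r x) ^ 2 * (kk q r x / phi q r x + 1)
      * Real.exp (phi q r x) := by
  have h : deriv (ff q r) =ᶠ[𝓝 x] fun y => phi1 q r y * Real.exp (phi q r y) := by
    filter_upwards [Ioi_mem_nhds hx] with y hy
    exact (hd_ff q r hy).deriv
  rw [h.deriv_eq]
  have := ((hd_phi1 q r hx hp).mul (hd_phi q r hx).exp).deriv
  refine this.trans ?_
  ring

lemma Ap_B1 (q r : ℝ) (hq : 1 < q) :
    Ap (invB1 (ff q r) (Fint (ff q r))) (1 - 1 / q) := by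
  refine ((Ap_log q r hq).mul (Ap_u q r hq).2).congr ?_ (by ring)
  filter_upwards [eventually_gt_atTop 1] with x h1
  have hf := phi_pos q r h1
  unfold invB1
  rw [(hd_ff q r h1).deriv]
  unfold uu
  field_simp

lemma Ap_B2 (q r : ℝ) (hq : 1 < q) :
    Ap (invB2 (ff q r) (Fint (ff q r))) (1 - 1 / q) := by
  have hl := Ap_log q r hq
  refine (((Ap_u q r hq).1.mul (hl.mul hl)).mul (Ap_E q r hq)).congr ?_ (by ring)
  filter_upwards [eventually_gt_atTop 1,
    (Ap_pp q r).tendsto.eventually_const_lt (show 0 < q by linarith)] with x h1 hp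
  have hx0 : 0 < x := by linarith
  have hf := phi_pos q r h1
  have hf1 : 0 < phi1 q r x := by unfold phi1; positivity
  have he := Real.exp_pos (phi q r x)
  unfold invB2
  rw [(hd_ff q r h1).deriv, hd_ff2 q r h1 hp]
  have e1 : ff q r x = Real.exp (phi q r x) := rfl
  rw [e1]
  have e2 : Real.exp (phi q r x) * (phi1 q r x ^ 2 * (kk q r x / phi q r x + 1) *
      Real.exp (phi q r x)) * Fint (ff q r) x / (phi1 q r x * Real.exp (phi q r x))
      = uu q r x * (1 + kk q r x / phi q r x) := by
    unfold uu
    field_simp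
    ring
  rw [e2]
  have e3 : phi1 q r x * Real.exp (phi q r x) * Fint (ff q r) x = uu q r x := rfl
  rw [e3]
  field_simp

end S17

/-- Estimates (3.5e), (3.5f): for `f(s) = e^{s^q (log s)^r}` with `q > 1`,
`1/B₁[f](s) = 1 − 1/q + O(1/log s)` and `1/B₂[f](s) = 1 − 1/q + O(1/log s)`;
in particular `B = q/(q−1)`. -/
theorem stmt17 (q r : ℝ) (hq : 1 < q) :
    (∃ C > (0 : ℝ), ∃ s₁ > Real.exp 1, ∀ s ≥ s₁,
      |invB1 (fun x => Real.exp (x ^ q * (Real.log x) ^ r))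
          (Fint (fun x => Real.exp (x ^ q * (Real.log x) ^ r))) s - (1 - 1 / q)|
        ≤ C / Real.log s
      ∧ |invB2 (fun x => Real.exp (x ^ q * (Real.log x) ^ r))
          (Fint (fun x => Real.exp (x ^ q * (Real.log x) ^ r))) s - (1 - 1 / q)|
        ≤ C / Real.log s)
    ∧ Tendsto (fun s => invB2 (fun x => Real.exp (x ^ q * (Real.log x) ^ r))
        (Fint (fun x => Real.exp (x ^ q * (Real.log x) ^ r))) s) atTop
        (nhds (1 - 1 / q)) := by
  have h1 := S17.Ap_B1 q r hq
  have h2 := S17.Ap_B2 q r hq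
  refine ⟨?_, h2.tendsto⟩
  obtain ⟨M1, hM1, b1⟩ := h1.bd
  obtain ⟨M2, hM2, b2⟩ := h2.bd
  obtain ⟨S, hS⟩ := eventually_atTop.1 (b1.and b2)
  refine ⟨M1 + M2, by positivity, max S (Real.exp 1 + 1), ?_, ?_⟩
  · exact lt_of_lt_of_le (by linarith) (le_max_right _ _)
  intro s hs
  obtain ⟨c1, c2⟩ := hS s (le_trans (le_max_left _ _) hs)
  have hs1 : 1 < s := by
    have := le_trans (le_max_right _ _) hs
    have := Real.exp_pos 1
    linarith
  have hL := inv_pos.2 (Real.log_pos hs1)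
  have e : (M1 + M2) / Real.log s = (M1 + M2) * (Real.log s)⁻¹ := div_eq_mul_inv _ _
  rw [e]
  constructor
  · refine le_trans c1 ?_
    exact mul_le_mul_of_nonneg_right (by linarith) hL.le
  · refine le_trans c2 ?_
    exact mul_le_mul_of_nonneg_right (by linarith) hL.le
end

section
/- Let f(u) := e^{e^u}. For 0 < t < 1 set w(t) := (1/4)·t²·(−2 log t + 1). Then there exist r₀ ∈ (0,1), C > 0, and a twice continuously differentiable function u : (0,r₀) → ℝ such that u''(t) + u'(t)/t + e^{e^{u(t)}} = 0 for all t ∈ (0,r₀), u(t) → ∞ as t → 0⁺, and for all t ∈ (0,r₀): | u(t) − log( −log w(t) − log(−log w(t)) ) | ≤ C · log(−log w(t)) / (−log w(t))². -/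
open Filter

/-- `w(t) = (1/4)·t²·(−2 log t + 1)`. -/
noncomputable def w18 (t : ℝ) : ℝ := (1 / 4) * t ^ 2 * (-2 * Real.log t + 1)


lemma aux_int6 {x : ℝ} (hx : 0 < x) :
    MeasureTheory.IntegrableOn (fun σ : ℝ => 1 / σ ^ 6) (Set.Ioi x) ∧
      ∫ σ in Set.Ioi x, 1 / σ ^ 6 = 1 / (5 * x ^ 5) := by
  have e : ∀ σ : ℝ, 0 < σ → σ ^ (-6 : ℝ) = 1 / σ ^ 6 := by
    intro σ hσ
    rw [Real.rpow_neg hσ.le, one_div]; norm_cast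
  have e5 : x ^ (-5 : ℝ) = 1 / x ^ 5 := by
    rw [Real.rpow_neg hx.le, one_div]; norm_cast
  constructor
  · refine (integrableOn_Ioi_rpow_of_lt (a := -6) (by norm_num) hx).congr_fun ?_ measurableSet_Ioi
    intro σ hσ
    exact e σ (hx.trans hσ)
  · have h := integral_Ioi_rpow_of_lt (a := -6) (by norm_num) hx
    rw [MeasureTheory.setIntegral_congr_fun measurableSet_Ioi
      (fun σ hσ => (e σ (hx.trans hσ)).symm), h]
    norm_num [e5]
    field_simp

lemma aux_int2 {x : ℝ} (hx : 0 < x) :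
    MeasureTheory.IntegrableOn (fun σ : ℝ => 1 / σ ^ 2) (Set.Ioi x) ∧
      ∫ σ in Set.Ioi x, 1 / σ ^ 2 = 1 / x := by
  have e : ∀ σ : ℝ, 0 < σ → σ ^ (-2 : ℝ) = 1 / σ ^ 2 := by
    intro σ hσ
    rw [Real.rpow_neg hσ.le, one_div]; norm_cast
  have e5 : x ^ (-1 : ℝ) = 1 / x := by
    rw [Real.rpow_neg hx.le, one_div]; norm_num
  constructor
  · refine (integrableOn_Ioi_rpow_of_lt (a := -2) (by norm_num) hx).congr_fun ?_ measurableSet_Ioi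
    intro σ hσ
    exact e σ (hx.trans hσ)
  · have h := integral_Ioi_rpow_of_lt (a := -2) (by norm_num) hx
    rw [MeasureTheory.setIntegral_congr_fun measurableSet_Ioi
      (fun σ hσ => (e σ (hx.trans hσ)).symm), h]
    norm_num [e5]

/-- tail integral -/
lemma tail_deriv {x0 : ℝ} {F : ℝ → ℝ} (hF : Continuous F)
    (hi : MeasureTheory.IntegrableOn F (Set.Ioi x0)) :
    ∀ x, x0 ≤ x → HasDerivAt (fun y => (∫ σ in Set.Ioi x0, F σ) - ∫ σ in x0..y, F σ) (-F x) x ∧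
      (∫ σ in Set.Ioi x0, F σ) - (∫ σ in x0..x, F σ) = ∫ σ in Set.Ioi x, F σ := by
  intro x hx
  constructor
  · have := (intervalIntegral.integral_hasDerivAt_right (hF.intervalIntegrable x0 x)
      (hF.stronglyMeasurableAtFilter _ _) hF.continuousAt).const_sub (∫ σ in Set.Ioi x0, F σ)
    exact this
  · have h := intervalIntegral.integral_Ioi_sub_Ioi hi (hx)
    rw [← h]; ring

/-- The Duhamel operator. -/
noncomputable def duh (x0 : ℝ) (F : ℝ → ℝ) (x : ℝ) : ℝ :=
  (1 / 2) * (Real.cos (2 * x) * ((∫ σ in Set.Ioi x0, Real.sin (2 * σ) * F σ) -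
      ∫ σ in x0..x, Real.sin (2 * σ) * F σ)
    - Real.sin (2 * x) * ((∫ σ in Set.Ioi x0, Real.cos (2 * σ) * F σ) -
      ∫ σ in x0..x, Real.cos (2 * σ) * F σ))

noncomputable def duh' (x0 : ℝ) (F : ℝ → ℝ) (x : ℝ) : ℝ :=
  - (Real.sin (2 * x) * ((∫ σ in Set.Ioi x0, Real.sin (2 * σ) * F σ) -
      ∫ σ in x0..x, Real.sin (2 * σ) * F σ)
    + Real.cos (2 * x) * ((∫ σ in Set.Ioi x0, Real.cos (2 * σ) * F σ) -
      ∫ σ in x0..x, Real.cos (2 * σ) * F σ))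

lemma int_sin {s : Set ℝ} {F : ℝ → ℝ} (hi : MeasureTheory.IntegrableOn F s) :
    MeasureTheory.IntegrableOn (fun σ => Real.sin (2 * σ) * F σ) s := by
  refine MeasureTheory.Integrable.bdd_mul (c := 1) hi ?_ ?_
  · exact (by fun_prop : Continuous fun σ : ℝ => Real.sin (2 * σ)).aestronglyMeasurable
  · exact Eventually.of_forall fun σ => by simpa using Real.abs_sin_le_one _

lemma int_cos {s : Set ℝ} {F : ℝ → ℝ} (hi : MeasureTheory.IntegrableOn F s) :
    MeasureTheory.IntegrableOn (fun σ => Real.cos (2 * σ) * F σ) s := by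
  refine MeasureTheory.Integrable.bdd_mul (c := 1) hi ?_ ?_
  · exact (by fun_prop : Continuous fun σ : ℝ => Real.cos (2 * σ)).aestronglyMeasurable
  · exact Eventually.of_forall fun σ => by simpa using Real.abs_cos_le_one _

lemma duh_spec {x0 : ℝ} {F : ℝ → ℝ} (hF : Continuous F)
    (hi : MeasureTheory.IntegrableOn F (Set.Ioi x0)) {x : ℝ} (hx : x0 ≤ x) :
    HasDerivAt (duh x0 F) (duh' x0 F x) x ∧
    HasDerivAt (duh' x0 F) (F x - 4 * duh x0 F x) x ∧
    |duh x0 F x| ≤ (1 / 2) * ∫ σ in Set.Ioi x, |F σ| := by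
  have c1 : Continuous fun σ => Real.sin (2 * σ) * F σ := by fun_prop
  have c2 : Continuous fun σ => Real.cos (2 * σ) * F σ := by fun_prop
  obtain ⟨d1, e1⟩ := tail_deriv c1 (int_sin hi) x hx
  obtain ⟨d2, e2⟩ := tail_deriv c2 (int_cos hi) x hx
  have dl : HasDerivAt (fun y : ℝ => 2 * y) 2 x := by simpa using (hasDerivAt_id x).const_mul 2
  have ds := dl.sin
  have dc := dl.cos
  have pyth := Real.sin_sq_add_cos_sq (2 * x)
  refine ⟨?_, ?_, ?_⟩
  · refine (((dc.mul d1).sub (ds.mul d2)).const_mul (1 / 2)).congr_deriv ?_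
    simp only [duh']
    ring
  · refine (((ds.mul d1).add (dc.mul d2)).neg).congr_deriv ?_
    simp only [duh]
    linear_combination (F x) * pyth
  · have hix : MeasureTheory.IntegrableOn F (Set.Ioi x) :=
      hi.mono_set (Set.Ioi_subset_Ioi hx)
    have : duh x0 F x = (1 / 2) * ∫ σ in Set.Ioi x, Real.sin (2 * (σ - x)) * F σ := by
      simp only [duh]
      rw [e1, e2, ← MeasureTheory.integral_const_mul, ← MeasureTheory.integral_const_mul,
        ← MeasureTheory.integral_sub ((int_sin hix).const_mul _) ((int_cos hix).const_mul _)]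
      congr 2
      ext σ
      rw [mul_sub, Real.sin_sub]; ring
    rw [this, abs_mul, abs_of_pos (by norm_num : (0 : ℝ) < 1 / 2)]
    gcongr
    refine (MeasureTheory.abs_integral_le_integral_abs).trans ?_
    refine MeasureTheory.integral_mono_of_nonneg (Eventually.of_forall fun _ => abs_nonneg _)
      hix.abs (Eventually.of_forall fun σ => ?_)
    simp only [abs_mul]
    exact mul_le_of_le_one_left (abs_nonneg _) (Real.abs_sin_le_one _)

lemma fixpt {x0 A K : ℝ} {g : ℝ → ℝ → ℝ} (hx0 : 1 ≤ x0) (hA : 0 ≤ A) (hK : 0 ≤ K) (hKx : K ≤ x0)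
    (hg : Continuous (Function.uncurry g))
    (hb : ∀ σ, x0 ≤ σ → ∀ z, |g σ z| ≤ A * (1 / σ ^ 6))
    (hl : ∀ σ, x0 ≤ σ → ∀ z z', |g σ z - g σ z'| ≤ K * |z - z'| * (1 / σ ^ 2)) :
    ∃ Z Z' : ℝ → ℝ, ∀ x, x0 < x →
      HasDerivAt Z (Z' x) x ∧ HasDerivAt Z' (g x (Z x) - 4 * Z x) x ∧ |Z x| ≤ A / 10 / x ^ 5 := by
  have hpos : ∀ x, x0 ≤ x → 0 < x := fun x hx => by linarith
  have hc : ∀ f : ℝ → ℝ, Continuous f → Continuous (fun σ => g σ (f σ)) := fun f hf =>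
    hg.comp (continuous_id.prodMk hf)
  have hIntg : ∀ f : ℝ → ℝ, Continuous f →
      MeasureTheory.IntegrableOn (fun σ => g σ (f σ)) (Set.Ioi x0) := by
    intro f hf
    refine MeasureTheory.Integrable.mono' ((aux_int6 (hpos x0 le_rfl)).1.const_mul A)
      (hc f hf).aestronglyMeasurable ?_
    refine (MeasureTheory.ae_restrict_iff' measurableSet_Ioi).2 (Eventually.of_forall ?_)
    intro σ hσ
    exact hb σ (le_of_lt hσ) _
  have hbd : ∀ f : ℝ → ℝ, Continuous f → ∀ x, x0 ≤ x →
      |duh x0 (fun σ => g σ (f σ)) x| ≤ A / 10 / x ^ 5 := by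
    intro f hf x hx
    have hxp := hpos x hx
    refine (duh_spec (hc f hf) (hIntg f hf) hx).2.2.trans ?_
    have : ∫ σ in Set.Ioi x, |g σ (f σ)| ≤ ∫ σ in Set.Ioi x, A * (1 / σ ^ 6) := by
      refine MeasureTheory.setIntegral_mono_on
        ((hIntg f hf).mono_set (Set.Ioi_subset_Ioi hx)).abs
        ((aux_int6 hxp).1.const_mul A) measurableSet_Ioi ?_
      intro σ hσ
      exact hb σ (hx.trans (le_of_lt hσ)) _
    rw [MeasureTheory.integral_const_mul, (aux_int6 hxp).2] at this
    calc (1 / 2) * ∫ σ in Set.Ioi x, |g σ (f σ)| ≤ (1 / 2) * (A * (1 / (5 * x ^ 5))) := by gcongr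
      _ = _ := by field_simp; ring
  -- the map
  have hcont : ∀ f : ℝ → ℝ, Continuous f →
      Continuous (fun x => duh x0 (fun σ => g σ (f σ)) (max x x0)) := by
    intro f hf
    rw [continuous_iff_continuousAt]
    intro x
    exact ContinuousAt.comp (g := duh x0 (fun σ => g σ (f σ))) (f := fun x => max x x0)
      (duh_spec (hc f hf) (hIntg f hf) (le_max_right x x0)).1.continuousAt
      (by fun_prop)
  have hbd2 : ∀ f : ℝ → ℝ, Continuous f → ∀ x,
      ‖duh x0 (fun σ => g σ (f σ)) (max x x0)‖ ≤ A / 10 := by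
    intro f hf x
    refine (hbd f hf _ (le_max_right x x0)).trans ?_
    have : 1 ≤ max x x0 := hx0.trans (le_max_right _ _)
    exact div_le_self (by positivity) (one_le_pow₀ this)
  let T : BoundedContinuousFunction ℝ ℝ → BoundedContinuousFunction ℝ ℝ := fun f =>
    BoundedContinuousFunction.ofNormedAddCommGroup _ (hcont f f.continuous) _
      (hbd2 f f.continuous)
  have hT : ∀ f x, T f x = duh x0 (fun σ => g σ (f σ)) (max x x0) := fun f x => rfl
  have hsub : ∀ f h : BoundedContinuousFunction ℝ ℝ, ∀ x, x0 ≤ x →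
      duh x0 (fun σ => g σ (f σ)) x - duh x0 (fun σ => g σ (h σ)) x
       = duh x0 (fun σ => g σ (f σ) - g σ (h σ)) x := by
    intro f h x hx
    have cf := hc f f.continuous
    have ch := hc h h.continuous
    have i1 := hIntg f f.continuous
    have i2 := hIntg h h.continuous
    simp only [duh, mul_sub]
    rw [MeasureTheory.integral_sub (int_sin i1) (int_sin i2),
      MeasureTheory.integral_sub (int_cos i1) (int_cos i2),
      intervalIntegral.integral_sub, intervalIntegral.integral_sub]
    · ring
    all_goals
      apply Continuous.intervalIntegrable
      fun_prop
  have hcon : ContractingWith (1 / 2) T := by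
    refine ⟨by rw [← NNReal.coe_lt_coe]; norm_num, LipschitzWith.of_dist_le_mul fun f h => ?_⟩
    rw [BoundedContinuousFunction.dist_le (by positivity)]
    intro x
    rw [hT, hT, Real.dist_eq, hsub _ _ _ (le_max_right _ _)]
    set y := max x x0
    have hy : x0 ≤ y := le_max_right _ _
    have hyp := hpos y hy
    have cc : Continuous fun σ => g σ (f σ) - g σ (h σ) :=
      (hc f f.continuous).sub (hc h h.continuous)
    have ii := (hIntg f f.continuous).sub (hIntg h h.continuous)
    refine (duh_spec cc ii hy).2.2.trans ?_
    have : ∫ σ in Set.Ioi y, |g σ (f σ) - g σ (h σ)| ≤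
        ∫ σ in Set.Ioi y, K * dist f h * (1 / σ ^ 2) := by
      refine MeasureTheory.setIntegral_mono_on
        (ii.mono_set (Set.Ioi_subset_Ioi hy)).abs
        ((aux_int2 hyp).1.const_mul _) measurableSet_Ioi ?_
      intro σ hσ
      refine (hl σ (hy.trans (le_of_lt hσ)) _ _).trans ?_
      gcongr
      exact BoundedContinuousFunction.dist_coe_le_dist (f := f) (g := h) σ
    rw [MeasureTheory.integral_const_mul, (aux_int2 hyp).2] at this
    have h1 : K * (1 / y) ≤ 1 := by
      rw [mul_one_div, div_le_one hyp]; linarith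
    have hd : 0 ≤ dist f h := dist_nonneg
    push_cast
    nlinarith
  obtain ⟨Z, hZ⟩ : ∃ Z, T Z = Z := ⟨_, hcon.fixedPoint_isFixedPt⟩
  have hZx : ∀ x, x0 ≤ x → Z x = duh x0 (fun σ => g σ (Z σ)) x := by
    intro x hx
    conv_lhs => rw [← hZ]
    rw [hT, max_eq_left hx]
  refine ⟨Z, duh' x0 (fun σ => g σ (Z σ)), fun x hx => ?_⟩
  obtain ⟨a1, a2, a3⟩ := duh_spec (hc Z Z.continuous) (hIntg Z Z.continuous) hx.le
  refine ⟨?_, ?_, ?_⟩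
  · refine a1.congr_of_eventuallyEq ?_
    filter_upwards [lt_mem_nhds hx] with y hy
    exact hZx y hy.le
  · rw [← hZx x hx.le] at a2
    exact a2
  · rw [hZx x hx.le]
    exact hbd Z Z.continuous x hx.le

noncomputable def mm (x : ℝ) : ℝ := Real.sqrt (x + 2 / x)
noncomputable def cc (x : ℝ) : ℝ :=
  2 / (x ^ 2 * (x ^ 2 + 2)) - 3 / 4 * (x ^ 2 - 2) ^ 2 / (x ^ 2 * (x ^ 2 + 2) ^ 2)
noncomputable def ph2 (x : ℝ) : ℝ :=
  -4 * x ^ 2 * (x ^ 4 + 6) / ((x ^ 2 + 2) ^ 3 * (x ^ 2 - 3) ^ 2)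
noncomputable def GG (x z : ℝ) : ℝ :=
  (4 - cc x) * z - mm x ^ 3 * (ph2 x + 4 / x ^ 4 *
    Real.exp ((x ^ 2 - 3) * (Real.exp (mm x * z) - 1)))

lemma mm_sq {x : ℝ} (hx : 0 < x) : mm x ^ 2 = x + 2 / x := Real.sq_sqrt (by positivity)
lemma mm_pos {x : ℝ} (hx : 0 < x) : 0 < mm x := Real.sqrt_pos.2 (by positivity)

lemma mm_le {x : ℝ} (hx : 10000 ≤ x) : mm x ^ 2 ≤ 2 * x ∧ mm x ≤ x / 2 := by
  have h0 : 0 < x := by linarith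
  have h := mm_sq h0
  have h1 : 2 / x ≤ 1 := by rw [div_le_one h0]; linarith
  have h2 : mm x ^ 2 ≤ 2 * x := by linarith
  refine ⟨h2, abs_le_of_sq_le_sq' (by nlinarith) (by linarith) |>.2⟩

lemma cc_le {x : ℝ} (hx : 10000 ≤ x) : |cc x| ≤ 1 / x ^ 2 := by
  have h0 : 0 < x := by linarith
  have hq : (10000:ℝ) ≤ x ^ 2 := by nlinarith
  unfold cc
  generalize x ^ 2 = q at *
  have hq0 : 0 < q := by linarith
  have h1 : 2 / (q * (q + 2)) ≤ 1 / q := by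
    rw [div_le_div_iff₀ (by positivity) (by positivity)]; nlinarith
  have h2 : 0 ≤ 2 / (q * (q + 2)) := by positivity
  have h3 : 3 / 4 * (q - 2) ^ 2 / (q * (q + 2) ^ 2) ≤ 1 / q := by
    rw [div_le_div_iff₀ (by positivity) (by positivity)]; nlinarith [mul_pos hq0 hq0]
  have h4 : 0 ≤ 3 / 4 * (q - 2) ^ 2 / (q * (q + 2) ^ 2) := by positivity
  rw [abs_le]; constructor <;> linarith

lemma ph2_le {x : ℝ} (hx : 10000 ≤ x) : |ph2 x + 4 / x ^ 4| ≤ 100 / x ^ 8 := by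
  have h0 : 0 < x := by linarith
  have hq : (10000:ℝ) ≤ x ^ 2 := by nlinarith
  unfold ph2
  rw [show x ^ 4 = (x ^ 2) ^ 2 by ring, show x ^ 8 = (x ^ 2) ^ 4 by ring]
  generalize x ^ 2 = q at *
  have hq0 : 0 < q := by linarith
  have hq3 : 0 < q - 3 := by linarith
  have e : -4 * q * (q ^ 2 + 6) / ((q + 2) ^ 3 * (q - 3) ^ 2) + 4 / q ^ 2 =
    -(4 * (21 * q ^ 3 + 10 * q ^ 2 - 60 * q - 72)) / (q ^ 2 * ((q + 2) ^ 3 * (q - 3) ^ 2)) := by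
    field_simp
    ring
  have hn : 0 ≤ 21 * q ^ 3 + 10 * q ^ 2 - 60 * q - 72 := by nlinarith [pow_pos hq0 2, pow_pos hq0 3]
  rw [e, abs_div, abs_neg, abs_of_nonneg (by positivity), abs_of_pos (by positivity),
    div_le_div_iff₀ (by positivity) (by positivity)]
  obtain ⟨p, rfl⟩ : ∃ p, q = p + 10000 := ⟨q - 10000, by ring⟩
  have hp : 0 ≤ p := by linarith
  rw [← sub_nonneg]
  ring_nf
  positivity

lemma GG_zero {x : ℝ} (hx : 10000 ≤ x) : |GG x 0| ≤ 100 * (1 / x ^ 6) := by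
  have h0 : 0 < x := by linarith
  have hm := mm_pos h0
  obtain ⟨h1, h2⟩ := mm_le hx
  have h3 : mm x ^ 3 ≤ x ^ 2 := by
    calc mm x ^ 3 = mm x ^ 2 * mm x := by ring
      _ ≤ 2 * x * (x / 2) := by gcongr
      _ = x ^ 2 := by ring
  have : GG x 0 = - (mm x ^ 3 * (ph2 x + 4 / x ^ 4)) := by simp [GG]
  rw [this, abs_neg, abs_mul, abs_of_pos (by positivity)]
  calc mm x ^ 3 * |ph2 x + 4 / x ^ 4| ≤ x ^ 2 * (100 / x ^ 8) := by
        gcongr; exact ph2_le hx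
    _ = _ := by field_simp

lemma GG_deriv (x z : ℝ) : HasDerivAt (GG x) ((4 - cc x) - mm x ^ 3 * (4 / x ^ 4 *
    (Real.exp ((x ^ 2 - 3) * (Real.exp (mm x * z) - 1)) * ((x ^ 2 - 3) *
      (Real.exp (mm x * z) * mm x))))) z := by
  have d0 : HasDerivAt (fun z : ℝ => mm x * z) (mm x) z := by
    simpa using (hasDerivAt_id z).const_mul (mm x)
  have d1 := ((d0.exp.sub_const 1).const_mul (x ^ 2 - 3)).exp
  have d2 := (((d1.const_mul (4 / x ^ 4)).const_add (ph2 x)).const_mul (mm x ^ 3))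
  have d3 : HasDerivAt (fun z : ℝ => (4 - cc x) * z) (4 - cc x) z := by
    simpa using (hasDerivAt_id z).const_mul (4 - cc x)
  exact d3.sub d2

lemma GG_deriv_le {x z : ℝ} (hx : 10000 ≤ x) (hz : |z| ≤ 100 / x ^ 5) :
   |(4 - cc x) - mm x ^ 3 * (4 / x ^ 4 *
    (Real.exp ((x ^ 2 - 3) * (Real.exp (mm x * z) - 1)) * ((x ^ 2 - 3) *
      (Real.exp (mm x * z) * mm x))))| ≤ 5000 / x ^ 2 := by
  have h0 : 0 < x := by linarith
  have hq : (100000000:ℝ) ≤ x ^ 2 := by nlinarith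
  have hm := mm_pos h0
  obtain ⟨h1, h2⟩ := mm_le hx
  set V := mm x * z with hV
  have hVle : |V| ≤ 100 / x ^ 4 := by
    rw [hV, abs_mul, abs_of_pos hm]
    calc mm x * |z| ≤ x * (100 / x ^ 5) := by gcongr; linarith
      _ = _ := by field_simp
  clear_value V
  have hV2 : |V| * x ^ 2 ≤ 100 / x ^ 2 := by
    calc |V| * x ^ 2 ≤ 100 / x ^ 4 * x ^ 2 := by gcongr
      _ = _ := by field_simp
  have hi : 100 / x ^ 2 ≤ 1 / 1000000 := by
    rw [div_le_div_iff₀ (by positivity) (by positivity)]; linarith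
  have hV0 := abs_nonneg V
  have hVs : |V| ≤ 100 / x ^ 2 := by nlinarith
  have he : |Real.exp V - 1| ≤ 2 * |V| := Real.abs_exp_sub_one_le (by linarith)
  set E := V + (x ^ 2 - 3) * (Real.exp V - 1) with hE
  have hEle : |E| ≤ 300 / x ^ 2 := by
    calc |E| ≤ |V| + |(x ^ 2 - 3) * (Real.exp V - 1)| := abs_add_le _ _
      _ ≤ |V| + x ^ 2 * (2 * |V|) := by
        rw [abs_mul, abs_of_pos (by linarith : 0 < x ^ 2 - 3)]; gcongr; linarith
      _ ≤ 100 / x ^ 2 + 2 * (100 / x ^ 2) := by linarith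
      _ = _ := by ring
  have hEe : |Real.exp E - 1| ≤ 2 * |E| := Real.abs_exp_sub_one_le (by
    calc |E| ≤ 3 * (100 / x ^ 2) := by rw [← mul_div_assoc]; norm_num; exact hEle
      _ ≤ 1 := by linarith)
  have hEe' : |Real.exp E - 1| ≤ 600 / x ^ 2 := by
    calc |Real.exp E - 1| ≤ 2 * (300 / x ^ 2) := by linarith
      _ = _ := by ring
  set Pf := (x ^ 2 + 2) ^ 2 * (x ^ 2 - 3) / x ^ 6 with hPf
  have hm4 : mm x ^ 4 = (x ^ 2 + 2) ^ 2 / x ^ 2 := by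
    rw [show mm x ^ 4 = (mm x ^ 2) ^ 2 by ring, mm_sq h0]; field_simp
  have hP1 : |1 - Pf| ≤ 2 / x ^ 2 := by
    rw [hPf, show x ^ 6 = (x ^ 2) ^ 3 by ring]
    generalize x ^ 2 = q at *
    have hq0 : 0 < q := by linarith
    have : 1 - (q + 2) ^ 2 * (q - 3) / q ^ 3 = (- q ^ 2 + 8 * q + 12) / q ^ 3 := by
      field_simp; ring
    rw [this, abs_div, abs_of_pos (by positivity : 0 < q ^ 3), div_le_div_iff₀ (by positivity)
      (by positivity)]
    have : |-q ^ 2 + 8 * q + 12| ≤ 2 * q ^ 2 := by rw [abs_le]; constructor <;> nlinarith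
    calc |-q ^ 2 + 8 * q + 12| * q ≤ 2 * q ^ 2 * q := by gcongr
      _ = _ := by ring
  have hP2 : |Pf| ≤ 2 := by
    have : |Pf| ≤ |1 - Pf| + 1 := by
      have := abs_sub_abs_le_abs_sub Pf 1
      rw [abs_sub_comm, abs_one] at this; linarith
    have e : 2 / x ^ 2 = (100 / x ^ 2) / 50 := by ring
    linarith
  have key : (4 - cc x) - mm x ^ 3 * (4 / x ^ 4 *
    (Real.exp ((x ^ 2 - 3) * (Real.exp V - 1)) * ((x ^ 2 - 3) *
      (Real.exp V * mm x)))) = - cc x + 4 * (1 - Pf) - 4 * (Pf * (Real.exp E - 1)) := by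
    have : Real.exp E = Real.exp V * Real.exp ((x ^ 2 - 3) * (Real.exp V - 1)) := Real.exp_add _ _
    have hmp : mm x ^ 4 * (x ^ 2 - 3) / x ^ 4 = Pf := by
      rw [hm4, hPf]; field_simp
    rw [this]
    linear_combination (-4 * Real.exp V * Real.exp ((x ^ 2 - 3) * (Real.exp V - 1))) * hmp
  rw [key]
  have hc := cc_le hx
  calc |- cc x + 4 * (1 - Pf) - 4 * (Pf * (Real.exp E - 1))|
      ≤ |- cc x + 4 * (1 - Pf)| + |4 * (Pf * (Real.exp E - 1))| := abs_sub _ _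
    _ ≤ |- cc x| + |4 * (1 - Pf)| + |4 * (Pf * (Real.exp E - 1))| := by
        gcongr; exact abs_add_le _ _
    _ = |cc x| + 4 * |1 - Pf| + 4 * (|Pf| * |Real.exp E - 1|) := by
        rw [abs_neg, abs_mul, abs_mul, abs_mul]; norm_num
    _ ≤ 1 / x ^ 2 + 4 * (2 / x ^ 2) + 4 * (2 * (600 / x ^ 2)) := by gcongr
    _ = 4809 / x ^ 2 := by ring
    _ ≤ _ := by gcongr; norm_num

lemma GG_lip {x z z' : ℝ} (hx : 10000 ≤ x) (hz : |z| ≤ 100 / x ^ 5) (hz' : |z'| ≤ 100 / x ^ 5) :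
    |GG x z - GG x z'| ≤ 5000 / x ^ 2 * |z - z'| := by
  have := Convex.norm_image_sub_le_of_norm_hasDerivWithin_le (f := GG x) (C := 5000 / x ^ 2)
    (s := Set.Icc (-(100 / x ^ 5)) (100 / x ^ 5))
    (fun y hy => (GG_deriv x y).hasDerivWithinAt)
    (fun y hy => by
      rw [Real.norm_eq_abs]; exact GG_deriv_le hx (abs_le.2 hy))
    (convex_Icc _ _) (abs_le.1 hz') (abs_le.1 hz)
  simpa using this

noncomputable def clp (b z : ℝ) : ℝ := max (-b) (min z b)

lemma clp_abs {b z : ℝ} (hb : 0 ≤ b) : |clp b z| ≤ b := by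
  unfold clp
  rw [abs_le]
  exact ⟨le_max_left _ _, max_le (by linarith) (min_le_right _ _)⟩

lemma clp_eq {b z : ℝ} (h : |z| ≤ b) : clp b z = z := by
  unfold clp
  rw [abs_le] at h
  rw [min_eq_left h.2, max_eq_right h.1]

lemma clp_lip (b z z' : ℝ) : |clp b z - clp b z'| ≤ |z - z'| := by
  unfold clp
  refine (abs_max_sub_max_le_max _ _ _ _).trans ?_
  refine max_le (by simp) ?_
  refine (abs_min_sub_min_le_max _ _ _ _).trans ?_
  simp

noncomputable def gg (σ z : ℝ) : ℝ :=
  GG (max σ 10000) (clp (100 / (max σ 10000) ^ 5) z)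

lemma gg_cont : Continuous (Function.uncurry gg) := by
  have hM : ∀ p : ℝ × ℝ, 10000 ≤ max p.1 10000 := fun p => le_max_right _ _
  have hM0 : ∀ p : ℝ × ℝ, max p.1 10000 ≠ 0 := fun p => by have := hM p; positivity
  have hM3 : ∀ p : ℝ × ℝ, (max p.1 10000) ^ 2 - 3 ≠ 0 := fun p => by have := hM p; nlinarith
  have hM2 : ∀ p : ℝ × ℝ, (max p.1 10000) ^ 2 + 2 ≠ 0 := fun p => by positivity
  unfold Function.uncurry gg GG clp cc ph2 mm
  fun_prop (disch := intro p; simp [hM0 p, hM3 p, hM2 p])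

lemma gg_lip {σ : ℝ} (h : 10000 ≤ σ) (z z' : ℝ) :
    |gg σ z - gg σ z'| ≤ 5000 * |z - z'| * (1 / σ ^ 2) := by
  unfold gg
  rw [max_eq_left h]
  have hb : 0 ≤ 100 / σ ^ 5 := by positivity
  refine (GG_lip h (clp_abs hb) (clp_abs hb)).trans ?_
  calc 5000 / σ ^ 2 * |clp (100 / σ ^ 5) z - clp (100 / σ ^ 5) z'| ≤ 5000 / σ ^ 2 * |z - z'| :=
        mul_le_mul_of_nonneg_left (clp_lip _ _ _) (by positivity)
    _ = _ := by ring

lemma gg_bd {σ : ℝ} (h : 10000 ≤ σ) (z : ℝ) : |gg σ z| ≤ 200 * (1 / σ ^ 6) := by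
  unfold gg
  rw [max_eq_left h]
  have h0 : 0 < σ := by linarith
  have hb : 0 ≤ 100 / σ ^ 5 := by positivity
  set y := clp (100 / σ ^ 5) z
  have hy : |y| ≤ 100 / σ ^ 5 := clp_abs hb
  have h1 := GG_lip (z' := 0) h hy (by simpa using hb)
  have h2 := GG_zero h
  rw [sub_zero] at h1
  have h3 : 5000 / σ ^ 2 * |y| ≤ 100 * (1 / σ ^ 6) := by
    calc 5000 / σ ^ 2 * |y| ≤ 5000 / σ ^ 2 * (100 / σ ^ 5) := by gcongr
      _ = 500000 * (1 / σ ^ 6) * (1 / σ) := by field_simp; norm_num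
      _ ≤ 500000 * (1 / σ ^ 6) * (1 / 10000) := by gcongr
      _ = 50 * (1 / σ ^ 6) := by ring
      _ ≤ _ := by gcongr; norm_num
  have h4 : |GG σ y| ≤ |GG σ y - GG σ 0| + |GG σ 0| := by
    simpa using abs_add_le (GG σ y - GG σ 0) (GG σ 0)
  linarith

lemma inv_ex : ∃ ξ : ℝ → ℝ, ∀ s, 0 < ξ s ∧
    2 * s = ξ s ^ 2 - 3 + 4 * Real.log (ξ s) - 2 * Real.log 2 ∧
    HasDerivAt ξ (ξ s / (ξ s ^ 2 + 2)) s := by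
  let H : ℝ → ℝ := fun y => Real.exp (2 * y) / 2 + 2 * y - 3 / 2 - Real.log 2
  have hd : ∀ y, HasDerivAt H (Real.exp (2 * y) + 2) y := by
    intro y
    have dl : HasDerivAt (fun y : ℝ => 2 * y) 2 y := by simpa using (hasDerivAt_id y).const_mul 2
    refine ((((dl.exp.div_const 2).add dl).sub_const _).sub_const _).congr_deriv ?_
    ring
  have hmono : StrictMono H := strictMono_of_deriv_pos fun y => by
    rw [(hd y).deriv]; positivity
  have hc : Continuous H := continuous_iff_continuousAt.2 fun y => (hd y).continuousAt
  have hsurj : Function.Surjective H := by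
    refine hc.surjective ?_ ?_
    · refine tendsto_atTop_mono (f := fun y : ℝ => 2 * y - (3 / 2 + Real.log 2)) ?_ ?_
      · intro y
        have := Real.exp_pos (2 * y)
        simp only [H]; linarith
      · exact tendsto_atTop_add_const_right _ _ (tendsto_id.const_mul_atTop (by norm_num))
    · refine tendsto_atBot_mono' (f₂ := H) (f₁ := fun y : ℝ => 2 * y + 1) atBot ?_ ?_
      · filter_upwards [eventually_le_atBot 0] with y hy
        have : Real.exp (2 * y) ≤ 1 := Real.exp_le_one_iff.2 (by linarith)
        have := Real.log_nonneg (by norm_num : (1 : ℝ) ≤ 2)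
        simp only [H]; linarith
      · exact tendsto_atBot_add_const_right _ _ (tendsto_id.const_mul_atBot (by norm_num))
  let e := hmono.orderIsoOfSurjective H hsurj
  have he : ∀ s, H (e.symm s) = s := fun s => e.apply_symm_apply s
  have hde : ∀ s, HasDerivAt e.symm (Real.exp (2 * e.symm s) + 2)⁻¹ s := fun s =>
    HasDerivAt.of_local_left_inverse e.symm.continuous.continuousAt (hd (e.symm s))
      (by positivity) (Eventually.of_forall he)
  refine ⟨fun s => Real.exp (e.symm s), fun s => ⟨Real.exp_pos _, ?_, ?_⟩⟩
  · have h := he s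
    simp only [H] at h
    rw [Real.log_exp, ← Real.exp_nat_mul]
    push_cast
    linarith
  · refine (hde s).exp.congr_deriv ?_
    rw [← Real.exp_nat_mul]
    push_cast
    rw [div_eq_mul_inv]

lemma mm_deriv {x : ℝ} (hx : 0 < x) : HasDerivAt mm ((1 - 2 / x ^ 2) / (2 * mm x)) x := by
  have d : HasDerivAt (fun x : ℝ => x + 2 / x) (1 - 2 / x ^ 2) x := by
    refine ((hasDerivAt_id x).add ((hasDerivAt_const x (2 : ℝ)).div (hasDerivAt_id x)
      hx.ne')).congr_deriv ?_
    simp; ring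
  exact d.sqrt (by positivity)

noncomputable def PP (Z Z' : ℝ → ℝ) (x : ℝ) : ℝ :=
  2 * x ^ 2 / ((x ^ 2 + 2) * (x ^ 2 - 3)) + ((1 - 2 / x ^ 2) / (2 * mm x ^ 3) * Z x + Z' x / mm x)

lemma U1_deriv {Z Z' : ℝ → ℝ} {x : ℝ} (hx : 10000 < x) (hZ : HasDerivAt Z (Z' x) x) :
    HasDerivAt (fun x => Real.log (x ^ 2 - 3) + mm x * Z x) (PP Z Z' x * ((x ^ 2 + 2) / x)) x := by
  have h0 : 0 < x := by linarith
  have hq : 0 < x ^ 2 - 3 := by nlinarith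
  have hm := mm_pos h0
  have hs : mm x ^ 2 = (x ^ 2 + 2) / x := by rw [mm_sq h0]; field_simp
  have d1 : HasDerivAt (fun x : ℝ => x ^ 2 - 3) (2 * x) x := by
    simpa using (hasDerivAt_pow 2 x).sub_const 3
  refine ((d1.log hq.ne').add ((mm_deriv h0).mul hZ)).congr_deriv ?_
  rw [← hs]
  unfold PP
  have e : 2 * x / (x ^ 2 - 3) = 2 * x ^ 2 / ((x ^ 2 + 2) * (x ^ 2 - 3)) * mm x ^ 2 := by
    rw [hs]; field_simp
  rw [e]
  field_simp

lemma PP_deriv {Z Z' : ℝ → ℝ} {x z2 : ℝ} (hx : 10000 < x) (hZ : HasDerivAt Z (Z' x) x)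
    (hZ' : HasDerivAt Z' z2 x) :
    HasDerivAt (PP Z Z') ((ph2 x + (z2 + cc x * Z x) / mm x ^ 3) * ((x ^ 2 + 2) / x)) x := by
  have h0 : 0 < x := by linarith
  have hq : 0 < x ^ 2 - 3 := by nlinarith
  have hm := mm_pos h0
  have hs : mm x ^ 2 = (x ^ 2 + 2) / x := by rw [mm_sq h0]; field_simp
  have d2 : HasDerivAt (fun x : ℝ => x ^ 2) (2 * x) x := by
    simpa using (hasDerivAt_pow 2 x)
  have dA := (d2.const_mul 2).div ((d2.add_const 2).mul (d2.sub_const 3))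
    (mul_pos (by positivity) hq).ne'
  have dm := mm_deriv h0
  have dB := (((hasDerivAt_const x (2 : ℝ)).div d2 (by positivity)).const_sub 1).div
    ((dm.pow 3).const_mul 2) (by simp; positivity)
  have dT := dA.add ((dB.mul hZ).add (hZ'.div dm hm.ne'))
  have key : HasDerivAt (PP Z Z') _ x := dT
  refine key.congr_deriv ?_
  simp only [Pi.pow_apply, Pi.mul_apply, Pi.div_apply]
  have e1 : (2 * (2 * x) * ((x ^ 2 + 2) * (x ^ 2 - 3)) - 2 * x ^ 2 * (2 * x * (x ^ 2 - 3) + (x ^ 2 + 2) * (2 * x))) / ((x ^ 2 + 2) * (x ^ 2 - 3)) ^ 2 = ph2 x * ((x ^ 2 + 2) / x) := by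
    unfold ph2
    field_simp
    ring
  have e2 : (z2 + cc x * Z x) / mm x ^ 3 * ((x ^ 2 + 2) / x) = z2 / mm x +
      (2 / (x ^ 3 * mm x ^ 3) - 3 * (1 - 2 / x ^ 2) ^ 2 / (4 * mm x ^ 5)) * Z x := by
    have hcc : cc x = 2 / (x ^ 3 * mm x ^ 2) - 3 * (1 - 2 / x ^ 2) ^ 2 / (4 * (mm x ^ 2) ^ 2) := by
      rw [hs]; unfold cc; field_simp
    rw [← hs, hcc]
    field_simp
  rw [add_mul (ph2 x), e2, ← e1]
  congr 1
  simp only [Nat.cast_ofNat]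
  field_simp
  ring

lemma exists_W : ∃ (s0 : ℝ) (W W1 ξ : ℝ → ℝ), 1 ≤ s0 ∧ ∀ s, s0 < s →
    10000 < ξ s ∧ 2 * s = ξ s ^ 2 - 3 + 4 * Real.log (ξ s) - 2 * Real.log 2 ∧
    HasDerivAt W (W1 s) s ∧ HasDerivAt W1 (-Real.exp (Real.exp (W s) - 2 * s)) s ∧
    |W s - Real.log (ξ s ^ 2 - 3)| ≤ 100 / ξ s ^ 4 := by
  obtain ⟨Z, Z', hZ⟩ := fixpt (x0 := 10000) (A := 200) (K := 5000) (g := gg) (by norm_num)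
    (by norm_num) (by norm_num) (by norm_num) gg_cont (fun σ h z => gg_bd h z)
    (fun σ h z z' => gg_lip h z z')
  obtain ⟨ξ, hξ⟩ := inv_ex
  refine ⟨10000 ^ 2 + 4 * 10000, fun s => Real.log (ξ s ^ 2 - 3) + mm (ξ s) * Z (ξ s),
    fun s => PP Z Z' (ξ s), ξ, by norm_num, fun s hs => ?_⟩
  obtain ⟨hpos, hrel, hder⟩ := hξ s
  have hbig : 10000 < ξ s := by
    by_contra hcon
    push Not at hcon
    have h1 := Real.log_le_sub_one_of_pos hpos
    have h2 := Real.log_nonneg (by norm_num : (1 : ℝ) ≤ 2)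
    have h3 : ξ s ^ 2 ≤ 10000 ^ 2 := by gcongr
    linarith
  obtain ⟨z1, z2, z3⟩ := hZ _ hbig
  set x := ξ s with hx
  have h0 : 0 < x := hpos
  have hm := mm_pos h0
  have hq : 0 < x ^ 2 - 3 := by nlinarith
  have hgg : gg x (Z x) = GG x (Z x) := by
    unfold gg
    rw [max_eq_left hbig.le, clp_eq]
    refine z3.trans ?_
    gcongr; norm_num
  refine ⟨hbig, hrel, ?_, ?_, ?_⟩
  · have := (U1_deriv hbig z1).comp s hder
    refine this.congr_deriv ?_
    change _ = PP Z Z' x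
    field_simp
  · have := (PP_deriv hbig z1 z2).comp s hder
    refine this.congr_deriv ?_
    change _ = -Real.exp (Real.exp (Real.log (x ^ 2 - 3) + mm x * Z x) - 2 * s)
    rw [hgg]
    have e1 : Real.exp (Real.log (x ^ 2 - 3) + mm x * Z x) = (x ^ 2 - 3) * Real.exp (mm x * Z x) := by
      rw [Real.exp_add, Real.exp_log hq]
    have e2 : (x ^ 2 - 3) * Real.exp (mm x * Z x) - 2 * s =
        (x ^ 2 - 3) * (Real.exp (mm x * Z x) - 1) + (Real.log (2 ^ 2) - Real.log (x ^ 4)) := by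
      rw [Real.log_pow, Real.log_pow]; push_cast; linear_combination -hrel
    rw [e1, e2, Real.exp_add, Real.exp_sub, Real.exp_log (by positivity), Real.exp_log (by positivity)]
    unfold GG
    field_simp
    ring
  · rw [add_sub_cancel_left, abs_mul, abs_of_pos hm]
    have := (mm_le hbig.le).2
    calc mm x * |Z x| ≤ x / 2 * (200 / 10 / x ^ 5) := by gcongr
      _ = 10 / x ^ 4 := by field_simp; norm_num
      _ ≤ _ := by gcongr; norm_num

lemma log_close {a b : ℝ} (ha : 0 < a) (hb : 0 < b) : Real.log a - Real.log b ≤ (a - b) / b := by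
  have h := Real.log_le_sub_one_of_pos (div_pos ha hb)
  rw [Real.log_div ha.ne' hb.ne'] at h
  have : (a - b) / b = a / b - 1 := by field_simp
  linarith

lemma asym {q s U : ℝ} (hq : 10000 ^ 2 < q)
    (hs : 2 * s = q - 3 + 2 * Real.log q - 2 * Real.log 2)
    (hU : |U - Real.log (q - 3)| ≤ 100 / q ^ 2) {L : ℝ}
    (hL : L = 2 * s + 2 * Real.log 2 - Real.log (2 * s + 1)) :
    |U - Real.log (L - Real.log L)| ≤ 1000 * Real.log L / L ^ 2 := by
  have hq0 : 0 < q := by linarith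
  set l := Real.log q with hl
  have l4 : 4 ≤ l := by
    rw [hl, Real.le_log_iff_exp_le hq0]
    have : Real.exp 4 = Real.exp 1 ^ 4 := by rw [← Real.exp_nat_mul]; norm_num
    rw [this]
    have h3 : Real.exp 1 < 3 := Real.exp_one_lt_three
    calc Real.exp 1 ^ 4 ≤ 3 ^ 4 := by gcongr
      _ ≤ q := by linarith
  have lq : l ≤ q - 1 := Real.log_le_sub_one_of_pos hq0
  have l2a := Real.log_two_gt_d9
  have l2b := Real.log_two_lt_d9
  set a := 2 * s + 1 with ha
  have ha1 : q ≤ a := by linarith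
  have ha2 : a ≤ q + 2 * l := by linarith
  have ha0 : 0 < a := by linarith
  have la1 : l ≤ Real.log a := Real.log_le_log hq0 ha1
  have la2 : Real.log a - l ≤ 2 * (l / q) := by
    refine (log_close ha0 hq0).trans ?_
    rw [← mul_div_assoc]
    gcongr; linarith
  have lq1 : l / q ≤ 1 := by rw [div_le_one hq0]; linarith
  have lqp : 0 < l / q := by positivity
  have hL1 : q - 3 ≤ L := by linarith
  have hL2 : L ≤ q + l := by linarith
  have hL0 : 0 < L := by linarith
  have lL1 : Real.log L - l ≤ l / q := by
    refine (log_close hL0 hq0).trans ?_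
    gcongr; linarith
  have lL2 : l - Real.log L ≤ l / q := by
    refine (log_close hq0 hL0).trans ?_
    calc (q - L) / L ≤ 3 / L := by gcongr; linarith
      _ ≤ 3 / (q - 3) := by gcongr; linarith
      _ ≤ 4 / q := by rw [div_le_div_iff₀ (by linarith) hq0]; linarith
      _ ≤ l / q := by gcongr
  set Y := L - Real.log L with hY
  have hY1 : Y - (q - 3) ≤ 3 * (l / q) := by linarith
  have hY2 : (q - 3) - Y ≤ 3 * (l / q) := by linarith
  have hYq : q / 2 ≤ Y := by linarith
  have hY0 : 0 < Y := by linarith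
  have hX0 : 0 < q - 3 := by linarith
  have hXq : q / 2 ≤ q - 3 := by linarith
  have hlog : |Real.log (q - 3) - Real.log Y| ≤ 6 * l / q ^ 2 := by
    have e : 3 * (l / q) / (q / 2) = 6 * l / q ^ 2 := by field_simp; norm_num
    rw [← e, abs_le]
    constructor
    · have := log_close hY0 hX0
      have h2 : (Y - (q - 3)) / (q - 3) ≤ 3 * (l / q) / (q / 2) := by gcongr
      linarith
    · have := log_close hX0 hY0
      have h2 : ((q - 3) - Y) / Y ≤ 3 * (l / q) / (q / 2) := by gcongr
      linarith
  have htot : |U - Real.log Y| ≤ 106 * l / q ^ 2 := by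
    have h1 : 100 / q ^ 2 ≤ 100 * l / q ^ 2 := by gcongr; linarith
    have h2 := abs_sub_le U (Real.log (q - 3)) (Real.log Y)
    have h3 : 106 * l / q ^ 2 = 100 * l / q ^ 2 + 6 * l / q ^ 2 := by ring
    linarith
  refine htot.trans ?_
  have hl2 : l / 2 ≤ Real.log L := by linarith
  have hl3 : 0 ≤ 1000 * Real.log L := by linarith
  have hL3 : L ≤ 2 * q := by linarith
  calc 106 * l / q ^ 2 ≤ 125 * l / q ^ 2 := by gcongr; norm_num
    _ = 1000 * (l / 2) / (2 * q) ^ 2 := by field_simp; norm_num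
    _ ≤ 1000 * Real.log L / L ^ 2 := by gcongr

theorem stmt18 :
    ∃ r₀ ∈ Set.Ioo (0 : ℝ) 1, ∃ C > (0 : ℝ), ∃ u : ℝ → ℝ,
      ContDiffOn ℝ 2 u (Set.Ioo 0 r₀) ∧
      (∀ t ∈ Set.Ioo (0 : ℝ) r₀,
        deriv (deriv u) t + deriv u t / t + Real.exp (Real.exp (u t)) = 0) ∧
      Tendsto u (nhdsWithin 0 (Set.Ioi 0)) atTop ∧
      ∀ t ∈ Set.Ioo (0 : ℝ) r₀,
        |u t - Real.log (-Real.log (w18 t) - Real.log (-Real.log (w18 t)))|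
          ≤ C * Real.log (-Real.log (w18 t)) / (-Real.log (w18 t)) ^ 2 := by
  obtain ⟨s0, W, W1, ξ, hs0, hW⟩ := exists_W
  have hst : ∀ t ∈ Set.Ioo (0 : ℝ) (Real.exp (-s0)), s0 < -Real.log t := by
    intro t ht
    have := Real.log_lt_log ht.1 ht.2
    rw [Real.log_exp] at this
    linarith
  have hlog : ∀ t : ℝ, 0 < t → HasDerivAt (fun t => -Real.log t) (-t⁻¹) t := fun t ht =>
    (Real.hasDerivAt_log ht.ne').neg
  set u : ℝ → ℝ := fun t => W (-Real.log t) with hu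
  set u1 : ℝ → ℝ := fun t => W1 (-Real.log t) * (-t⁻¹) with hu1
  have d1 : ∀ t ∈ Set.Ioo (0 : ℝ) (Real.exp (-s0)), HasDerivAt u (u1 t) t := fun t ht =>
    (hW _ (hst t ht)).2.2.1.comp t (hlog t ht.1)
  have d2 : ∀ t ∈ Set.Ioo (0 : ℝ) (Real.exp (-s0)),
      HasDerivAt u1 (-(u1 t / t) - Real.exp (Real.exp (u t))) t := by
    intro t ht
    have h0 := ht.1
    refine (((hW _ (hst t ht)).2.2.2.1.comp t (hlog t h0)).mul
      (hasDerivAt_inv h0.ne').neg).congr_deriv ?_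
    have : Real.exp (Real.exp (W (-Real.log t)) - 2 * (-Real.log t)) =
        Real.exp (Real.exp (u t)) * t ^ 2 := by
      rw [show Real.exp (W (-Real.log t)) - 2 * (-Real.log t) =
        Real.exp (W (-Real.log t)) + (Real.log t + Real.log t) by ring, Real.exp_add, Real.exp_add,
        Real.exp_log h0]
      ring
    rw [this, hu1]
    simp only [Function.comp, Pi.neg_apply]
    field_simp
    ring
  have hopen : IsOpen (Set.Ioo (0 : ℝ) (Real.exp (-s0))) := isOpen_Ioo
  have e1 : ∀ t ∈ Set.Ioo (0 : ℝ) (Real.exp (-s0)), deriv u t = u1 t := fun t ht => (d1 t ht).deriv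
  have e2 : ∀ t ∈ Set.Ioo (0 : ℝ) (Real.exp (-s0)), deriv (deriv u) t = deriv u1 t := by
    intro t ht
    apply Filter.EventuallyEq.deriv_eq
    filter_upwards [hopen.mem_nhds ht] with y hy using e1 y hy
  have c0 : ContinuousOn u (Set.Ioo (0 : ℝ) (Real.exp (-s0))) := fun t ht =>
    (d1 t ht).continuousAt.continuousWithinAt
  have c1 : ContinuousOn u1 (Set.Ioo (0 : ℝ) (Real.exp (-s0))) := fun t ht =>
    (d2 t ht).continuousAt.continuousWithinAt
  refine ⟨Real.exp (-s0), ⟨Real.exp_pos _, by rw [Real.exp_lt_one_iff]; linarith⟩, 1000, by norm_num, u,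
    ?_, ?_, ?_, ?_⟩
  · have hone : ContDiffOn ℝ 1 u1 (Set.Ioo (0 : ℝ) (Real.exp (-s0))) := by
      rw [show (1 : WithTop ℕ∞) = 0 + 1 by norm_num, contDiffOn_succ_iff_deriv_of_isOpen hopen]
      refine ⟨fun t ht => (d2 t ht).differentiableAt.differentiableWithinAt, by simp, ?_⟩
      rw [contDiffOn_zero]
      have : ContinuousOn (fun t => -(u1 t / t) - Real.exp (Real.exp (u t)))
          (Set.Ioo (0 : ℝ) (Real.exp (-s0))) :=
        ((c1.div continuousOn_id (fun t ht => ht.1.ne')).neg).sub c0.rexp.rexp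
      exact this.congr fun t ht => (d2 t ht).deriv
    rw [show (2 : WithTop ℕ∞) = 1 + 1 by norm_num, contDiffOn_succ_iff_deriv_of_isOpen hopen]
    refine ⟨fun t ht => (d1 t ht).differentiableAt.differentiableWithinAt, by simp, ?_⟩
    exact hone.congr e1
  · intro t ht
    rw [e2 t ht, (d2 t ht).deriv, e1 t ht]
    ring
  · have hlim : Tendsto (fun t : ℝ => -Real.log t) (nhdsWithin 0 (Set.Ioi 0)) atTop :=
      tendsto_neg_atBot_atTop.comp Real.tendsto_log_nhdsGT_zero
    refine Tendsto.comp (g := W) ?_ hlim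
    have hl : Tendsto (fun s : ℝ => Real.log ((2 / 3) * s + (- 4 / 3)) + (-1)) atTop atTop := by
      refine tendsto_atTop_add_const_right _ _ (Real.tendsto_log_atTop.comp ?_)
      exact tendsto_atTop_add_const_right _ _ (tendsto_id.const_mul_atTop (by norm_num))
    refine tendsto_atTop_mono' _ ?_ hl
    filter_upwards [eventually_gt_atTop s0, eventually_gt_atTop 10] with s hs hs10
    obtain ⟨h1, h2, -, -, h3⟩ := hW s hs
    have hx0 : 0 < ξ s := by linarith
    have l2a := Real.log_two_gt_d9
    have h4 : 100 / ξ s ^ 4 ≤ 1 := by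
      rw [div_le_one (by positivity)]
      calc (100 : ℝ) ≤ 10000 ^ 4 := by norm_num
        _ ≤ ξ s ^ 4 := by gcongr
    have h5 : 4 * Real.log (ξ s) = 2 * Real.log (ξ s ^ 2) := by rw [Real.log_pow]; push_cast; ring
    have h6 := Real.log_le_sub_one_of_pos (show 0 < ξ s ^ 2 by positivity)
    have h7 : Real.log ((2 / 3) * s + (- 4 / 3)) ≤ Real.log (ξ s ^ 2 - 3) :=
      Real.log_le_log (by linarith) (by linarith)
    have h8 := (abs_le.1 h3).1
    linarith
  · intro t ht
    obtain ⟨h1, h2, -, -, h3⟩ := hW _ (hst t ht)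
    have h0 := ht.1
    have hsp := hst t ht
    have h5 : 4 * Real.log (ξ (-Real.log t)) = 2 * Real.log (ξ (-Real.log t) ^ 2) := by
      rw [Real.log_pow]; push_cast; ring
    refine asym (q := ξ (-Real.log t) ^ 2) (s := -Real.log t) ?_ (by rw [← h5]; exact h2) ?_ ?_
    · gcongr
    · rw [← pow_mul]; exact h3
    · unfold w18
      have hp : 0 < -2 * Real.log t + 1 := by linarith
      rw [Real.log_mul (by positivity) hp.ne', Real.log_mul (by norm_num) (by positivity),
        Real.log_pow, show (1 / 4 : ℝ) = (2 ^ 2)⁻¹ by norm_num, Real.log_inv, Real.log_pow,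
        show 2 * -Real.log t + 1 = -2 * Real.log t + 1 by ring]
      push_cast
      ring
end
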